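/- Suppose R := liminf_{i→∞} a_i satisfies 4 ≤ R < ∞, and suppose γ ∈ [0,1), γ ∉ ℤ + αℤ, satisfies M(α,γ) > M(α,γ_*) − R_*^{−3}. Let (c_i) be the coefficients of the alpha-expansion of γ (c_{i+1} := ⌊γ_i/α_i⌋ with γ_0 := γ, γ_{i+1} := {γ_i/α_i}) and t_i := 2c_i − (a_i − 1 + ε_i). Then |t_i| < 3a_i/R for all but finitely many i. In particular, for all but finitely many indices k with a_k = R: t_k ∈ {−1, +1} if R is odd, and t_k ∈ {−2, 0, +2} if R is even. -/

import Mathlib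

open Filter Finset

attribute [local instance] Classical.propDecidable

/-- Distance from `x` to the nearest integer, `‖x‖`. -/
noncomputable def nint (x : ℝ) : ℝ := |x - round x|

/-- The two-sided inhomogeneous approximation constant
`M(α,γ) = liminf_{|n|→∞} |n|·‖nα-γ‖`. -/
noncomputable def Mval (α γ : ℝ) : ℝ :=
  Filter.liminf (fun n : ℤ => (|n| : ℝ) * nint (n * α - γ)) Filter.cofinite

/-- `ρ(α) = sup { M(α,γ) : γ ∉ ℤ + αℤ }`. -/
noncomputable def rho (α : ℝ) : ℝ :=
  sSup {m : ℝ | ∃ γ : ℝ, (¬∃ p q : ℤ, γ = (p : ℝ) + (q : ℝ) * α) ∧ m = Mval α γ}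

/-- The tails `α_i` of the nearest integer continued fraction expansion of `α`. -/
noncomputable def nicfT (α : ℝ) : ℕ → ℝ
  | 0 => α
  | i + 1 =>
    if Int.fract (nicfT α i)⁻¹ ≤ 1 / 2 then Int.fract (nicfT α i)⁻¹
    else 1 - Int.fract (nicfT α i)⁻¹

/-- The partial quotients `a_i` (meaningful for `i ≥ 1`) of the NICF expansion. -/
noncomputable def nicfA (α : ℝ) : ℕ → ℤ
  | 0 => 0
  | i + 1 => if Int.fract (nicfT α i)⁻¹ ≤ 1 / 2 then ⌊(nicfT α i)⁻¹⌋ else ⌈(nicfT α i)⁻¹⌉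

/-- The signs `ε_i` of the NICF expansion (`ε_1 = 1`). -/
noncomputable def nicfE (α : ℝ) : ℕ → ℤ
  | 0 => 1
  | 1 => 1
  | i + 2 => if Int.fract (nicfT α i)⁻¹ ≤ 1 / 2 then 1 else -1

/-- `nicfD α n = D_{n-1} = α_0 α_1 ⋯ α_{n-1}` (so `nicfD α 0 = 1`, `nicfD α 1 = α`). -/
noncomputable def nicfD (α : ℝ) (n : ℕ) : ℝ := ∏ j ∈ Finset.range n, nicfT α j

/-- The number of indices `1 ≤ k ≤ i` with `a_k` odd. -/
noncomputable def oddIdx (α : ℝ) (i : ℕ) : ℕ :=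
  ((Finset.Icc 1 i).filter fun k => Odd (nicfA α k)).card

/-- `λ_i`: zero if `a_i` is even, `(-1)^j` if `a_i = a_{n_j}` is the `j`-th odd partial
quotient. -/
noncomputable def lamStar (α : ℝ) (i : ℕ) : ℤ :=
  if Odd (nicfA α i) then (-1) ^ oddIdx α i else 0

/-- `γ_* = Σ_{i≥1} (a_i - 1 + ε_i + λ_i)/2 · D_{i-1}`. -/
noncomputable def gammaStar (α : ℝ) : ℝ :=
  ∑' k : ℕ,
    (((nicfA α (k + 1) : ℝ) - 1 + (nicfE α (k + 1) : ℝ) + (lamStar α (k + 1) : ℝ)) / 2) *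
      nicfD α (k + 1)

/-- `λ'_i`: zero if `a_i` is even, one if `a_i` is odd. -/
noncomputable def lamStar2 (α : ℝ) (i : ℕ) : ℤ := if Odd (nicfA α i) then 1 else 0

/-- `γ_** = Σ_{i≥1} (a_i + λ'_i)/2 · D_{i-1}`. -/
noncomputable def gammaStar2 (α : ℝ) : ℝ :=
  ∑' k : ℕ, (((nicfA α (k + 1) : ℝ) + (lamStar2 α (k + 1) : ℝ)) / 2) * nicfD α (k + 1)

/-- The denominators `q_i`: `q_0 = 1`, `q_1 = a_1`, `q_i = a_i q_{i-1} + ε_i q_{i-2}`. -/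
noncomputable def qseq (α : ℝ) : ℕ → ℤ
  | 0 => 1
  | 1 => nicfA α 1
  | i + 2 => nicfA α (i + 2) * qseq α (i + 1) + nicfE α (i + 2) * qseq α i

/-- `ᾱ_i = q_{i-1}/q_i` (with `ᾱ_0 = 0`). -/
noncomputable def abar (α : ℝ) (i : ℕ) : ℝ :=
  if i = 0 then 0 else (qseq α (i - 1) : ℝ) / (qseq α i : ℝ)

/-- `δ_i = -(-ε_1)(-ε_2)⋯(-ε_{i+1})`. -/
noncomputable def deltaSeq (α : ℝ) (i : ℕ) : ℤ := -∏ j ∈ Finset.Icc 1 (i + 1), (-nicfE α j)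

/-- `d_n^- = (Σ_{i=1}^n t_i δ_{i-1} q_{i-1}) / (δ_{n-1} q_n)` for `γ_*` (so `t_i = λ_i`). -/
noncomputable def dminus (α : ℝ) (n : ℕ) : ℝ :=
  (∑ i ∈ Finset.Icc 1 n, (lamStar α i : ℝ) * (deltaSeq α (i - 1) : ℝ) * (qseq α (i - 1) : ℝ)) /
    ((deltaSeq α (n - 1) : ℝ) * (qseq α n : ℝ))

/-- `d_n^+ = (Σ_{i=n+1}^∞ t_i D_{i-1}) / D_{n-1}` for `γ_*` (so `t_i = λ_i`). -/
noncomputable def dplus (α : ℝ) (n : ℕ) : ℝ :=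
  (∑' k : ℕ, (lamStar α (n + 1 + k) : ℝ) * nicfD α (n + 1 + k)) / nicfD α n

/-- `d_n^-` for `γ_**` (so `t_i = λ'_i`). -/
noncomputable def dminus2 (α : ℝ) (n : ℕ) : ℝ :=
  (∑ i ∈ Finset.Icc 1 n, (lamStar2 α i : ℝ) * (deltaSeq α (i - 1) : ℝ) * (qseq α (i - 1) : ℝ)) /
    ((deltaSeq α (n - 1) : ℝ) * (qseq α n : ℝ))

/-- `d_n^+` for `γ_**` (so `t_i = λ'_i`). -/
noncomputable def dplus2 (α : ℝ) (n : ℕ) : ℝ :=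
  (∑' k : ℕ, (lamStar2 α (n + 1 + k) : ℝ) * nicfD α (n + 1 + k)) / nicfD α n

/-- `i ∈ S(γ_*)`: `|d_i^-| ≤ 1 - ᾱ_i` and `-(1-ε_{i+1}α_i) ≤ d_i^+ ≤ 1+ε_{i+1}α_i`. -/
def inS (α : ℝ) (i : ℕ) : Prop :=
  |dminus α i| ≤ 1 - abar α i ∧
    -(1 - (nicfE α (i + 1) : ℝ) * nicfT α i) ≤ dplus α i ∧
      dplus α i ≤ 1 + (nicfE α (i + 1) : ℝ) * nicfT α i

/-- `i ∈ S(γ_**)`. -/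
def inS2 (α : ℝ) (i : ℕ) : Prop :=
  |dminus2 α i| ≤ 1 - abar α i ∧
    -(1 - (nicfE α (i + 1) : ℝ) * nicfT α i) ≤ dplus2 α i ∧
      dplus2 α i ≤ 1 + (nicfE α (i + 1) : ℝ) * nicfT α i

/-- The remainders `γ_i` of the alpha-expansion of `γ`: `γ_0 = γ`,
`γ_{i+1} = {γ_i/α_i}`. -/
noncomputable def gSeq (α γ : ℝ) : ℕ → ℝ
  | 0 => γ
  | i + 1 => Int.fract (gSeq α γ i / nicfT α i)

/-- The coefficients `c_i` (for `i ≥ 1`) of the alpha-expansion of `γ`: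
`c_{i+1} = ⌊γ_i/α_i⌋`. -/
noncomputable def cCoef (α γ : ℝ) (i : ℕ) : ℤ := ⌊gSeq α γ (i - 1) / nicfT α (i - 1)⌋

/-- Abstract data of a semi-regular continued fraction. -/
structure CF where
  T : ℕ → ℝ
  a : ℕ → ℤ
  e : ℕ → ℤ
  T_pos : ∀ k, 0 < T k
  T_lt : ∀ k, T k < 1 / 2
  T_rec : ∀ k, T k * (a (k + 1) + e (k + 2) * T (k + 1)) = 1
  e_or : ∀ k, e k = 1 ∨ e k = -1
  e_one : e 1 = 1
  a_ge : ∀ k, 2 ≤ a (k + 1)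

namespace CF

variable (c : CF)

/-- `x_k = q_{k-1}/q_k`. -/
noncomputable def x : ℕ → ℝ
  | 0 => 0
  | k + 1 => 1 / (c.a (k + 1) + c.e (k + 1) * x k)

/-- The denominators. -/
noncomputable def q : ℕ → ℝ
  | 0 => 1
  | k + 1 => q k * (c.a (k + 1) + c.e (k + 1) * c.x k)

/-- The products `D`. -/
noncomputable def D : ℕ → ℝ
  | 0 => 1
  | k + 1 => D k * c.T k

lemma eR (k : ℕ) : (c.e k : ℝ) = 1 ∨ (c.e k : ℝ) = -1 := by
  rcases c.e_or k with h | h <;> simp [h]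

lemma aR (k : ℕ) : (2 : ℝ) ≤ c.a (k + 1) := by exact_mod_cast c.a_ge k

lemma x_bd (k : ℕ) : 0 ≤ c.x k ∧ c.x k ≤ 1 := by
  induction k with
  | zero => simp [x]
  | succ k ih =>
    have h := c.aR k
    have h1 : (1 : ℝ) ≤ c.a (k + 1) + c.e (k + 1) * c.x k := by
      rcases c.eR (k + 1) with h2 | h2 <;> rw [h2] <;> linarith
    simp only [x]
    constructor
    · positivity
    · rw [div_le_one (by linarith)]; exact h1

lemma den_ge (k : ℕ) : (1 : ℝ) ≤ c.a (k + 1) + c.e (k + 1) * c.x k := by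
  have h := c.aR k
  have h3 := c.x_bd k
  rcases c.eR (k + 1) with h2 | h2 <;> rw [h2] <;> linarith

lemma x_succ (k : ℕ) : c.x (k + 1) * (c.a (k + 1) + c.e (k + 1) * c.x k) = 1 := by
  have := c.den_ge k
  simp only [x]
  field_simp

lemma x_pos (k : ℕ) : 0 < c.x (k + 1) := by
  have := c.den_ge k
  simp only [x]
  positivity

lemma q_succ (k : ℕ) : c.q (k + 1) = c.q k * (c.a (k + 1) + c.e (k + 1) * c.x k) := rfl

lemma q_pos (k : ℕ) : 1 ≤ c.q k := by
  induction k with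
  | zero => simp [q]
  | succ k ih =>
    rw [q_succ]
    nlinarith [c.den_ge k]

lemma qx (k : ℕ) : c.q (k + 1) * c.x (k + 1) = c.q k := by
  rw [q_succ, mul_assoc, mul_comm (_ + _), x_succ, mul_one]

lemma D_succ (k : ℕ) : c.D (k + 1) = c.D k * c.T k := rfl

lemma D_pos (k : ℕ) : 0 < c.D k := by
  induction k with
  | zero => simp [D]
  | succ k ih => rw [D_succ]; exact mul_pos ih (c.T_pos k)

lemma D_le (k : ℕ) : c.D k ≤ (1 / 2) ^ k := by
  induction k with
  | zero => simp [D]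
  | succ k ih =>
    rw [D_succ, pow_succ]
    exact mul_le_mul ih (c.T_lt k).le (c.T_pos k).le (by positivity)

lemma D_rec (k : ℕ) : c.D k = c.D (k + 1) * (c.a (k + 1) + c.e (k + 2) * c.T (k + 1)) := by
  rw [D_succ, mul_assoc, c.T_rec, mul_one]

/-- `S_{k+1} = a + ηz + εx`. -/
noncomputable def S (k : ℕ) : ℝ :=
  c.a (k + 1) + c.e (k + 2) * c.T (k + 1) + c.e (k + 1) * c.x k

lemma e_sq (k : ℕ) : (c.e k : ℝ) * c.e k = 1 := by
  rcases c.eR k with h | h <;> rw [h] <;> norm_num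

lemma qDS (k : ℕ) : c.q k * c.D (k + 1) * c.S k = 1 := by
  induction k with
  | zero =>
    have := c.D_rec 0
    simp only [S, q, x, D] at *
    simp
    linarith
  | succ k ih =>
    have h1 := c.D_rec (k + 1)
    have h3 := c.qx k
    have h2 := c.q_succ k
    simp only [S] at *
    have h4 : c.q (k + 1) * c.D (k + 1 + 1) * (c.a (k + 1 + 1) + c.e (k + 1 + 2) * c.T (k + 1 + 1)
      + c.e (k + 1 + 1) * c.x (k + 1)) =
      c.q (k + 1) * c.D (k + 1) + c.e (k + 2) * c.q k * c.D (k + 2) := by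
        rw [h1, ← h3]; ring
    rw [h4, h2, c.D_succ (k + 1), ← ih]
    ring

/-- representation data `(t, v)` of `γ`. -/
structure Rep (γ : ℝ) (t : ℕ → ℤ) (v : ℕ → ℝ) : Prop where
  par : ∀ k, Even (t (k + 1) - c.a (k + 1))
  vrec : ∀ k, v k = c.T k * (t (k + 1) + v (k + 1))
  base : 2 * γ = 1 + c.T 0 + v 0

/-- the pair `(I_k, J_k)`. -/
def IJ (t : ℕ → ℤ) (N p : ℤ) : ℕ → ℤ × ℤ
  | 0 => (-2 * p - 1, 1 - 2 * N)
  | k + 1 => (c.a (k + 1) * (IJ t N p k).1 - c.e (k + 1) * (IJ t N p k).2 - t (k + 1),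
      -(IJ t N p k).1)

lemma e_odd (k : ℕ) : Odd (c.e k) := by
  rcases c.e_or k with h | h <;> rw [h] <;> decide

lemma IJ_odd {γ : ℝ} {t : ℕ → ℤ} {v : ℕ → ℝ} (h : c.Rep γ t v) (N p : ℤ) (k : ℕ) :
    Odd (c.IJ t N p k).1 ∧ Odd (c.IJ t N p k).2 := by
  induction k with
  | zero => exact ⟨⟨-p - 1, by simp [IJ]; ring⟩, ⟨-N, by simp [IJ]; ring⟩⟩
  | succ k ih =>
    refine ⟨?_, ih.1.neg⟩
    simp only [IJ]
    obtain ⟨i, hi⟩ := ih.1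
    obtain ⟨j, hj⟩ := ih.2
    obtain ⟨e, he⟩ := c.e_odd (k + 1)
    obtain ⟨m, hm⟩ := h.par k
    rw [hi, hj, he, show t (k + 1) = m + m + c.a (k + 1) by linarith]
    exact ⟨c.a (k + 1) * i - (2 * e * j + e + j) - m - 1, by ring⟩

lemma IJ_surj {γ : ℝ} {t : ℕ → ℤ} {v : ℕ → ℝ} (h : c.Rep γ t v) (k : ℕ) :
    ∀ I J : ℤ, Odd I → Odd J → ∃ N p : ℤ, c.IJ t N p k = (I, J) := by
  induction k with
  | zero =>
    rintro I J ⟨i, hi⟩ ⟨j, hj⟩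
    exact ⟨-j, -i - 1, by simp [IJ, hi, hj]; constructor <;> ring⟩
  | succ k ih =>
    intro I J hI hJ
    obtain ⟨N, p, h1⟩ := ih (-J) (c.e (k + 1) * (c.a (k + 1) * (-J) - t (k + 1) - I)) hJ.neg
      (by
        refine (c.e_odd (k + 1)).mul ?_
        obtain ⟨i, hi⟩ := hI
        obtain ⟨j, hj⟩ := hJ
        obtain ⟨m, hm⟩ := h.par k
        rw [hi, hj, show t (k + 1) = m + m + c.a (k + 1) by linarith]
        exact ⟨-c.a (k + 1) * (j + 1) - m - i - 1, by ring⟩)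
    refine ⟨N, p, ?_⟩
    have : c.e (k + 1) * c.e (k + 1) = 1 := by
      rcases c.e_or (k + 1) with h | h <;> rw [h] <;> norm_num
    simp only [IJ, h1, ← mul_assoc, this]
    ext <;> simp <;> ring

lemma rep_Y {γ : ℝ} {t : ℕ → ℤ} {v : ℕ → ℝ} (h : c.Rep γ t v) (N p : ℤ) (k : ℕ) :
    2 * (N * c.T 0 - p - γ) = c.D k * ((c.IJ t N p k).1
      - (c.IJ t N p k).2 * c.e (k + 1) * c.T k - v k) := by
  induction k with
  | zero =>
    have := h.base
    simp only [IJ, D, c.e_one]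
    push_cast
    linarith
  | succ k ih =>
    rw [ih, c.D_rec k, h.vrec k]
    simp only [IJ]
    push_cast
    have h1 := c.T_rec k
    rw [D_succ]
    have h2 : c.T k ≠ 0 := (c.T_pos k).ne'
    have h4 : (c.a (k + 1) : ℝ) = 1 / c.T k - c.e (k + 2) * c.T (k + 1) := by
      field_simp; linarith
    rw [h4]
    field_simp
    ring

lemma rep_X {t : ℕ → ℤ} {u : ℕ → ℝ} {k0 : ℕ}
    (hu : ∀ k, k0 ≤ k → u (k + 1) = c.x (k + 1) * (t (k + 1) - c.e (k + 1) * u k)) :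
    ∃ κ : ℝ, ∀ N p : ℤ, ∀ k, k0 ≤ k →
      |2 * N - κ| = c.q k * |(c.IJ t N p k).2 + c.x k * (c.IJ t N p k).1 + u k| := by
  -- step one: sign sequence
  have key : ∃ (δ W : ℕ → ℝ), (∀ k, |δ k| = 1) ∧ ∀ N p : ℤ, ∀ k,
      2 * N - 1 = δ k * (c.q k * ((c.IJ t N p k).2 + c.x k * (c.IJ t N p k).1) + W k) ∧
      (W (k + 1) = t (k + 1) * c.q k - c.e (k + 1) * W k) ∧ δ (k + 1) = - c.e (k + 1) * δ k := by
    let δ : ℕ → ℝ := fun k => Nat.rec (-1) (fun k d => - c.e (k + 1) * d) k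
    let W : ℕ → ℝ := fun k => Nat.rec 0 (fun k w => t (k + 1) * c.q k - c.e (k + 1) * w) k
    have hδ : ∀ k, δ (k + 1) = - c.e (k + 1) * δ k := fun k => rfl
    have hW : ∀ k, W (k + 1) = t (k + 1) * c.q k - c.e (k + 1) * W k := fun k => rfl
    refine ⟨δ, W, ?_, ?_⟩
    · intro k
      induction k with
      | zero => simp [δ]
      | succ k ih =>
        rw [hδ, abs_mul, ih]
        rcases c.eR (k + 1) with h | h <;> rw [h] <;> norm_num
    · intro N p k
      refine ⟨?_, hW k, hδ k⟩
      induction k with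
      | zero => simp [δ, W, IJ, q, x]
      | succ k ih =>
        rw [ih, hδ, hW, mul_add (c.q (k + 1)), ← mul_assoc, qx, q_succ]
        simp only [IJ]
        push_cast
        have := c.e_sq (k + 1)
        linear_combination (-δ k * c.q k * (c.IJ t N p k).2 - δ k * c.q k * c.x k * (c.IJ t N p k).1
          - δ k * W k) * this
  obtain ⟨δ, W, hδ, hk⟩ := key
  -- the difference is constant
  have hc : ∀ k, k0 ≤ k → δ k * (W k - c.q k * u k) = δ k0 * (W k0 - c.q k0 * u k0) := by
    intro k hk0
    induction k, hk0 using Nat.le_induction with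
    | base => rfl
    | succ k hk0 ih =>
      rw [← ih, hu k hk0, ← mul_assoc, qx, (hk 0 0 k).2.1, (hk 0 0 k).2.2]
      have := c.e_sq (k + 1)
      linear_combination (δ k * W k - δ k * c.q k * u k) * this
  refine ⟨1 + δ k0 * (W k0 - c.q k0 * u k0), fun N p k hk0 => ?_⟩
  have h1 := (hk N p k).1
  have h2 := hc k hk0
  have : 2 * (N : ℝ) - (1 + δ k0 * (W k0 - c.q k0 * u k0)) = δ k * (c.q k *
      ((c.IJ t N p k).2 + c.x k * (c.IJ t N p k).1 + u k)) := by
    rw [← h2]; linear_combination h1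
  rw [this, abs_mul, hδ, one_mul, abs_mul, abs_of_pos (by linarith [c.q_pos k])]

/-- the product of the two linear forms in the `k+1`-st coordinates -/
lemma rep_prod {γ : ℝ} {t : ℕ → ℤ} {v : ℕ → ℝ} (h : c.Rep γ t v) {u : ℕ → ℝ} {k0 : ℕ}
    (hu : ∀ k, k0 ≤ k → u (k + 1) = c.x (k + 1) * (t (k + 1) - c.e (k + 1) * u k)) :
    ∃ κ : ℝ, ∀ N p : ℤ, ∀ k, k0 ≤ k → ∀ I J : ℤ, c.IJ t N p (k + 1) = (I, J) →
      |2 * N - κ| = c.q k * |J * (c.a (k + 1) + c.e (k + 1) * c.x k) + I +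
        t (k + 1) - c.e (k + 1) * u k| ∧
      2 * (N * c.T 0 - p - γ) = c.D (k + 1) * (I - J * c.e (k + 2) * c.T (k + 1) - v (k + 1)) ∧
      |2 * N - κ| * |2 * (N * c.T 0 - p - γ)| * c.S k =
        |(J * (c.a (k + 1) + c.e (k + 1) * c.x k) + I + t (k + 1) - c.e (k + 1) * u k) *
          (I - J * c.e (k + 2) * c.T (k + 1) - v (k + 1))| := by
  obtain ⟨κ, hκ⟩ := c.rep_X hu
  refine ⟨κ, fun N p k hk I J hIJ => ?_⟩
  have h1 := hκ N p (k + 1) (by omega)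
  have h2 := c.rep_Y h N p (k + 1)
  rw [hIJ] at h1 h2
  simp only at h1 h2
  have h3 : c.q (k + 1) * |J + c.x (k + 1) * I + u (k + 1)| =
      c.q k * |J * (c.a (k + 1) + c.e (k + 1) * c.x k) + I + t (k + 1) - c.e (k + 1) * u k| := by
    have e1 : |c.q (k + 1)| = c.q (k + 1) := abs_of_pos (by linarith [c.q_pos (k + 1)])
    have e2 : |c.q k| = c.q k := abs_of_pos (by linarith [c.q_pos k])
    rw [← e1, ← e2, ← abs_mul, ← abs_mul, hu k hk]
    congr 1
    have := c.qx k
    have h4 := c.q_succ k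
    linear_combination (I + t (k + 1) - c.e (k + 1) * u k) * this + J * h4
  rw [h3] at h1
  refine ⟨h1, h2, ?_⟩
  rw [h1, h2, abs_mul, abs_mul, abs_of_pos (c.D_pos (k + 1))]
  have := c.qDS k
  generalize |(J : ℝ) * (c.a (k + 1) + c.e (k + 1) * c.x k) + I +
        t (k + 1) - c.e (k + 1) * u k| = A
  linear_combination (A * |I - J * c.e (k + 2) * c.T (k + 1) - v (k + 1)|) * this

end CF

lemma nint_le (y : ℝ) (p : ℤ) : nint y ≤ |y - p| := round_le y p

lemma nint_nonneg (y : ℝ) : 0 ≤ nint y := abs_nonneg _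

lemma nint_le_half (y : ℝ) : nint y ≤ 1 / 2 := abs_sub_round y

lemma Mf_bdd (α γ : ℝ) : IsBoundedUnder (· ≥ ·) cofinite
    (fun n : ℤ => (|n| : ℝ) * nint (n * α - γ)) :=
  isBoundedUnder_of ⟨0, fun _ => mul_nonneg (abs_nonneg _) (nint_nonneg _)⟩

lemma M_up {α γ m : ℝ} (κ : ℝ) (hγ : ¬∃ p q : ℤ, γ = (p : ℝ) + (q : ℝ) * α)
    (h : m < Mval α γ) : ∃ ρ > 0, ∀ N p : ℤ, |2 * (N * α - p - γ)| < ρ →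
      4 * m ≤ |2 * N - κ| * |2 * (N * α - p - γ)| := by
  obtain ⟨m', hm1, hm2⟩ := exists_between h
  have h1 := eventually_lt_of_lt_liminf hm2 (Mf_bdd α γ)
  rw [eventually_cofinite] at h1
  -- lower bound of the distance on the exceptional set
  obtain ⟨ρ1, hρ1, hρ1'⟩ : ∃ ρ1 > 0, ∀ n : ℤ, ¬ (m' < (|n| : ℝ) * nint (n * α - γ)) →
      ρ1 ≤ nint (n * α - γ) := by
    have hpos : ∀ n : ℤ, 0 < nint (n * α - γ) := by
      intro n
      rcases (nint_nonneg (n * α - γ)).lt_or_eq with h | h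
      · exact h
      · exfalso
        have h2 : (n * α - γ) - round (n * α - γ) = 0 := abs_eq_zero.mp h.symm
        exact hγ ⟨-round (n * α - γ), n, by push_cast; linarith⟩
    rcases h1.toFinset.eq_empty_or_nonempty with he | hne
    · refine ⟨1, one_pos, fun n hn => ?_⟩
      have : n ∈ h1.toFinset := by simpa using hn
      rw [he] at this; simp at this
    · obtain ⟨n0, _, hn0⟩ := h1.toFinset.exists_min_image (fun n : ℤ => nint (n * α - γ)) hne
      exact ⟨_, hpos n0, fun n hn => hn0 n (by simpa using hn)⟩
  refine ⟨min ρ1 (4 * (m' - m) / (|κ| + 1)), lt_min hρ1 (by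
    have : 0 < m' - m := by linarith
    positivity), fun N p hr => ?_⟩
  have hr1 := lt_of_lt_of_le hr (min_le_left _ _)
  have hr2 := lt_of_lt_of_le hr (min_le_right _ _)
  have hk : 0 < |κ| + 1 := by positivity
  rw [lt_div_iff₀ hk] at hr2
  have hle := nint_le (N * α - γ) p
  have e1 : |2 * ((N : ℝ) * α - p - γ)| = 2 * |N * α - γ - p| := by
    rw [abs_mul]; norm_num; congr 1; ring
  rw [e1] at hr1 hr2 ⊢
  have hN : m' < (|N| : ℝ) * nint (N * α - γ) := by
    by_contra hc
    have := hρ1' N hc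
    have := abs_nonneg ((N : ℝ) * α - γ - p)
    linarith
  have h3 : m' < (|N| : ℝ) * |N * α - γ - p| :=
    lt_of_lt_of_le hN (mul_le_mul_of_nonneg_left hle (abs_nonneg _))
  have h4 : 2 * |(N : ℝ)| - |κ| ≤ |2 * N - κ| := by
    have := abs_sub_abs_le_abs_sub (2 * (N : ℝ)) κ
    rw [abs_mul] at this; norm_num at this; linarith
  have h5 := abs_nonneg ((N : ℝ) * α - γ - p)
  have h6 := mul_le_mul_of_nonneg_right h4 h5
  nlinarith

lemma M_low {α γ m ρ κ : ℝ} (hρ : 0 < ρ)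
    (hpts : ∀ N p : ℤ, |2 * (N * α - p - γ)| < ρ →
      4 * m ≤ |2 * N - κ| * |2 * (N * α - p - γ)|)
    (hcob : ∃ C : ℝ, ∀ B : ℝ, ∃ N p : ℤ, B ≤ |2 * N - κ| ∧
      |2 * N - κ| * |2 * (N * α - p - γ)| ≤ C) : m ≤ Mval α γ := by
  have e1 : ∀ N p : ℤ, |2 * ((N : ℝ) * α - p - γ)| = 2 * |N * α - γ - p| := by
    intro N p
    rw [abs_mul]; norm_num; congr 1; ring
  have hcb : IsCoboundedUnder (· ≥ ·) cofinite
    (fun n : ℤ => (|n| : ℝ) * nint (n * α - γ)) := by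
    obtain ⟨C, hC⟩ := hcob
    refine IsCoboundedUnder.of_frequently_le (a := |C| + |κ| * |C|) ?_
    rw [Filter.frequently_cofinite_iff_infinite]
    intro hfin
    obtain ⟨B, hB⟩ := (hfin.image (fun n : ℤ => |2 * (n : ℝ) - κ|)).bddAbove
    obtain ⟨N, p, h1, h2⟩ := hC (max 1 (B + 1))
    have h3 : (1 : ℝ) ≤ |2 * (N : ℝ) - κ| := le_trans (le_max_left _ _) h1
    have h4 : B + 1 ≤ |2 * (N : ℝ) - κ| := le_trans (le_max_right _ _) h1
    have hmem : N ∈ {n : ℤ | (|n| : ℝ) * nint (n * α - γ) ≤ |C| + |κ| * |C|} := by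
      simp only [Set.mem_ofPred_eq]
      rw [e1] at h2
      have h5 := nint_le (N * α - γ) p
      set r := |(N : ℝ) * α - γ - p|
      have hr : 0 ≤ r := abs_nonneg _
      have h6 : 2 * |(N : ℝ)| ≤ |2 * N - κ| + |κ| := by
        have := abs_add_le (2 * (N : ℝ) - κ) κ
        rw [sub_add_cancel, abs_mul] at this; norm_num at this; linarith
      have h7 : |(N : ℝ)| * nint (N * α - γ) ≤ |(N : ℝ)| * r :=
        mul_le_mul_of_nonneg_left h5 (abs_nonneg _)
      have hC' := le_abs_self C
      have h8 : r ≤ |C| := by nlinarith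
      have h9 := mul_le_mul_of_nonneg_right h6 hr
      have h10 := mul_le_mul_of_nonneg_left h8 (abs_nonneg κ)
      have := mul_nonneg (abs_nonneg κ) (abs_nonneg C)
      nlinarith [abs_nonneg C]
    have := hB (Set.mem_image_of_mem _ hmem)
    linarith
  refine le_of_forall_lt fun m' hm' => ?_
  obtain ⟨m1, hm1, hm2⟩ := exists_between hm'
  refine lt_of_lt_of_le hm1 (le_liminf_of_le hcb ?_)
  set ρ' := min ρ (4 * (m - m1) / (|κ| + 1))
  have hρ' : 0 < ρ' := lt_min hρ (by
    have : 0 < m - m1 := by linarith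
    positivity)
  -- large n
  have hlarge : ∀ᶠ n : ℤ in cofinite, 2 * |m1| / ρ' ≤ |(n : ℝ)| := by
    rw [eventually_cofinite]
    refine Set.Finite.subset (Set.finite_Icc (-⌈2 * |m1| / ρ'⌉) (⌈2 * |m1| / ρ'⌉)) ?_
    intro n hn
    simp only [Set.mem_ofPred_eq, not_le] at hn
    have h1 := lt_of_lt_of_le hn (Int.le_ceil _)
    have h2 : |n| < ⌈2 * |m1| / ρ'⌉ := by exact_mod_cast h1
    rw [abs_lt] at h2
    exact ⟨h2.1.le, h2.2.le⟩
  filter_upwards [hlarge] with n hn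
  set p := round ((n : ℝ) * α - γ)
  have hp : nint (n * α - γ) = |n * α - γ - p| := rfl
  have h5 := abs_nonneg ((n : ℝ) * α - γ - p)
  have hm3 := le_abs_self m1
  by_cases hr : |2 * ((n : ℝ) * α - p - γ)| < ρ'
  · have hr1 := lt_of_lt_of_le hr (min_le_left _ _)
    have hr2 := lt_of_lt_of_le hr (min_le_right _ _)
    have hk : 0 < |κ| + 1 := by positivity
    rw [lt_div_iff₀ hk] at hr2
    have h1 := hpts n p hr1
    rw [e1] at hr2 h1
    rw [hp]
    have h4 : |2 * (n : ℝ) - κ| ≤ 2 * |(n : ℝ)| + |κ| := by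
      have := abs_sub (2 * (n : ℝ)) κ
      rw [abs_mul] at this; norm_num at this; linarith
    have h6 := mul_le_mul_of_nonneg_right h4 h5
    nlinarith
  · push Not at hr
    rw [e1] at hr
    rw [hp]
    rw [div_le_iff₀ hρ'] at hn
    have := mul_le_mul_of_nonneg_left hr (abs_nonneg (n : ℝ))
    nlinarith

lemma nicf_basic (α : ℝ) (hirr : Irrational α) (h0 : 0 < α) (h12 : α < 1 / 2) (k : ℕ) :
    Irrational (nicfT α k) ∧ 0 < nicfT α k ∧ nicfT α k < 1 / 2 := by
  induction k with
  | zero => exact ⟨hirr, h0, h12⟩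
  | succ k ih =>
    obtain ⟨h1, h2, h3⟩ := ih
    have hi : Irrational (nicfT α k)⁻¹ := h1.inv
    have hf : Irrational (Int.fract (nicfT α k)⁻¹) := by
      rw [← Int.self_sub_floor]
      exact hi.sub_intCast _
    have hf0 := Int.fract_nonneg (nicfT α k)⁻¹
    have hf1 := Int.fract_lt_one (nicfT α k)⁻¹
    have hne0 : Int.fract (nicfT α k)⁻¹ ≠ 0 := hf.ne_zero
    have hneh : Int.fract (nicfT α k)⁻¹ ≠ 1 / 2 := by
      have := hf.ne_rational 1 2
      simpa using this
    have hpos : 0 < Int.fract (nicfT α k)⁻¹ := lt_of_le_of_ne hf0 hne0.symm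
    simp only [nicfT]
    split_ifs with h
    · exact ⟨hf, hpos, lt_of_le_of_ne h hneh⟩
    · refine ⟨?_, by linarith, by linarith⟩
      have := hf.intCast_sub 1
      simpa using this

lemma nicf_rec (α : ℝ) (hirr : Irrational α) (h0 : 0 < α) (h12 : α < 1 / 2) (k : ℕ) :
    (nicfT α k)⁻¹ = nicfA α (k + 1) + nicfE α (k + 2) * nicfT α (k + 1) := by
  obtain ⟨h1, h2, h3⟩ := nicf_basic α hirr h0 h12 k
  have hi : Irrational (nicfT α k)⁻¹ := h1.inv
  have hf := Int.floor_add_fract (nicfT α k)⁻¹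
  simp only [nicfT, nicfA, nicfE]
  split_ifs with h
  · push_cast
    linarith
  · have hc : ⌈(nicfT α k)⁻¹⌉ = ⌊(nicfT α k)⁻¹⌋ + 1 := by
      rw [Int.ceil_eq_floor_add_one_iff_notMem]
      rintro ⟨m, hm⟩
      exact hi.ne_int m hm.symm
    rw [hc]
    push_cast
    linarith

lemma nicfE_or (α : ℝ) (k : ℕ) : nicfE α k = 1 ∨ nicfE α k = -1 := by
  match k with
  | 0 => left; rfl
  | 1 => left; rfl
  | k + 2 =>
    simp only [nicfE]
    split_ifs <;> simp

/-- the NICF as an instance of `CF`. -/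
noncomputable def mkCF (α : ℝ) (hirr : Irrational α) (h0 : 0 < α) (h12 : α < 1 / 2) : CF where
  T := nicfT α
  a := nicfA α
  e := nicfE α
  T_pos k := (nicf_basic α hirr h0 h12 k).2.1
  T_lt k := (nicf_basic α hirr h0 h12 k).2.2
  T_rec k := by
    rw [← nicf_rec α hirr h0 h12 k]
    exact mul_inv_cancel₀ (nicf_basic α hirr h0 h12 k).2.1.ne'
  e_or := nicfE_or α
  e_one := rfl
  a_ge k := by
    have h1 := nicf_rec α hirr h0 h12 k
    obtain ⟨_, h2, h3⟩ := nicf_basic α hirr h0 h12 k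
    obtain ⟨_, h4, h5⟩ := nicf_basic α hirr h0 h12 (k + 1)
    have h6 : 2 < (nicfT α k)⁻¹ := by
      rw [lt_inv_comm₀ (by norm_num) h2]; linarith
    have h7 : (1 : ℝ) < nicfA α (k + 1) := by
      rcases nicfE_or α (k + 2) with h | h <;> rw [h] at h1 <;> push_cast at h1 <;> linarith
    have : 1 < nicfA α (k + 1) := by exact_mod_cast h7
    omega

namespace CF
variable (c : CF)

/-- the bound `b = 1/(R-1/(R-1))`. -/
noncomputable def bR (R : ℝ) : ℝ := (R - 1) / (R ^ 2 - R - 1)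

lemma bR_pos {R : ℝ} (hR : 4 ≤ R) : 0 < bR R := by
  unfold bR
  apply div_pos <;> nlinarith

lemma bR_mul {R : ℝ} (hR : 4 ≤ R) : bR R * (R ^ 2 - R - 1) = R - 1 := by
  unfold bR
  have : R ^ 2 - R - 1 ≠ 0 := by nlinarith
  exact div_mul_cancel₀ _ this

lemma bR_inv {R : ℝ} (hR : 4 ≤ R) : bR R * (R - 1 / (R - 1)) = 1 := by
  have h := bR_mul hR
  have : R - 1 ≠ 0 := by linarith
  field_simp
  linarith

lemma bR_le {R : ℝ} (hR : 4 ≤ R) : bR R ≤ 1 / (R - 1) := by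
  unfold bR
  rw [div_le_div_iff₀ (by nlinarith) (by linarith)]
  nlinarith

lemma bR_ge {R : ℝ} (hR : 4 ≤ R) : 1 / R ≤ bR R := by
  unfold bR
  rw [div_le_div_iff₀ (by linarith) (by nlinarith)]
  nlinarith

lemma bR_le3 {R : ℝ} (hR : 4 ≤ R) : bR R ≤ 3 / 11 := by
  unfold bR
  rw [div_le_div_iff₀ (by nlinarith) (by norm_num)]
  nlinarith

/-- `b (R - b) ≥ 1`. -/
lemma bR_key {R : ℝ} (hR : 4 ≤ R) : 1 ≤ bR R * (R - bR R) := by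
  have h1 := bR_inv hR
  have h2 := bR_le hR
  have h3 := bR_pos hR
  nlinarith

/-- Tail hypothesis. -/
structure Tail (R : ℝ) (k0 : ℕ) : Prop where
  hR : 4 ≤ R
  ha : ∀ k, k0 ≤ k → R ≤ c.a k
  hx : ∀ k, k0 ≤ k → c.x k ≤ bR R
  hT : ∀ k, k0 ≤ k → c.T k ≤ bR R

lemma exists_tail {R : ℝ} (hR : 4 ≤ R) (h : ∀ᶠ i in atTop, R ≤ c.a i) :
    ∃ k0, c.Tail R k0 := by
  obtain ⟨m, hm⟩ := eventually_atTop.mp h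
  have hm1 : ∀ k, m ≤ k → c.x (k + 1) ≤ 1 / (R - 1) := by
    intro k hk
    have h1 := hm (k + 1) (by omega)
    have h2 := c.x_bd k
    have h3 := c.x_succ k
    have h4 := c.x_bd (k + 1)
    rw [le_div_iff₀ (by linarith)]
    have : R - 1 ≤ c.a (k + 1) + c.e (k + 1) * c.x k := by
      rcases c.eR (k + 1) with h | h <;> rw [h] <;> linarith
    nlinarith
  have hb := bR_inv hR
  have hbp := bR_pos hR
  have hR1 : 0 < R - 1 / (R - 1) := by
    by_contra hc
    push Not at hc
    nlinarith
  have hTm : ∀ k, m ≤ k → c.T k ≤ 1 / (R - 1) := by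
    intro k hk
    have h1 := hm (k + 1) (by omega)
    have h2 := c.T_pos (k + 1)
    have h3 := c.T_rec k
    have h4 := c.T_pos k
    have h5 := c.T_lt (k + 1)
    rw [le_div_iff₀ (by linarith)]
    have : R - 1 ≤ c.a (k + 1) + c.e (k + 2) * c.T (k + 1) := by
      rcases c.eR (k + 2) with h | h <;> rw [h] <;> linarith
    nlinarith
  refine ⟨m + 2, hR, fun k hk => hm k (by omega), ?_, ?_⟩
  · intro k hk
    obtain ⟨j, rfl⟩ : ∃ j, k = j + 1 + 1 := ⟨k - 2, by omega⟩
    have h1 := hm (j + 1 + 1) (by omega)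
    have h2 := c.x_bd (j + 1)
    have h3 := c.x_succ (j + 1)
    have h4 := c.x_bd (j + 1 + 1)
    have h5 := hm1 j (by omega)
    have : R - 1 / (R - 1) ≤ c.a (j + 1 + 1) + c.e (j + 1 + 1) * c.x (j + 1) := by
      rcases c.eR (j + 1 + 1) with h | h <;> rw [h] <;> linarith
    have h6 := mul_le_mul_of_nonneg_left this h4.1
    by_contra hc
    push Not at hc
    nlinarith
  · intro k hk
    have h1 := hm (k + 1) (by omega)
    have h2 := c.T_pos (k + 1)
    have h3 := c.T_rec k
    have h4 := c.T_pos k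
    have h5 := hTm (k + 1) (by omega)
    have : R - 1 / (R - 1) ≤ c.a (k + 1) + c.e (k + 2) * c.T (k + 1) := by
      rcases c.eR (k + 2) with h | h <;> rw [h] <;> linarith
    have h6 := mul_le_mul_of_nonneg_left this h4.le
    by_contra hc
    push Not at hc
    nlinarith

end CF

/-- The representation of `γ` by its alpha expansion. -/
lemma gamma_rep (α γ : ℝ) (hirr : Irrational α) (h0 : 0 < α) (h12 : α < 1 / 2) :
    (mkCF α hirr h0 h12).Rep γ
      (fun k => 2 * cCoef α γ k - (nicfA α k - 1 + nicfE α k))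
      (fun k => 2 * gSeq α γ k - 1 - nicfE α (k + 1) * nicfT α k) := by
  set c := mkCF α hirr h0 h12 with hc
  refine ⟨?_, ?_, ?_⟩
  · intro k
    obtain ⟨m, hm⟩ := c.e_odd (k + 1)
    change nicfE α (k + 1) = _ at hm
    refine ⟨cCoef α γ (k + 1) - nicfA α (k + 1) - m, ?_⟩
    change 2 * cCoef α γ (k + 1) - (nicfA α (k + 1) - 1 + nicfE α (k + 1)) - nicfA α (k + 1) = _
    rw [hm]; ring
  · intro k
    have h1 := c.T_rec k
    change nicfT α k * (nicfA α (k + 1) + nicfE α (k + 2) * nicfT α (k + 1)) = 1 at h1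
    have h2 : (nicfT α k) ≠ 0 := (c.T_pos k).ne'
    have h3 : gSeq α γ k = nicfT α k * (cCoef α γ (k + 1) + gSeq α γ (k + 1)) := by
      simp only [cCoef, gSeq, Nat.add_sub_cancel]
      rw [Int.floor_add_fract]
      field_simp
    change 2 * gSeq α γ k - 1 - nicfE α (k + 1) * nicfT α k = nicfT α k * _
    rw [h3]
    push_cast
    linear_combination h1
  · change 2 * γ = 1 + α + (2 * γ - 1 - nicfE α 1 * α)
    simp [nicfE]

namespace CF
variable (c : CF)

lemma D_add_le (k j : ℕ) : c.D (k + j) ≤ c.D k * (1 / 2) ^ j := by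
  induction j with
  | zero => simp
  | succ j ih =>
    rw [← add_assoc, D_succ, pow_succ, ← mul_assoc]
    exact mul_le_mul ih (c.T_lt _).le (c.T_pos _).le (by have := c.D_pos k; positivity)

/-- tail sums. -/
noncomputable def vsum (t : ℕ → ℤ) (k : ℕ) : ℝ :=
  (∑' j : ℕ, (t (k + 1 + j) : ℝ) * c.D (k + 1 + j)) / c.D k

lemma vsum_term {t : ℕ → ℤ} (ht : ∀ k, |t k| ≤ 1) (k j : ℕ) :
    ‖(t (k + 1 + j) : ℝ) * c.D (k + 1 + j)‖ ≤ c.D k * (1 / 2) * (1 / 2) ^ j := by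
  rw [norm_mul, Real.norm_eq_abs, Real.norm_eq_abs, abs_of_pos (c.D_pos _)]
  have h1 : |(t (k + 1 + j) : ℝ)| ≤ 1 := by exact_mod_cast ht (k + 1 + j)
  have h2 := c.D_add_le k (1 + j)
  have h3 := c.D_pos (k + 1 + j)
  rw [← add_assoc, pow_add] at h2
  nlinarith

lemma vsum_summable {t : ℕ → ℤ} (ht : ∀ k, |t k| ≤ 1) (k : ℕ) :
    Summable (fun j : ℕ => (t (k + 1 + j) : ℝ) * c.D (k + 1 + j)) :=
  Summable.of_norm_bounded (summable_geometric_two.mul_left _) (c.vsum_term ht k)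

lemma vsum_bd {t : ℕ → ℤ} (ht : ∀ k, |t k| ≤ 1) (k : ℕ) : |c.vsum t k| ≤ 1 := by
  have h1 := tsum_of_norm_bounded (hasSum_geometric_two.mul_left (c.D k * (1 / 2)))
    (c.vsum_term ht k)
  have h2 := c.D_pos k
  rw [vsum, abs_div, abs_of_pos h2, div_le_one h2]
  rw [Real.norm_eq_abs] at h1
  linarith

lemma vsum_rec {t : ℕ → ℤ} (ht : ∀ k, |t k| ≤ 1) (k : ℕ) :
    c.vsum t k = c.T k * (t (k + 1) + c.vsum t (k + 1)) := by
  have h1 := (c.vsum_summable ht k).tsum_eq_zero_add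
  have h2 := c.D_pos k
  have h3 := c.T_pos k
  unfold vsum
  rw [h1, D_succ]
  have h5 : (∑' j : ℕ, (t (k + 1 + (j + 1)) : ℝ) * c.D (k + 1 + (j + 1))) =
      ∑' j : ℕ, (t (k + 1 + 1 + j) : ℝ) * c.D (k + 1 + 1 + j) :=
    tsum_congr fun j => by rw [show k + 1 + (j + 1) = k + 1 + 1 + j by ring]
  rw [h5, add_zero]
  field_simp

/-- the telescoping sum. -/
lemma tele : HasSum (fun k : ℕ => ((c.a (k + 1) : ℝ) - 1 + c.e (k + 1)) * c.D (k + 1))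
    (1 + c.T 0) := by
  let f : ℕ → ℝ := fun k => c.D k + c.e (k + 1) * c.D (k + 1)
  have hs : Summable f := by
    refine Summable.of_norm_bounded (summable_geometric_two.mul_left 2) (fun k => ?_)
    have h1 := c.D_le k
    have h2 := c.D_le (k + 1)
    have h3 := c.D_pos k
    have h4 := c.D_pos (k + 1)
    rw [pow_succ] at h2
    have : (0 : ℝ) < (1 / 2) ^ k := by positivity
    simp only [f, Real.norm_eq_abs]
    rw [abs_le]
    rcases c.eR (k + 1) with h | h <;> rw [h] <;> constructor <;> linarith
  obtain ⟨s, hs⟩ := hs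
  have h1 := (hasSum_nat_add_iff' 1).mpr hs
  have h2 := hs.sub h1
  simp only [Finset.range_one, Finset.sum_singleton, sub_sub_cancel] at h2
  have h3 : f 0 = 1 + c.T 0 := by simp [f, D, c.e_one]
  rw [h3] at h2
  have h4 : (fun k : ℕ => ((c.a (k + 1) : ℝ) - 1 + c.e (k + 1)) * c.D (k + 1)) =
      fun k => f k - f (k + 1) := by
    funext k
    have := c.D_rec k
    change _ = c.D k + c.e (k + 1) * c.D (k + 1) - (c.D (k + 1) + c.e (k + 2) * c.D (k + 1 + 1))
    rw [D_succ (k := k + 1)]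
    linear_combination -this
  rw [h4]
  exact h2

/-- Properties of the data of `γ_*` used in the argument. -/
structure Star (t : ℕ → ℤ) (v : ℕ → ℝ) : Prop where
  t_even : ∀ k, Even (c.a (k + 1)) → t (k + 1) = 0
  t_odd : ∀ k, Odd (c.a (k + 1)) → t (k + 1) = 1 ∨ t (k + 1) = -1
  v_abs : ∀ k, |v k| ≤ c.T k
  tv : ∀ k, Odd (c.a (k + 1)) → t (k + 1) * v (k + 1) ≤ 0
  adj : ∀ k, Odd (c.a (k + 1)) → Odd (c.a (k + 2)) → t (k + 2) = - t (k + 1)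
  v_odd : ∀ k, Odd (c.a (k + 1)) → c.T k * (1 - c.T (k + 1)) ≤ |v k|
  v_even : ∀ k, Even (c.a (k + 1)) → |v k| ≤ c.T k * c.T (k + 1)

lemma star_of_sigma {t : ℕ → ℤ} {v : ℕ → ℝ} {σ : ℕ → ℤ} (hσ : ∀ k, σ k = 1 ∨ σ k = -1)
    (hσo : ∀ k, Odd (c.a (k + 1)) → σ (k + 1) = - σ k ∧ t (k + 1) = σ (k + 1))
    (hσe : ∀ k, Even (c.a (k + 1)) → σ (k + 1) = σ k ∧ t (k + 1) = 0)
    (hv : ∀ k, v k = c.T k * (t (k + 1) + v (k + 1))) (hvb : ∀ k, |v k| ≤ 1) :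
    c.Star t v := by
  let w : ℕ → ℝ := fun k => - σ k * v k
  have hσR : ∀ k, (σ k : ℝ) * σ k = 1 := by
    intro k; rcases hσ k with h | h <;> rw [h] <;> norm_num
  have hwo : ∀ k, Odd (c.a (k + 1)) → w k = c.T k * (1 - w (k + 1)) := by
    intro k hk
    obtain ⟨h1, h2⟩ := hσo k hk
    have h3 : (σ k : ℝ) = - σ (k + 1) := by rw [h1]; push_cast; ring
    simp only [w]
    rw [hv k, h2, h3]
    have := hσR (k + 1)
    linear_combination c.T k * this
  have hwe : ∀ k, Even (c.a (k + 1)) → w k = c.T k * w (k + 1) := by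
    intro k hk
    obtain ⟨h1, h2⟩ := hσe k hk
    simp only [w]
    rw [hv k, h2, h1]
    push_cast
    ring
  have habs : ∀ k, |w k| = |v k| := by
    intro k
    simp only [w]
    rcases hσ k with h | h <;> rw [h] <;> simp
  have hwn : ∀ n : ℕ, ∀ k, -(1 / 2 : ℝ) ^ n ≤ w k ∧ w k ≤ 1 + (1 / 2 : ℝ) ^ n := by
    intro n
    induction n with
    | zero =>
      intro k
      have := hvb k
      rw [← habs, abs_le] at this
      constructor <;> norm_num <;> linarith
    | succ n ih =>
      intro k
      have h1 := ih (k + 1)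
      have h2 := c.T_pos k
      have h3 := c.T_lt k
      have h4 : (0 : ℝ) < (1 / 2) ^ n := by positivity
      rw [pow_succ]
      rcases Int.even_or_odd (c.a (k + 1)) with h | h
      · rw [hwe k h]; constructor <;> nlinarith
      · rw [hwo k h]; constructor <;> nlinarith
  have hw01 : ∀ k, 0 ≤ w k ∧ w k ≤ 1 := by
    intro k
    have hl : Tendsto (fun n : ℕ => (1 / 2 : ℝ) ^ n) atTop (nhds 0) :=
      tendsto_pow_atTop_nhds_zero_of_lt_one (by norm_num) (by norm_num)
    constructor
    · refine ge_of_tendsto' (x := atTop) (f := fun n : ℕ => w k + (1 / 2 : ℝ) ^ n) ?_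
        (fun n => by linarith [(hwn n k).1])
      simpa using hl.const_add (w k)
    · refine ge_of_tendsto' (x := atTop) (f := fun n : ℕ => 1 + (1 / 2 : ℝ) ^ n) ?_
        (fun n => (hwn n k).2)
      simpa using hl.const_add 1
  have hwT : ∀ k, w k ≤ c.T k := by
    intro k
    have h1 := hw01 (k + 1)
    have h2 := c.T_pos k
    rcases Int.even_or_odd (c.a (k + 1)) with h | h
    · rw [hwe k h]; nlinarith
    · rw [hwo k h]; nlinarith
  have habs' : ∀ k, |v k| = w k := fun k => by rw [← habs, abs_of_nonneg (hw01 k).1]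
  refine ⟨fun k h => (hσe k h).2, fun k h => ?_, fun k => ?_, fun k h => ?_, fun k h1 h2 => ?_,
    fun k h => ?_, fun k h => ?_⟩
  · rw [(hσo k h).2]; exact hσ _
  · rw [habs']; exact hwT k
  · rw [(hσo k h).2]
    have := (hw01 (k + 1)).1
    simp only [w] at this
    linarith
  · rw [(hσo k h1).2, (hσo (k + 1) h2).2]; exact (hσo (k + 1) h2).1
  · rw [habs', hwo k h]
    exact mul_le_mul_of_nonneg_left (by linarith [hwT (k + 1)]) (c.T_pos k).le
  · rw [habs', hwe k h]
    exact mul_le_mul_of_nonneg_left (by linarith [hwT (k + 1)]) (c.T_pos k).le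

end CF

lemma oddIdx_succ (α : ℝ) (k : ℕ) :
    oddIdx α (k + 1) = oddIdx α k + if Odd (nicfA α (k + 1)) then 1 else 0 := by
  unfold oddIdx
  rw [← Finset.insert_Icc_right_eq_Icc_add_one (by omega), Finset.filter_insert]
  split_ifs with h
  · rw [Finset.card_insert_of_notMem]
    simp
  · rfl

lemma star_rep (α : ℝ) (hirr : Irrational α) (h0 : 0 < α) (h12 : α < 1 / 2) :
    ∃ v, (mkCF α hirr h0 h12).Rep (gammaStar α) (lamStar α) v ∧
      (mkCF α hirr h0 h12).Star (lamStar α) v := by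
  set c := mkCF α hirr h0 h12 with hc
  have ht : ∀ k, |lamStar α k| ≤ 1 := by
    intro k
    unfold lamStar
    split_ifs
    · rw [abs_pow]; simp
    · simp
  have hD : ∀ k, c.D k = nicfD α k := by
    intro k
    induction k with
    | zero => simp [CF.D, nicfD]
    | succ k ih => rw [CF.D_succ, ih, nicfD, nicfD, Finset.prod_range_succ]; rfl
  refine ⟨c.vsum (lamStar α), ⟨?_, c.vsum_rec ht, ?_⟩, ?_⟩
  · intro k
    change Even (lamStar α (k + 1) - nicfA α (k + 1))
    unfold lamStar
    split_ifs with h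
    · exact Odd.sub_odd (Odd.pow (by decide)) h
    · rw [Int.not_odd_iff_even] at h
      simpa using h
  · have h1 := c.tele
    have h2 := (c.vsum_summable ht 0).hasSum
    have h3 := (h1.add h2).mul_left (1 / 2)
    have h4 : gammaStar α = 1 / 2 * (1 + c.T 0 + c.vsum (lamStar α) 0) := by
      unfold gammaStar CF.vsum
      rw [show c.D 0 = 1 from rfl, div_one, ← h3.tsum_eq]
      congr 1
      funext k
      rw [← hD, show 0 + 1 + k = k + 1 by ring]
      change ((c.a (k + 1) : ℝ) - 1 + c.e (k + 1) + lamStar α (k + 1)) / 2 * _ = _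
      ring
    rw [h4]; ring
  · refine c.star_of_sigma (σ := fun k => (-1) ^ oddIdx α k) (fun k => neg_one_pow_eq_or ℤ _)
      ?_ ?_ (c.vsum_rec ht) (c.vsum_bd ht)
    · intro k hk
      change Odd (nicfA α (k + 1)) at hk
      simp only [lamStar, oddIdx_succ, hk, if_true]
      exact ⟨by ring, trivial⟩
    · intro k hk
      change Even (nicfA α (k + 1)) at hk
      have hk' : ¬ Odd (nicfA α (k + 1)) := Int.not_odd_iff_even.mpr hk
      simp only [lamStar, oddIdx_succ, hk', if_false, add_zero]
      exact ⟨trivial, trivial⟩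

/-- the four vertices control a whole line of the grid -/
lemma cell_line {B : ℤ} {W W' K : ℝ} (hB : Even B) (hB2 : 2 ≤ B) (hW : |W| ≤ 1) (hW' : |W'| ≤ 1)
    (v1 : K ≤ (1 + W') * (B - 1 + W)) (v2 : K ≤ (1 - W') * (B + 1 + W))
    (v3 : K ≤ (1 + W) * (B - 1 + W')) (v4 : K ≤ (1 - W) * (B + 1 + W'))
    (I : ℤ) (hI : Odd I) : K ≤ |(B + W + I) * (I - W')| := by
  rw [abs_le] at hW hW'
  have hBR : (2 : ℝ) ≤ B := by exact_mod_cast hB2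
  obtain ⟨i, hi⟩ := hI
  obtain ⟨j, hj⟩ := hB
  rcases le_or_gt 1 I with h1 | h1
  · have h1R : (1 : ℝ) ≤ I := by exact_mod_cast h1
    refine le_trans ?_ (le_abs_self _)
    nlinarith
  · have h2 : I ≤ -1 := by omega
    have h2R : (I : ℝ) ≤ -1 := by exact_mod_cast h2
    rcases le_or_gt (-(B - 1)) I with h3 | h3
    · have h3R : -((B : ℝ) - 1) ≤ I := by exact_mod_cast h3
      refine le_trans ?_ (neg_le_abs _)
      -- concave function on an interval
      by_cases hB' : B = 2
      · have : I = -1 := by omega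
        subst this
        push_cast
        nlinarith
      · have hB4 : 4 ≤ B := by omega
        have hB4R : (4 : ℝ) ≤ B := by exact_mod_cast hB4
        have e : -((B + W + I) * (I - W')) * ((B : ℝ) - 2) =
            ((1 + W') * (B - 1 + W)) * (I + (B - 1)) + ((1 + W) * (B - 1 + W')) * (-1 - I)
            + (B - 2) * ((I + (B - 1)) * (-1 - I)) := by ring
        have m1 := mul_le_mul_of_nonneg_right v1 (by linarith : (0 : ℝ) ≤ I + (B - 1))
        have m2 := mul_le_mul_of_nonneg_right v3 (by linarith : (0 : ℝ) ≤ -1 - I)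
        have m3 : (0 : ℝ) ≤ (B - 2) * ((I + (B - 1)) * (-1 - I)) :=
          mul_nonneg (by linarith) (mul_nonneg (by linarith) (by linarith))
        have : K * ((B : ℝ) - 2) ≤ -((B + W + I) * (I - W')) * ((B : ℝ) - 2) := by
          rw [e]; linarith
        exact le_of_mul_le_mul_right this (by linarith)
    · have h4 : I ≤ -(B + 1) := by omega
      have h4R : (I : ℝ) ≤ -(B + 1) := by exact_mod_cast h4
      refine le_trans ?_ (le_abs_self _)
      nlinarith

namespace CF
variable (c : CF)

/-- the cell condition at index `k+1`. -/
def Cell (t : ℕ → ℤ) (u v : ℕ → ℝ) (G : ℝ) (k : ℕ) : Prop :=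
  ∀ s : ℤ, (s = 1 ∨ s = -1) → ∀ I : ℤ, Odd I →
    G * c.S k ≤ |(((c.a (k + 1) + s * t (k + 1) : ℤ) : ℝ) + c.e (k + 1) * (c.x k - s * u k) + I) *
      (I - (c.e (k + 2) * c.T (k + 1) + s * v (k + 1)))|

lemma S_bd {R : ℝ} {k0 : ℕ} (h : c.Tail R k0) (k : ℕ) (hk : k0 ≤ k) :
    c.a (k + 1) - 2 * bR R ≤ c.S k ∧ c.S k ≤ c.a (k + 1) + 2 * bR R := by
  have h1 := h.hx k hk
  have h2 := h.hT (k + 1) (by omega)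
  have h3 := c.x_bd k
  have h4 := c.T_pos (k + 1)
  unfold S
  rcases c.eR (k + 1) with e1 | e1 <;> rcases c.eR (k + 2) with e2 | e2 <;> rw [e1, e2] <;>
    constructor <;> linarith

lemma cell_use {t : ℕ → ℤ} {u v : ℕ → ℝ} {G : ℝ} {k : ℕ} (h : c.Cell t u v G k)
    {I J : ℤ} (hI : Odd I) (hJ : J = 1 ∨ J = -1) :
    G * c.S k ≤ |(J * (c.a (k + 1) + c.e (k + 1) * c.x k) + I + t (k + 1) - c.e (k + 1) * u k) *
          (I - J * c.e (k + 2) * c.T (k + 1) - v (k + 1))| := by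
  rcases hJ with rfl | rfl
  · have := h 1 (Or.inl rfl) I hI
    refine this.trans (le_of_eq ?_)
    congr 1
    push_cast; ring
  · have := h (-1) (Or.inr rfl) (-I) hI.neg
    refine this.trans (le_of_eq ?_)
    congr 1
    push_cast; ring

lemma q_unbdd {R : ℝ} {k0 : ℕ} (h : c.Tail R k0) (B : ℝ) (k1 : ℕ) :
    ∃ k, k1 ≤ k ∧ B ≤ c.q k := by
  have h1 : ∀ n, (2 : ℝ) ^ n ≤ c.q (k0 + n) := by
    intro n
    induction n with
    | zero => simpa using c.q_pos k0
    | succ n ih =>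
      rw [← add_assoc, q_succ, pow_succ]
      have h2 := h.ha (k0 + n + 1) (by omega)
      have h3 := c.x_bd (k0 + n)
      have h4 := h.hR
      have h5 : (2 : ℝ) ≤ c.a (k0 + n + 1) + c.e (k0 + n + 1) * c.x (k0 + n) := by
        rcases c.eR (k0 + n + 1) with e | e <;> rw [e] <;> linarith
      exact mul_le_mul ih h5 (by norm_num) (by linarith [c.q_pos (k0 + n)])
  obtain ⟨n, hn⟩ := pow_unbounded_of_one_lt B (by norm_num : (1 : ℝ) < 2)
  refine ⟨k0 + (n + k1), by omega, ?_⟩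
  refine le_trans (le_trans hn.le ?_) (h1 _)
  exact pow_le_pow_right₀ (by norm_num) (by omega)

/-- pure real estimate for points away from both axes. -/
lemma far_point {a b ε η x z u v t I J H : ℝ} (ha : 4 ≤ a) (hb : b ≤ 3 / 11)
    (hH : H ≤ 1 / 3) (hε : ε = 1 ∨ ε = -1) (hη : η = 1 ∨ η = -1) (hx0 : 0 ≤ x) (hx : x ≤ b)
    (hz0 : 0 < z) (hz : z ≤ b) (hu : |u| ≤ H) (hv : |v| ≤ z) (ht : |t| ≤ 1)
    (hI : 3 ≤ |I|) (hY1 : |I - J * η * z - v| ≤ 1) (hY2 : z ≤ |I - J * η * z - v|) :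
    a + 2 * b ≤ |(J * (a + ε * x) + I + t - ε * u) * (I - J * η * z - v)| := by
  rw [abs_mul]
  have hJz : |J * η * z| = |J| * z := by
    rw [abs_mul, abs_mul, abs_of_pos hz0]
    rcases hη with h | h <;> rw [h] <;> simp
  have hεu : |ε * u| = |u| := by
    rw [abs_mul]; rcases hε with h | h <;> rw [h] <;> simp
  have h1 : |I| ≤ |J| * z + 1 + z := by
    have e : I = (I - J * η * z - v) + J * η * z + v := by ring
    have := abs_add_three (I - J * η * z - v) (J * η * z) v
    rw [← e, hJz] at this; linarith
  have h2 : 2 - z ≤ |J| * z := by linarith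
  have h3 : |J| * (a - b) ≤ |J * (a + ε * x)| := by
    rw [abs_mul]
    refine mul_le_mul_of_nonneg_left ?_ (abs_nonneg _)
    refine le_trans ?_ (le_abs_self _)
    rcases hε with h | h <;> rw [h] <;> linarith
  have h4 : |J * (a + ε * x)| ≤ |J * (a + ε * x) + I + t - ε * u| + |I| + 1 + H := by
    have e : J * (a + ε * x) = (J * (a + ε * x) + I + t - ε * u) + (-I) + (-t) + (ε * u) := by ring
    have i1 := abs_add_le ((J * (a + ε * x) + I + t - ε * u) + (-I) + (-t)) (ε * u)
    have i2 := abs_add_three (J * (a + ε * x) + I + t - ε * u) (-I) (-t)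
    rw [← e] at i1
    rw [abs_neg, abs_neg] at i2
    linarith
  have h5 : |J| * (a - b) - (|J| * z + 1 + z) - 1 - H ≤ |J * (a + ε * x) + I + t - ε * u| := by
    linarith
  set X := |J * (a + ε * x) + I + t - ε * u|
  have hX : 0 ≤ X := abs_nonneg _
  have h6 : z * X ≤ X * |I - J * η * z - v| := by
    rw [mul_comm]; exact mul_le_mul_of_nonneg_left hY2 hX
  have h7 : z * (|J| * (a - b) - (|J| * z + 1 + z) - 1 - H) ≤ z * X :=
    mul_le_mul_of_nonneg_left h5 hz0.le
  have h8 : (2 - z) * (a - b - z) ≤ |J| * z * (a - b - z) :=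
    mul_le_mul_of_nonneg_right h2 (by linarith)
  have h9 : a + 2 * b ≤ (2 - z) * (a - b - z) - z * (2 + z + H) := by
    nlinarith [mul_nonneg hz0.le (by linarith : 0 ≤ b - z)]
  linarith

/-- Master lemma: if all cells are good then `M ≥ G/4`. -/
lemma lower_of_cells {α γ R H G : ℝ} {t : ℕ → ℤ} {u v : ℕ → ℝ} {k0 k1 : ℕ} (hα : c.T 0 = α)
    (hT : c.Tail R k0) (hrep : c.Rep γ t v)
    (hu : ∀ k, k0 ≤ k → u (k + 1) = c.x (k + 1) * (t (k + 1) - c.e (k + 1) * u k))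
    (hk1 : k0 ≤ k1) (hH : H ≤ 1 / 3) (hub : ∀ k, k1 ≤ k → |u k| ≤ H)
    (hvb : ∀ k, |v k| ≤ c.T k) (htb : ∀ k, |t (k + 1)| ≤ 1)
    (hG0 : 0 < G) (hG1 : G ≤ 1) (hcell : ∀ k, k1 ≤ k → c.Cell t u v G k) :
    G / 4 ≤ Mval α γ := by
  subst hα
  have hb3 := bR_le3 hT.hR
  have hb0 := bR_pos hT.hR
  obtain ⟨κ, hκ⟩ := c.rep_prod hrep hu
  have htR : ∀ k, |(t (k + 1) : ℝ)| ≤ 1 := fun k => by exact_mod_cast htb k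
  have main : ∀ n : ℕ, ∀ k, k1 ≤ k → ∀ N p : ℤ, ∀ I J : ℤ, c.IJ t N p (k + 1) = (I, J) →
      J.natAbs = n → |2 * (N * c.T 0 - p - γ)| ≤ c.D (k + 1) →
      G ≤ |2 * N - κ| * |2 * (N * c.T 0 - p - γ)| := by
    intro n
    induction n using Nat.strong_induction_on with
    | _ n ih =>
    intro k hk N p I J hIJ hn hr
    obtain ⟨-, hY, hprod⟩ := hκ N p k (by omega) I J hIJ
    have hodd := c.IJ_odd hrep N p (k + 1)
    rw [hIJ] at hodd
    simp only at hodd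
    have ha := hT.ha (k + 1) (by omega)
    have hR4 := hT.hR
    have hS := c.S_bd hT k (by omega)
    have hS0 : 0 < c.S k := by linarith
    have fin : G * c.S k ≤ |(J * (c.a (k + 1) + c.e (k + 1) * c.x k) + I + t (k + 1)
        - c.e (k + 1) * u k) * (I - J * c.e (k + 2) * c.T (k + 1) - v (k + 1))| →
        G ≤ |2 * N - κ| * |2 * (N * c.T 0 - p - γ)| := by
      intro h
      rw [← hprod] at h
      exact le_of_mul_le_mul_right h hS0
    by_cases hJ1 : J = 1 ∨ J = -1
    · exact fin (c.cell_use (hcell k hk) hodd.1 hJ1)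
    have hnext : c.IJ t N p (k + 1 + 1) = (c.a (k + 1 + 1) * I - c.e (k + 1 + 1) * J - t (k + 1 + 1),
      -I) := by
      rw [IJ, hIJ]
    by_cases hI1 : I = 1 ∨ I = -1
    · obtain ⟨-, hY2, hprod2⟩ := hκ N p (k + 1) (by omega) _ _ hnext
      have hodd2 := c.IJ_odd hrep N p (k + 1 + 1)
      rw [hnext] at hodd2
      have ha2 := hT.ha (k + 1 + 1) (by omega)
      have hS2 := c.S_bd hT (k + 1) (by omega)
      have hS20 : 0 < c.S (k + 1) := by linarith
      have h := c.cell_use (hcell (k + 1) (by omega)) hodd2.1 (J := -I) (by omega)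
      rw [← hprod2] at h
      exact le_of_mul_le_mul_right h hS20
    have hI3 : 3 ≤ |I| := by
      obtain ⟨i, hi⟩ := hodd.1
      rw [le_abs]; omega
    have hJ3 : 3 ≤ |J| := by
      obtain ⟨i, hi⟩ := hodd.2
      rw [le_abs]; omega
    have hI3R : (3 : ℝ) ≤ |(I : ℝ)| := by exact_mod_cast hI3
    have hJ3R : (3 : ℝ) ≤ |(J : ℝ)| := by exact_mod_cast hJ3
    have hD := c.D_pos (k + 1)
    have hz0 := c.T_pos (k + 1)
    have hz := hT.hT (k + 1) (by omega)
    have hv := hvb (k + 1)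
    have hYabs : |2 * (N * c.T 0 - p - γ)| =
        c.D (k + 1) * |I - J * c.e (k + 2) * c.T (k + 1) - v (k + 1)| := by
      rw [hY, abs_mul, abs_of_pos hD]
    have hY1 : |I - J * c.e (k + 2) * c.T (k + 1) - v (k + 1)| ≤ 1 := by
      rw [hYabs] at hr
      by_contra hc
      push Not at hc
      nlinarith
    have hJz : |J * (c.e (k + 2) : ℝ) * c.T (k + 1)| = |(J : ℝ)| * c.T (k + 1) := by
      rw [abs_mul, abs_mul, abs_of_pos hz0]
      rcases c.eR (k + 2) with h | h <;> rw [h] <;> simp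
    have hIlt : |(I : ℝ)| < |(J : ℝ)| := by
      have e : (I : ℝ) = (I - J * c.e (k + 2) * c.T (k + 1) - v (k + 1))
        + J * c.e (k + 2) * c.T (k + 1) + v (k + 1) := by ring
      have := abs_add_three (I - J * c.e (k + 2) * c.T (k + 1) - v (k + 1))
        (J * c.e (k + 2) * c.T (k + 1)) (v (k + 1))
      rw [← e, hJz] at this
      nlinarith
    by_cases hr2 : |2 * (N * c.T 0 - p - γ)| ≤ c.D (k + 1 + 1)
    · refine ih I.natAbs ?_ (k + 1) (by omega) N p _ _ hnext (by simp) hr2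
      have : |I| < |J| := by exact_mod_cast hIlt
      rw [← hn]
      zify
      exact this
    · push Not at hr2
      rw [hYabs, D_succ] at hr2
      have hzY : c.T (k + 1) ≤ |I - J * c.e (k + 2) * c.T (k + 1) - v (k + 1)| :=
        (lt_of_mul_lt_mul_left hr2 hD.le).le
      refine fin (le_trans ?_ (far_point (b := bR R) (H := H) (by linarith) hb3 hH (c.eR (k + 1))
        (c.eR (k + 2)) (c.x_bd k).1 (hT.hx k (by omega)) hz0 hz (hub k hk) hv (htR k) hI3R hY1 hzY))
      nlinarith
  refine M_low (ρ := c.D (k1 + 1)) (κ := κ) (c.D_pos _) ?_ ?_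
  · intro N p hr
    have := main _ k1 le_rfl N p (c.IJ t N p (k1 + 1)).1 (c.IJ t N p (k1 + 1)).2 rfl rfl hr.le
    linarith
  · refine ⟨8, fun B => ?_⟩
    obtain ⟨k, hk, hq⟩ := c.q_unbdd hT B k1
    obtain ⟨N, p, hNp⟩ := c.IJ_surj hrep (k + 1) 1 1 odd_one odd_one
    obtain ⟨hX, hY, hprod⟩ := hκ N p k (by omega) 1 1 hNp
    have ha := hT.ha (k + 1) (by omega)
    have hR4 := hT.hR
    have hS := c.S_bd hT k (by omega)
    have hS0 : 0 < c.S k := by linarith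
    have hu := abs_le.mp (hub k hk)
    have hv := abs_le.mp (hvb (k + 1))
    have ht := abs_le.mp (htR k)
    have hx := hT.hx k (by omega)
    have hx0 := (c.x_bd k).1
    have hz := hT.hT (k + 1) (by omega)
    have hz0 := c.T_pos (k + 1)
    have hXlo : (1 : ℝ) ≤ ((1 : ℤ) : ℝ) * (c.a (k + 1) + c.e (k + 1) * c.x k) + (1 : ℤ) +
        t (k + 1) - c.e (k + 1) * u k ∧ ((1 : ℤ) : ℝ) * (c.a (k + 1) + c.e (k + 1) * c.x k) + (1 : ℤ) +
        t (k + 1) - c.e (k + 1) * u k ≤ c.a (k + 1) + 3 := by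
      push_cast
      rcases c.eR (k + 1) with h | h <;> rw [h] <;> constructor <;> linarith
    have hYb : |((1 : ℤ) : ℝ) - ((1 : ℤ) : ℝ) * c.e (k + 2) * c.T (k + 1) - v (k + 1)| ≤ 2 := by
      push_cast
      rw [abs_le]
      rcases c.eR (k + 2) with h | h <;> rw [h] <;> constructor <;> linarith
    refine ⟨N, p, ?_, ?_⟩
    · rw [hX, abs_of_pos (by linarith)]
      nlinarith [c.q_pos k]
    · refine le_of_mul_le_mul_right ?_ hS0
      rw [hprod, abs_mul, abs_of_pos (by linarith : (0 : ℝ) < ((1 : ℤ) : ℝ) * (c.a (k + 1) + c.e (k + 1) * c.x k) + (1 : ℤ) +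
        t (k + 1) - c.e (k + 1) * u k)]
      refine le_trans (mul_le_mul hXlo.2 hYb (abs_nonneg _) (by linarith)) ?_
      linarith

end CF

/-- Numerical parameters for the lower bound. -/
structure Par (b a0 a1 be Q H ω G : ℝ) : Prop where
  b0 : 0 < b
  b3 : b ≤ 3 / 11
  be0 : 0 < be
  beb : be ≤ b
  a04 : 4 ≤ a0
  a15 : 5 ≤ a1
  be_a0 : 1 ≤ be * (a0 - b)
  Q_a1 : 2 ≤ Q * (a1 - b)
  Qbe : be * (1 + b) ≤ Q
  QG : G ≤ 1 - Q
  H0 : 0 ≤ H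
  H3 : H ≤ 1 / 3
  Hω : H ≤ ω
  ωG : G ≤ 1 - ω
  bω : b * (1 + H) ≤ ω
  bb : b * b ≤ be
  G0 : 0 < G
  inv1 : (2 + H) * 2 + (1 + H - ω) * ω ≤ (2 + H) * (ω * a1)
  inv2 : 2 ≤ ω * (a1 - b)
  inv3 : 2 + be * H ≤ ω * (a1 - be)
  inv4 : ω * (1 + H) ≤ H * (2 + H)
  t0a : G * (a0 - 1 / 2 * Q - 1 / (2 + H) * ω) ≤ (1 - ω) * (a0 - 1 - Q)
  t0b : G * (a0 - 1 / 2 * Q - 1 / (2 + H) * ω) ≤ (1 - Q) * (a0 - 1 - ω)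
  n1 : G * (a1 - be - b) ≤ (1 - be) * (a1 - 2 - b * (1 + H))
  n2 : G * (a1 - be + b) ≤ (1 - be) * (a1 - 2 - b * H)
  n3 : G * a1 ≤ (1 - b * H) * (a1 - 2 - b)
  n4 : G * (a1 - b - be) ≤ (1 - be * (1 + H)) * (a1 - 2 - b)
  n5 : G * (a1 + 2 * b) ≤ (1 - Q) * (a1 - b * (1 + H))
  n6 : G * (a1 + 2 * b) ≤ (1 - b * (1 + H)) * (a1 - b)
  n7 : G * (a1 + 2 * b) ≤ (1 - Q) * (a1 - ω)
  n8 : G * (a1 + 2 * b) ≤ (1 - ω) * (a1 - Q)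

/-- a vertex estimate for even partial quotients. -/
lemma vert0 {a a0 G ε η x z p q P Q m n W W' : ℝ} (hε : ε = 1 ∨ ε = -1) (hη : η = 1 ∨ η = -1)
    (hx : 0 ≤ x) (hz : 0 ≤ z)
    (hW : -p + (1 + ε) * x ≤ W) (hW' : -q + (1 + η) * z ≤ W') (hp : p ≤ P)
    (hq : q ≤ Q) (hm : m * p ≤ x) (hn : n * q ≤ z) (hm2 : m ≤ 1 / 2)
    (hn2 : n ≤ 1 / 2) (ha : a0 ≤ a) (ha0 : 4 ≤ a0) (hG : 0 < G) (hGQ : G ≤ 1 - Q) (hGP : G ≤ 1 - P)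
    (fin : G * (a0 - n * Q - m * P) ≤ (1 - Q) * (a0 - 1 - P)) :
    G * (a + η * z + ε * x) ≤ (1 + W') * (a - 1 + W) := by
  have h1e : 0 ≤ (1 + ε) * x := by rcases hε with h | h <;> rw [h] <;> linarith
  have h1h : 0 ≤ (1 + η) * z := by rcases hη with h | h <;> rw [h] <;> linarith
  have s1 : (1 + W') * (a - 1 - p + (1 + ε) * x) ≤ (1 + W') * (a - 1 + W) :=
    mul_le_mul_of_nonneg_left (by linarith) (by linarith)
  have s2 : (1 - q + (1 + η) * z) * (a - 1 - p + (1 + ε) * x) ≤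
      (1 + W') * (a - 1 - p + (1 + ε) * x) :=
    mul_le_mul_of_nonneg_right (by linarith) (by linarith)
  have s3 : (1 - q) * (a - 1 - p) + G * ((1 + ε) * x) + G * ((1 + η) * z) ≤
      (1 - q + (1 + η) * z) * (a - 1 - p + (1 + ε) * x) := by
    have k1 := mul_nonneg h1e (by linarith : 0 ≤ 1 - q - G)
    have k2 := mul_nonneg h1h (by linarith : 0 ≤ a - 1 - p - G)
    have k3 := mul_nonneg h1e h1h
    linarith
  have s4 : G * (a - n * q - m * p) ≤ (1 - q) * (a - 1 - p) := by
    have i1 : (1 - Q) * (a0 - 1 - P) + (1 - Q) * (a - a0) + (1 - Q) * (P - p) ≤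
        (1 - Q) * (a - 1 - p) := le_of_eq (by ring)
    have i2 : (1 - Q) * (a - 1 - p) + (Q - q) * (a - 1 - p) ≤ (1 - q) * (a - 1 - p) :=
      le_of_eq (by ring)
    have i3 : G * (a - a0) ≤ (1 - Q) * (a - a0) :=
      mul_le_mul_of_nonneg_right hGQ (by linarith)
    have i4 : G * (P - p) ≤ (1 - Q) * (P - p) :=
      mul_le_mul_of_nonneg_right hGQ (by linarith)
    have i5 : 0 ≤ (Q - q) * (a - 1 - p - G) := mul_nonneg (by linarith) (by linarith)
    have i6 : G * (m * (P - p)) ≤ G * (P - p) :=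
      mul_le_mul_of_nonneg_left (by nlinarith) hG.le
    have i7 : G * (n * (Q - q)) ≤ G * (Q - q) :=
      mul_le_mul_of_nonneg_left (by nlinarith) hG.le
    linarith
  have s5 : G * (n * q) ≤ G * z := mul_le_mul_of_nonneg_left hn hG.le
  have s6 : G * (m * p) ≤ G * x := mul_le_mul_of_nonneg_left hm hG.le
  linarith

/-- the other two vertices for even partial quotients -/
lemma vert0' {a a0 G ε η x z P Q m n W W' b : ℝ} (hε : ε = 1 ∨ ε = -1) (hη : η = 1 ∨ η = -1)
    (hx : 0 ≤ x) (hz : 0 ≤ z) (hxb : x ≤ b) (hzb : z ≤ b) (hb : b ≤ 3 / 11)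
    (hW : |W| ≤ P) (hW' : |W'| ≤ Q) (hm2 : m ≤ 1 / 2)
    (hn2 : n ≤ 1 / 2) (ha : a0 ≤ a) (ha0 : 4 ≤ a0) (hG : 0 < G) (hGQ : G ≤ 1 - Q) (hGP : G ≤ 1 - P)
    (fin : G * (a0 - n * Q - m * P) ≤ (1 - Q) * (a0 - 1 - P)) :
    G * (a + η * z + ε * x) ≤ (1 - W') * (a + 1 + W) := by
  rw [abs_le] at hW hW'
  have s1 : (1 - Q) * (a + 1 - P) ≤ (1 - W') * (a + 1 + W) :=
    mul_le_mul (by linarith) (by linarith) (by linarith) (by linarith)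
  have s2 : G * (a + η * z + ε * x) ≤ G * (a + 2 * b) := by
    refine mul_le_mul_of_nonneg_left ?_ hG.le
    rcases hε with h | h <;> rcases hη with h' | h' <;> rw [h, h'] <;> linarith
  have s3 : (1 - Q) * (a + 1 - P) = (1 - Q) * (a0 - 1 - P) + (1 - Q) * (a - a0 + 2) := by ring
  have s4 : G * (a - a0 + 2) ≤ (1 - Q) * (a - a0 + 2) :=
    mul_le_mul_of_nonneg_right hGQ (by linarith)
  have s5 : G * (n * Q + m * P + 2 * b) ≤ G * 2 :=
    mul_le_mul_of_nonneg_left (by nlinarith) hG.le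
  nlinarith

namespace CF
variable (c : CF)

/-- invariants of `u` for `γ_*`. -/
structure Inv (be H ω : ℝ) (t : ℕ → ℤ) (u : ℕ → ℝ) (k : ℕ) : Prop where
  odd : Odd (c.a k) → 0 ≤ t k * u k ∧ c.x k * (1 - H) ≤ |u k|
  even : Even (c.a k) → |u k| ≤ c.x k * H ∧ c.x k ≤ be
  up : |u k| ≤ c.x k * (1 + H)
  om : c.x k + |u k| ≤ ω
  uH : |u k| ≤ H

set_option maxHeartbeats 800000 in
lemma inv_step {R a0 a1 be Q H ω G : ℝ} (P : Par (bR R) a0 a1 be Q H ω G) {k0 : ℕ}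
    (hT : c.Tail R k0) (h0 : ∀ k, k0 ≤ k → Even (c.a k) → a0 ≤ c.a k)
    (h1 : ∀ k, k0 ≤ k → Odd (c.a k) → a1 ≤ c.a k) {t : ℕ → ℤ} {v : ℕ → ℝ} (hs : c.Star t v)
    {u : ℕ → ℝ} (hu : ∀ k, k0 ≤ k → u (k + 1) = c.x (k + 1) * (t (k + 1) - c.e (k + 1) * u k))
    (k : ℕ) (hk : k0 ≤ k) (hp : u k = 0 ∨ (c.Inv be H ω t u k ∧ 1 ≤ k)) :
    c.Inv be H ω t u (k + 1) := by
  have hx := hT.hx k hk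
  have hx0 := (c.x_bd k).1
  have hX := c.x_succ k
  have hX0 := c.x_pos k
  have huH : |u k| ≤ H := by
    rcases hp with h | h
    · rw [h]; simpa using P.H0
    · exact h.1.uH
  have hue := hu k hk
  have hH := P.H3
  have hH0 := P.H0
  have hXb := hT.hx (k + 1) (by omega)
  have hb0 := P.b0
  have hb3 := P.b3
  rcases Int.even_or_odd (c.a (k + 1)) with hev | hod
  · have ha := h0 (k + 1) (by omega) hev
    have hXbe : c.x (k + 1) ≤ be := by
      have hde : a0 - bR R ≤ c.a (k + 1) + c.e (k + 1) * c.x k := by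
        rcases c.eR (k + 1) with h | h <;> rw [h] <;> linarith
      have := P.be_a0
      have h5 := P.a04
      by_contra hc
      push Not at hc
      nlinarith
    have e : |u (k + 1)| = c.x (k + 1) * |u k| := by
      rw [hue, hs.t_even k hev, abs_mul, abs_of_pos hX0]
      congr 1
      rcases c.eR (k + 1) with h | h <;> rw [h] <;> simp
    have f1 : |u (k + 1)| ≤ c.x (k + 1) * H := by
      rw [e]; exact mul_le_mul_of_nonneg_left huH hX0.le
    have f2 : |u (k + 1)| ≤ c.x (k + 1) * (1 + H) := by linarith
    refine ⟨fun h => absurd hev (Int.not_even_iff_odd.mpr h), fun _ => ⟨f1, hXbe⟩, f2, ?_, ?_⟩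
    · have := P.bω
      nlinarith
    · nlinarith
  · have ha := h1 (k + 1) (by omega) hod
    set ε : ℝ := (c.e (k + 1) : ℝ) with hε
    set T : ℝ := (t (k + 1) : ℝ) with hTd
    have hTT : T = 1 ∨ T = -1 := by
      rcases hs.t_odd k hod with h | h <;> rw [hTd, h] <;> simp
    have hTsq : T * T = 1 := by rcases hTT with h | h <;> rw [h] <;> norm_num
    have hεe : ε = 1 ∨ ε = -1 := c.eR (k + 1)
    obtain ⟨y, hy⟩ : ∃ y, y = ε * (T * u k) := ⟨_, rfl⟩
    have hyabs : |y| = |u k| := by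
      rw [hy]
      rcases hTT with h | h <;> rcases hεe with h' | h' <;> rw [h, h'] <;> simp
    have hyb : |y| ≤ H := by rw [hyabs]; exact huH
    have hyb2 := abs_le.mp hyb
    have hTu : T * u (k + 1) = c.x (k + 1) * (1 - y) := by
      rw [hue, hy]
      linear_combination c.x (k + 1) * hTsq
    have hpos : 0 ≤ T * u (k + 1) := by rw [hTu]; exact mul_nonneg hX0.le (by linarith)
    have habs : |u (k + 1)| = c.x (k + 1) * (1 - y) := by
      rw [← hTu, ← abs_of_nonneg hpos, abs_mul]
      rcases hTT with h | h <;> rw [h] <;> simp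
    have f1 : c.x (k + 1) * (1 - H) ≤ |u (k + 1)| := by
      rw [habs]; exact mul_le_mul_of_nonneg_left (by linarith) hX0.le
    have f2 : |u (k + 1)| ≤ c.x (k + 1) * (1 + H) := by
      rw [habs]; exact mul_le_mul_of_nonneg_left (by linarith) hX0.le
    have hω0 : 0 ≤ ω := le_trans P.H0 P.Hω
    have key : 2 - y ≤ ω * (c.a (k + 1) + ε * c.x k) := by
      have hmono : ω * a1 ≤ ω * c.a (k + 1) := mul_le_mul_of_nonneg_left ha hω0
      rcases hp with h | ⟨h, hk1⟩
      · have hy0 : y = 0 := by rw [hy, h]; ring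
        have := P.inv2
        have : ω * (a1 - bR R) ≤ ω * (c.a (k + 1) + ε * c.x k) := by
          refine mul_le_mul_of_nonneg_left ?_ hω0
          rcases hεe with h | h <;> rw [h] <;> linarith
        linarith
      · rcases Int.even_or_odd (c.a k) with hev' | hod'
        · obtain ⟨i1, i2⟩ := h.even hev'
          have hyx := hyabs ▸ i1
          have hyx2 := abs_le.mp hyx
          have hωH := P.Hω
          rcases hεe with h | h <;> rw [h]
          · have := P.inv2
            nlinarith
          · have := P.inv3
            nlinarith
        · obtain ⟨i1, i2⟩ := h.odd hod'
          obtain ⟨j, rfl⟩ : ∃ j, k = j + 1 := ⟨k - 1, by omega⟩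
          have hadj := hs.adj j hod' hod
          have hTt : T = - (t (j + 1) : ℝ) := by rw [hTd, hadj]; push_cast; ring
          have hTu0 : T * u (j + 1) ≤ 0 := by rw [hTt]; linarith
          have hTua : T * u (j + 1) = - |u (j + 1)| := by
            rw [← abs_of_nonpos hTu0 |> neg_eq_iff_eq_neg.mpr |> fun h => h]
            rw [abs_mul]; rcases hTT with h | h <;> rw [h] <;> simp
          rw [hy, hTua]
          have j1 := h.up
          have j2 := h.om
          have j3 := P.inv1
          have j4 := P.inv2
          have j5 := P.ωG
          have j6 := P.G0
          rcases hεe with h | h <;> rw [h]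
          · -- the convex combination
            have l1 := mul_le_mul_of_nonneg_left (by linarith : |u (j + 1)| ≤ ω - c.x (j + 1))
              (by linarith : 0 ≤ 1 + H - ω)
            have l2 := mul_le_mul_of_nonneg_left j1 (by linarith : 0 ≤ 1 + ω)
            have l3 : (2 + H) * (2 - 1 * -|u (j + 1)|) ≤
                (2 + H) * (ω * (c.a (j + 1 + 1) + 1 * c.x (j + 1))) := by
              have l4 := mul_le_mul_of_nonneg_left hmono (by linarith : 0 ≤ 2 + H)
              linarith
            exact le_of_mul_le_mul_left l3 (by linarith)
          · have := abs_nonneg (u (j + 1))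
            have := mul_le_mul_of_nonneg_left hx hω0
            linarith
    have f3 : c.x (k + 1) + |u (k + 1)| ≤ ω := by
      rw [habs]
      have := mul_le_mul_of_nonneg_left key hX0.le
      have e : c.x (k + 1) * (ω * (c.a (k + 1) + ε * c.x k)) = ω := by
        linear_combination ω * hX
      linarith
    refine ⟨fun _ => ⟨hpos, f1⟩, fun h => absurd hod (Int.not_odd_iff_even.mpr h), f2, f3, ?_⟩
    have := P.inv4
    have g1 : (2 + H) * |u (k + 1)| ≤ (2 + H) * H := by
      have g2 := mul_le_mul_of_nonneg_left f3 (by linarith : 0 ≤ 1 + H)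
      linarith
    exact le_of_mul_le_mul_left g1 (by linarith)

end CF

section real
variable {b a0 a1 be Q H ω G a ε ζ x W W' : ℝ}

lemma vert1 (P : Par b a0 a1 be Q H ω G) (ha : a1 ≤ a) (hε : ε = 1 ∨ ε = -1)
    (hx0 : 0 ≤ x) (hx : x ≤ b) (hζ : ζ ≤ W') (hW' : -be ≤ W') (hW1 : ε = -1 → -(x * (1 + H)) ≤ W)
    (hW2 : ε = 1 → -(x * H) ≤ W) (hWl : -ω ≤ W) :
    G * (a + ζ + ε * x) ≤ (1 + W') * (a - 2 + W) := by
  have hG := P.G0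
  have p1 := P.ωG
  have p2 := P.a15
  have p3 := P.bω
  have p4 := P.H0
  have p5 := P.beb
  have p6 := P.b0
  have hbe : G ≤ 1 - be := by nlinarith
  have s1 : G * ζ ≤ G * W' := mul_le_mul_of_nonneg_left hζ hG.le
  have s2 : 0 ≤ (W' + be) * (a - 2 + W - G) := mul_nonneg (by linarith) (by linarith)
  have s3 : 0 ≤ (1 - be - G) * (a - a1) := mul_nonneg (by linarith) (by linarith)
  rcases hε with h | h
  · have hW := hW2 h
    rw [h]
    have s4 := mul_le_mul_of_nonneg_left hW (by linarith : 0 ≤ 1 - be)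
    have s5 : 0 ≤ (b - x) * ((1 - be) * H + G) :=
      mul_nonneg (by linarith) (by have := mul_nonneg (by linarith : 0 ≤ 1 - be) p4; linarith)
    have := P.n2
    linarith
  · have hW := hW1 h
    rw [h]
    have s4 := mul_le_mul_of_nonneg_left hW (by linarith : 0 ≤ 1 - be)
    have s5 : 0 ≤ (b - x) * ((1 - be) * (1 + H) - G) :=
      mul_nonneg (by linarith) (by have := mul_nonneg (by linarith : 0 ≤ 1 - be) p4; linarith)
    have := P.n1
    linarith

lemma vert3 (P : Par b a0 a1 be Q H ω G) (ha : a1 ≤ a) (hε : ε = 1 ∨ ε = -1)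
    (hx0 : 0 ≤ x) (hx : x ≤ b) (hζ : ζ ≤ W') (hζb : -b ≤ ζ) 
    (hW : (-(x * H) ≤ W) ∨ (ε = -1 ∧ x ≤ be ∧ -(x * (1 + H)) ≤ W)) :
    G * (a + ζ + ε * x) ≤ (1 + W) * (a - 2 + W') := by
  have hG := P.G0
  have p1 := P.ωG
  have p2 := P.a15
  have p3 := P.bω
  have p4 := P.H0
  have p5 := P.beb
  have p6 := P.b0
  have p7 := P.b3
  have hWl : -ω ≤ W := by
    rcases hW with h | ⟨_, _, h⟩ <;> nlinarith
  have s1 : (1 + W) * (a - 2 + ζ) ≤ (1 + W) * (a - 2 + W') :=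
    mul_le_mul_of_nonneg_left (by linarith) (by linarith)
  have s2 : 0 ≤ (1 + W - G) * (ζ + b) := mul_nonneg (by linarith) (by linarith)
  have s3 : 0 ≤ (1 + W - G) * (a - a1) := mul_nonneg (by linarith) (by linarith)
  have key : G * (a1 - b + ε * x) ≤ (1 + W) * (a1 - 2 - b) := by
    rcases hW with h | ⟨h1, h2, h⟩
    · have s4 : G * (a1 - b + ε * x) ≤ G * a1 := by
        refine mul_le_mul_of_nonneg_left ?_ hG.le
        rcases hε with h | h <;> rw [h] <;> linarith
      have s5 : (1 - b * H) * (a1 - 2 - b) ≤ (1 + W) * (a1 - 2 - b) :=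
        mul_le_mul_of_nonneg_right (by nlinarith) (by linarith)
      have := P.n3
      linarith
    · rw [h1]
      have s5 : (1 - x * (1 + H)) * (a1 - 2 - b) ≤ (1 + W) * (a1 - 2 - b) :=
        mul_le_mul_of_nonneg_right (by linarith) (by linarith)
      have s6 : 0 ≤ (be - x) * ((1 + H) * (a1 - 2 - b) - G) :=
        mul_nonneg (by linarith) (by
          have := mul_nonneg p4 (by linarith : 0 ≤ a1 - 2 - b)
          nlinarith)
      have := P.n4
      linarith
  linarith

/-- crude vertex -/
lemma vertc {s A B1 : ℝ} (hG : 0 < G) (hb : ζ + ε * x ≤ 2 * b) (hs : G ≤ 1 - s) 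
    (ha : a1 ≤ a) (hB : B1 ≤ a1) (n : G * (a1 + 2 * b) ≤ (1 - s) * (a1 - B1))
    {f g : ℝ} (hf : 1 - s ≤ f) (hg : a - B1 ≤ g) (_hA : A = 0) :
    G * (a + ζ + ε * x) ≤ f * g := by
  have s1 : (1 - s) * (a - B1) ≤ f * g := mul_le_mul hf hg (by linarith) (by linarith)
  have s2 : 0 ≤ (1 - s - G) * (a - a1) := mul_nonneg (by linarith) (by linarith)
  have s3 : G * (ζ + ε * x) ≤ G * (2 * b) := mul_le_mul_of_nonneg_left hb hG.le
  linarith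

end real

namespace CF
variable (c : CF)

set_option maxHeartbeats 1600000 in
lemma star_cell {R a0 a1 be Q H ω G : ℝ} (P : Par (bR R) a0 a1 be Q H ω G) {k0 : ℕ}
    (hT : c.Tail R k0) (h0 : ∀ k, k0 ≤ k → Even (c.a k) → a0 ≤ c.a k)
    (h1 : ∀ k, k0 ≤ k → Odd (c.a k) → a1 ≤ c.a k) {t : ℕ → ℤ} {v : ℕ → ℝ} (hs : c.Star t v)
    {u : ℕ → ℝ} (k : ℕ) (hk : k0 ≤ k) (hk1 : 1 ≤ k) (hI : c.Inv be H ω t u k) :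
    c.Cell t u v G k := by
  have hx := hT.hx k hk
  have hx0 := (c.x_bd k).1
  have hz := hT.hT (k + 1) (by omega)
  have hz0 := c.T_pos (k + 1)
  have hv := hs.v_abs (k + 1)
  have hzr := c.T_rec (k + 1)
  have hz2 := hT.hT (k + 2) (by omega)
  have hz20 := c.T_pos (k + 2)
  have hb0 := P.b0
  have hb3 := P.b3
  have hQG := P.QG
  have hωG := P.ωG
  have hG0 := P.G0
  have hH0 := P.H0
  have hH3 := P.H3
  have hup := hI.up
  have hom := hI.om
  have hbω := P.bω
  set z := c.T (k + 1) with hzdef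
  set x := c.x k with hxdef
  have hvn := abs_nonneg (v (k + 1))
  have hun := abs_nonneg (u k)
  -- bounds for z + |v|
  have hq : z + |v (k + 1)| ≤ Q ∧ -be ≤ |v (k + 1)| - z := by
    rcases Int.even_or_odd (c.a (k + 1 + 1)) with hev | hod
    · have ha := h0 (k + 1 + 1) (by omega) hev
      have hv2 := hs.v_even (k + 1) hev
      have hde : a0 - bR R ≤ c.a (k + 1 + 1) + c.e (k + 1 + 2) * c.T (k + 1 + 1) := by
        rcases c.eR (k + 1 + 2) with h | h <;> rw [h] <;> linarith
      have hzbe : z ≤ be := by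
        have := P.be_a0
        have h5 := P.a04
        by_contra hc
        push Not at hc
        nlinarith
      have := P.Qbe
      constructor
      · nlinarith
      · linarith
    · have ha := h1 (k + 1 + 1) (by omega) hod
      have hv2 := hs.v_odd (k + 1) hod
      have hde : a1 - bR R ≤ c.a (k + 1 + 1) + c.e (k + 1 + 2) * c.T (k + 1 + 1) := by
        rcases c.eR (k + 1 + 2) with h | h <;> rw [h] <;> linarith
      have hzQ : 2 * z ≤ Q := by
        have := P.Q_a1
        have h5 := P.a15
        by_contra hc
        push Not at hc
        nlinarith
      have := P.bb
      constructor
      · linarith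
      · nlinarith
  have hQ0 : 0 ≤ Q := by linarith
  have hω0 : 0 ≤ ω := by linarith
  intro s hs1 I hIodd
  have hsR : (s : ℝ) = 1 ∨ (s : ℝ) = -1 := by rcases hs1 with h | h <;> rw [h] <;> simp
  have hsu : |(s : ℝ) * u k| = |u k| := by
    rcases hsR with h | h <;> rw [h] <;> simp
  have hsv : |(s : ℝ) * v (k + 1)| = |v (k + 1)| := by
    rcases hsR with h | h <;> rw [h] <;> simp
  obtain ⟨U, hU⟩ : ∃ U : ℝ, U = s * u k := ⟨_, rfl⟩
  obtain ⟨V, hV⟩ : ∃ V : ℝ, V = s * v (k + 1) := ⟨_, rfl⟩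
  rw [← hU] at hsu
  rw [← hV] at hsv
  rw [← hU, ← hV]
  rw [← hsu] at hup hom
  rw [← hsv] at hv hq
  have hη := c.eR (k + 2)
  have hε := c.eR (k + 1)
  set η : ℝ := (c.e (k + 2) : ℝ)
  set ε : ℝ := (c.e (k + 1) : ℝ)
  have hU1 := le_abs_self U
  have hU2 := neg_abs_le U
  have hV1 := le_abs_self V
  have hV2 := neg_abs_le V
  have hSdef : c.S k = c.a (k + 1) + η * z + ε * x := rfl
  have hWom : |ε * (x - U)| ≤ ω := by
    rw [abs_le]
    rcases hε with h | h <;> rw [h] <;> constructor <;> linarith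
  have hWQ : |η * z + V| ≤ Q := by
    rw [abs_le]
    rcases hη with h | h <;> rw [h] <;> constructor <;> linarith
  have hSb : η * z + ε * x ≤ 2 * bR R := by
    rcases hε with h | h <;> rcases hη with h' | h' <;> rw [h, h'] <;> linarith
  rw [hSdef]
  rcases Int.even_or_odd (c.a (k + 1)) with hev | hod
  · -- even partial quotient
    have ha := h0 (k + 1) (by omega) hev
    have hte := hs.t_even k hev
    have ha4 := P.a04
    rw [hte, mul_zero, add_zero]
    have hm2 : 1 / (2 + H) ≤ 1 / 2 := by
      apply one_div_le_one_div_of_le <;> linarith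
    have hB4 : 4 ≤ c.a (k + 1) := by
      have : (4 : ℝ) ≤ c.a (k + 1) := by linarith
      exact_mod_cast this
    have hmp : 1 / (2 + H) * (x + |U|) ≤ x := by
      rw [div_mul_eq_mul_div, div_le_iff₀ (by linarith)]; linarith
    have hnq : 1 / 2 * (z + |V|) ≤ z := by linarith
    have hW1 : -(x + |U|) + (1 + ε) * x ≤ ε * (x - U) := by
      rcases hε with h | h <;> rw [h] <;> linarith
    have hW1' : -(z + |V|) + (1 + η) * z ≤ η * z + V := by
      rcases hη with h | h <;> rw [h] <;> linarith
    have tb := P.t0b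
    have ta := P.t0a
    have ta' : G * (a0 - 1 / (2 + H) * ω - 1 / 2 * Q) ≤ (1 - ω) * (a0 - 1 - Q) := by linarith
    refine cell_line hev (by omega) (by linarith) (by linarith) ?_ ?_ ?_ ?_ I hIodd
    · exact vert0 hε hη hx0 hz0.le hW1 hW1' hom hq.1 hmp hnq hm2 le_rfl ha ha4 hG0 hQG hωG tb
    · exact vert0' hε hη hx0 hz0.le hx hz hb3 hWom hWQ hm2 le_rfl ha ha4 hG0 hQG hωG tb
    · have := vert0 hη hε hz0.le hx0 hW1' hW1 hq.1 hom hnq hmp le_rfl hm2 ha ha4 hG0 hωG hQG ta'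
      linarith
    · have := vert0' hη hε hz0.le hx0 hz hx hb3 hWQ hWom le_rfl hm2 ha ha4 hG0 hωG hQG ta'
      linarith
  · -- odd partial quotient
    have ha := h1 (k + 1) (by omega) hod
    have ha5 := P.a15
    have haZ : 5 ≤ c.a (k + 1) := by
      have : (5 : ℝ) ≤ c.a (k + 1) := by linarith
      exact_mod_cast this
    have hto := hs.t_odd k hod
    have htv := hs.tv k hod
    have hst : s * t (k + 1) = 1 ∨ (s * t (k + 1) = -1 ∧ s = - t (k + 1)) := by
      rcases hto with h | h <;> rcases hs1 with h' | h' <;> rw [h, h'] <;> simp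
    have hWom' := abs_le.mp hWom
    have hWQ' := abs_le.mp hWQ
    rcases hst with hst | ⟨hst, hst'⟩
    · rw [hst]
      have n7 := P.n7
      have n8 := P.n8
      refine cell_line (hod.add_odd odd_one) (by omega) (by linarith) (by linarith)
        ?_ ?_ ?_ ?_ I hIodd <;> push_cast
      · exact vertc (A := 0) hG0 hSb hQG ha (by linarith) n7 (by linarith) (by linarith) rfl
      · exact vertc (A := 0) hG0 hSb hQG ha (by linarith) n7 (by linarith) (by linarith) rfl
      · exact vertc (A := 0) hG0 hSb hωG ha (by linarith) n8 (by linarith) (by linarith) rfl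
      · exact vertc (A := 0) hG0 hSb hωG ha (by linarith) n8 (by linarith) (by linarith) rfl
    · rw [hst]
      have hst'R : (s : ℝ) = - t (k + 1) := by rw [hst']; push_cast; ring
      have hVn : V = |V| := by
        symm; apply abs_of_nonneg; rw [hV, hst'R]; linarith
      have hζ : η * z ≤ η * z + V := by linarith [abs_nonneg V]
      have hζb : -bR R ≤ η * z := by rcases hη with h | h <;> rw [h] <;> linarith
      have hW'be : -be ≤ η * z + V := by
        rw [hVn]
        have := P.be0
        have := abs_nonneg V
        rcases hη with h | h <;> rw [h] <;> linarith
      -- the two kinds of bounds on W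
      have hWcases : (|ε * (x - U)| ≤ x * H) ∨ (|U| ≤ x * H ∧ x ≤ be) := by
        rcases Int.even_or_odd (c.a k) with hev' | hod'
        · right
          rw [hsu]; exact hI.even hev'
        · left
          obtain ⟨i1, i2⟩ := hI.odd hod'
          obtain ⟨j, rfl⟩ : ∃ j, k = j + 1 := ⟨k - 1, by omega⟩
          have hadj := hs.adj j hod' hod
          have hUn : |U| = U := by
            apply abs_of_nonneg
            rw [hU, hst'R, hadj]
            push_cast
            linarith
          rw [← hsu, ← hxdef] at i2
          rw [abs_le]
          rcases hε with h | h <;> rw [h] <;> constructor <;> linarith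
      have hWb : |ε * (x - U)| ≤ x * (1 + H) := by
        rcases hWcases with h | ⟨h, _⟩
        · linarith
        · rw [abs_le]
          rcases hε with h | h <;> rw [h] <;> constructor <;> linarith
      have hxb : x * (1 + H) ≤ bR R * (1 + H) := mul_le_mul_of_nonneg_right hx (by linarith)
      have hWb' := abs_le.mp hWb
      have hodd : Even (c.a (k + 1) + -1) := hod.add_odd (by decide)
      refine cell_line hodd (by omega) (by linarith) (by linarith)
        ?_ ?_ ?_ ?_ I hIodd <;> push_cast
      · have := vert1 P ha hε hx0 hx hζ hW'be (W := ε * (x - U)) (fun _ => hWb'.1) (fun h => by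
          rcases hWcases with h' | ⟨h', _⟩
          · exact (abs_le.mp h').1
          · rw [h]; linarith) (by linarith)
        linarith
      · exact vertc (A := 0) hG0 hSb hQG ha (by linarith) P.n5 (by linarith) (by linarith) rfl
      · have := vert3 P ha hε hx0 hx hζ hζb (W := ε * (x - U)) (by
          rcases hWcases with h' | ⟨h', h2⟩
          · left; exact (abs_le.mp h').1
          · rcases hε with h | h
            · left; rw [h]; linarith
            · right; exact ⟨h, h2, hWb'.1⟩)
        linarith
      · exact vertc (A := 0) hG0 hSb (by linarith) ha (by linarith) P.n6 (by linarith)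
          (by linarith) rfl

/-- The lower bound for `M(α, γ_*)`. -/
lemma star_lower {α γ R a0 a1 be Q H ω G : ℝ} (P : Par (bR R) a0 a1 be Q H ω G) {k0 : ℕ}
    (hα : c.T 0 = α) (hT : c.Tail R k0) (h0 : ∀ k, k0 ≤ k → Even (c.a k) → a0 ≤ c.a k)
    (h1 : ∀ k, k0 ≤ k → Odd (c.a k) → a1 ≤ c.a k) {t : ℕ → ℤ} {v : ℕ → ℝ} (hs : c.Star t v)
    (hrep : c.Rep γ t v) : G / 4 ≤ Mval α γ := by
  let u : ℕ → ℝ := fun k => Nat.rec 0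
    (fun k w => if k0 ≤ k then c.x (k + 1) * (t (k + 1) - c.e (k + 1) * w) else 0) k
  have hu0 : u k0 = 0 := by
    rcases k0 with _ | k
    · rfl
    · change (if k + 1 ≤ k then _ else _) = (0 : ℝ)
      rw [if_neg (by omega)]
  have hu : ∀ k, k0 ≤ k → u (k + 1) = c.x (k + 1) * (t (k + 1) - c.e (k + 1) * u k) := by
    intro k hk
    change (if k0 ≤ k then c.x (k + 1) * (t (k + 1) - c.e (k + 1) * u k) else 0) = _
    rw [if_pos hk]
  have hinv : ∀ k, k0 + 1 ≤ k → c.Inv be H ω t u k := by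
    intro k hk
    induction k, hk using Nat.le_induction with
    | base => exact c.inv_step P hT h0 h1 hs hu k0 le_rfl (Or.inl hu0)
    | succ k hk ih => exact c.inv_step P hT h0 h1 hs hu k (by omega) (Or.inr ⟨ih, by omega⟩)
  refine c.lower_of_cells (R := R) (k0 := k0) (k1 := k0 + 1) (H := H) (u := u) hα hT hrep hu
    (by omega) P.H3 (fun k hk => (hinv k hk).uH) hs.v_abs ?_ P.G0 ?_ ?_
  · intro k
    rcases Int.even_or_odd (c.a (k + 1)) with h | h
    · rw [hs.t_even k h]; simp
    · rcases hs.t_odd k h with h | h <;> rw [h] <;> simp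
  · have := P.ωG
    have := P.Hω
    have := P.H0
    linarith
  · intro k hk
    exact c.star_cell P hT h0 h1 hs k (by omega) (by omega) (hinv k hk)

end CF

lemma par_odd_aux (s : ℝ) (hs : 0 ≤ s) :
    Par ((4 + s) / (s ^ 2 + 9 * s + 19)) (6 + s) (5 + s)
      ((s ^ 2 + 9 * s + 19) / (s ^ 3 + 15 * s ^ 2 + 72 * s + 110))
      (2 * (4 + s) / (s ^ 2 + 9 * s + 19)) ((6 + s) / (5 + s) ^ 2)
      ((s ^ 2 * 2 + 21 * s + 54) / (5 + s) ^ 3)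
      ((s ^ 4 + 17 * s ^ 3 + 107 * s ^ 2 + 292 * s + 290) / (5 + s) ^ 4) where
  b0 := by positivity
  b3 := by
    field_simp
    rw [← sub_nonneg]; ring_nf; positivity
  be0 := by positivity
  beb := by
    field_simp
    rw [← sub_nonneg]; ring_nf; positivity
  a04 := by linarith
  a15 := by linarith
  be_a0 := by
    field_simp
    rw [← sub_nonneg]; ring_nf; positivity
  Q_a1 := by
    field_simp
    rw [← sub_nonneg]; ring_nf; positivity
  Qbe := by
    field_simp
    rw [← sub_nonneg]; ring_nf; positivity
  QG := by
    field_simp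
    rw [← sub_nonneg]; ring_nf; positivity
  H0 := by positivity
  H3 := by
    field_simp
    rw [← sub_nonneg]; ring_nf; positivity
  Hω := by
    field_simp
    rw [← sub_nonneg]; ring_nf; positivity
  ωG := by
    field_simp
    rw [← sub_nonneg]; ring_nf; positivity
  bω := by
    field_simp
    rw [← sub_nonneg]; ring_nf; positivity
  bb := by
    field_simp
    rw [← sub_nonneg]; ring_nf; positivity
  G0 := by positivity
  inv1 := by
    field_simp
    rw [← sub_nonneg]; ring_nf; positivity
  inv2 := by
    field_simp
    rw [← sub_nonneg]; ring_nf; positivity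
  inv3 := by
    field_simp
    rw [← sub_nonneg]; ring_nf; positivity
  inv4 := by
    field_simp
    rw [← sub_nonneg]; ring_nf; positivity
  t0a := by
    field_simp
    rw [← sub_nonneg]; ring_nf; positivity
  t0b := by
    field_simp
    rw [← sub_nonneg]; ring_nf; positivity
  n1 := by
    field_simp
    rw [← sub_nonneg]; ring_nf; positivity
  n2 := by
    field_simp
    rw [← sub_nonneg]; ring_nf; positivity
  n3 := by
    field_simp
    rw [← sub_nonneg]; ring_nf; positivity
  n4 := by
    field_simp
    rw [← sub_nonneg]; ring_nf; positivity
  n5 := by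
    field_simp
    rw [← sub_nonneg]; ring_nf; positivity
  n6 := by
    field_simp
    rw [← sub_nonneg]; ring_nf; positivity
  n7 := by
    field_simp
    rw [← sub_nonneg]; ring_nf; positivity
  n8 := by
    field_simp
    rw [← sub_nonneg]; ring_nf; positivity

lemma par_even_aux (s : ℝ) (hs : 0 ≤ s) :
    Par ((3 + s) / (s ^ 2 + 7 * s + 11)) (4 + s) (5 + s)
      ((3 + s) / (s ^ 2 + 7 * s + 11))
      (2 * (s ^ 2 + 7 * s + 11) / (s ^ 3 + 12 * s ^ 2 + 45 * s + 52)) (1 / (4 + s))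
      ((2 * s + 9) / ((4 + s) * (5 + s)))
      ((5 + 2 * s) ^ 2 / (4 * (4 + s) ^ 2)) where
  b0 := by positivity
  b3 := by
    field_simp
    rw [← sub_nonneg]; ring_nf; positivity
  be0 := by positivity
  beb := le_rfl
  a04 := by linarith
  a15 := by linarith
  be_a0 := by
    field_simp
    rw [← sub_nonneg]; ring_nf; positivity
  Q_a1 := by
    field_simp
    rw [← sub_nonneg]; ring_nf; positivity
  Qbe := by
    field_simp
    rw [← sub_nonneg]; ring_nf; positivity
  QG := by
    field_simp
    rw [← sub_nonneg]; ring_nf; positivity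
  H0 := by positivity
  H3 := by
    field_simp
    rw [← sub_nonneg]; ring_nf; positivity
  Hω := by
    field_simp
    rw [← sub_nonneg]; ring_nf; positivity
  ωG := by
    field_simp
    rw [← sub_nonneg]; ring_nf; positivity
  bω := by
    field_simp
    rw [← sub_nonneg]; ring_nf; positivity
  bb := by
    field_simp
    rw [← sub_nonneg]; ring_nf; positivity
  G0 := by positivity
  inv1 := by
    field_simp
    rw [← sub_nonneg]; ring_nf; positivity
  inv2 := by
    field_simp
    rw [← sub_nonneg]; ring_nf; positivity
  inv3 := by
    field_simp
    rw [← sub_nonneg]; ring_nf; positivity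
  inv4 := by
    field_simp
    rw [← sub_nonneg]; ring_nf; positivity
  t0a := by
    field_simp
    rw [← sub_nonneg]; ring_nf; positivity
  t0b := by
    field_simp
    rw [← sub_nonneg]; ring_nf; positivity
  n1 := by
    field_simp
    rw [← sub_nonneg]; ring_nf; positivity
  n2 := by
    field_simp
    rw [← sub_nonneg]; ring_nf; positivity
  n3 := by
    field_simp
    rw [← sub_nonneg]; ring_nf; positivity
  n4 := by
    field_simp
    rw [← sub_nonneg]; ring_nf; positivity
  n5 := by
    field_simp
    rw [← sub_nonneg]; ring_nf; positivity
  n6 := by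
    field_simp
    rw [← sub_nonneg]; ring_nf; positivity
  n7 := by
    field_simp
    rw [← sub_nonneg]; ring_nf; positivity
  n8 := by
    field_simp
    rw [← sub_nonneg]; ring_nf; positivity

lemma par_odd {R : ℝ} (hR : 5 ≤ R) : ∃ be Q H ω, Par (CF.bR R) (R + 1) R be Q H ω
    (1 - 3 / R + 2 / R ^ 2 - 3 / R ^ 3 + 5 / R ^ 4) := by
  obtain ⟨s, rfl⟩ : ∃ s, R = 5 + s := ⟨R - 5, by ring⟩
  have hs : 0 ≤ s := by linarith
  have h := par_odd_aux s hs
  have e1 : CF.bR (5 + s) = (4 + s) / (s ^ 2 + 9 * s + 19) := by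
    unfold CF.bR
    congr 1 <;> ring
  have e2 : 5 + s + 1 = 6 + s := by ring
  have e3 : 1 - 3 / (5 + s) + 2 / (5 + s) ^ 2 - 3 / (5 + s) ^ 3 + 5 / (5 + s) ^ 4 = (s ^ 4 + 17 * s ^ 3 + 107 * s ^ 2 + 292 * s + 290) / (5 + s) ^ 4 := by
    field_simp
    ring
  rw [e1, e2, e3]
  exact ⟨_, _, _, _, h⟩

lemma par_even {R : ℝ} (hR : 4 ≤ R) : ∃ be Q H ω, Par (CF.bR R) R (R + 1) be Q H ω
    (1 - 3 / R + 9 / (4 * R ^ 2)) := by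
  obtain ⟨s, rfl⟩ : ∃ s, R = 4 + s := ⟨R - 4, by ring⟩
  have hs : 0 ≤ s := by linarith
  have h := par_even_aux s hs
  have e1 : CF.bR (4 + s) = (3 + s) / (s ^ 2 + 7 * s + 11) := by
    unfold CF.bR
    congr 1 <;> ring
  have e2 : 4 + s + 1 = 5 + s := by ring
  have e3 : 1 - 3 / (4 + s) + 9 / (4 * (4 + s) ^ 2) = (5 + 2 * s) ^ 2 / (4 * (4 + s) ^ 2) := by
    field_simp
    ring
  rw [e1, e2, e3]
  exact ⟨_, _, _, _, h⟩

namespace CF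

variable (c : CF)

lemma S_pos (k : ℕ) : 0 < c.S k := by
  have h1 := c.qDS k
  have h2 := c.q_pos k
  have h3 := c.D_pos (k + 1)
  have h4 : 0 < c.q k * c.D (k + 1) := by positivity
  by_contra h
  push Not at h
  nlinarith

/-- Upper bounds: lattice points near the line give inequalities. -/
lemma points {α γ m : ℝ} {t : ℕ → ℤ} {u v : ℕ → ℝ} {k0 : ℕ} (hα : c.T 0 = α)
    (hγ : ¬∃ p q : ℤ, γ = (p : ℝ) + (q : ℝ) * α) (hrep : c.Rep γ t v)
    (hu : ∀ k, k0 ≤ k → u (k + 1) = c.x (k + 1) * (t (k + 1) - c.e (k + 1) * u k))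
    (hv : ∀ k, |v k| ≤ 3 / 2) (hm : m < Mval α γ) :
    ∃ K, k0 ≤ K ∧ ∀ k, K ≤ k → ∀ s : ℤ, (s = 1 ∨ s = -1) → ∀ I : ℤ, Odd I →
      |(I : ℝ)| ≤ c.a (k + 1) + 3 →
      4 * m * c.S k ≤ |(((c.a (k + 1) + s * t (k + 1) : ℤ) : ℝ) +
        c.e (k + 1) * (c.x k - s * u k) + I) *
        (I - (c.e (k + 2) * c.T (k + 1) + s * v (k + 1)))| := by
  subst hα
  obtain ⟨κ, hκ⟩ := c.rep_prod hrep hu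
  obtain ⟨ρ, hρ, hρ'⟩ := M_up κ hγ hm
  obtain ⟨n, hn⟩ := exists_pow_lt_of_lt_one (by positivity : 0 < ρ / 5)
    (by norm_num : (1 / 2 : ℝ) < 1)
  refine ⟨max k0 n, le_max_left _ _, ?_⟩
  intro k hk
  have hk0 : k0 ≤ k := le_trans (le_max_left _ _) hk
  have hkn : n ≤ k := le_trans (le_max_right _ _) hk
  have hD : 5 * c.D k < ρ := by
    have h1 := c.D_le k
    have h2 : (1 / 2 : ℝ) ^ k ≤ (1 / 2) ^ n := pow_le_pow_of_le_one (by norm_num) (by norm_num) hkn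
    linarith
  have hS := c.S_pos k
  have key : ∀ J : ℤ, (J = 1 ∨ J = -1) → ∀ I : ℤ, Odd I → |(I : ℝ)| ≤ c.a (k + 1) + 3 →
      4 * m * c.S k ≤ |(J * (c.a (k + 1) + c.e (k + 1) * c.x k) + I + t (k + 1)
        - c.e (k + 1) * u k) * (I - J * c.e (k + 2) * c.T (k + 1) - v (k + 1))| := by
    intro J hJ I hI hIa
    obtain ⟨N, p, hNp⟩ := c.IJ_surj hrep (k + 1) I J hI (by
      rcases hJ with rfl | rfl <;> decide)
    obtain ⟨-, hY, hprod⟩ := hκ N p k hk0 I J hNp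
    rw [← hprod]
    apply mul_le_mul_of_nonneg_right _ hS.le
    apply hρ'
    rw [hY, abs_mul, abs_of_pos (c.D_pos _)]
    have hD1 := c.D_pos (k + 1)
    have hDr := c.D_rec k
    have hT0 := c.T_pos (k + 1)
    have hT1 := c.T_lt (k + 1)
    have ha := c.aR k
    have hY2 : |(I : ℝ) - J * c.e (k + 2) * c.T (k + 1) - v (k + 1)| ≤ c.a (k + 1) + 5 := by
      have hv1 := abs_le.1 (hv (k + 1))
      have hI1 := abs_le.1 hIa
      rw [abs_le]
      rcases hJ with rfl | rfl <;> rcases c.eR (k + 2) with e2 | e2 <;> rw [e2] <;> push_cast <;>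
        constructor <;> linarith
    have h5 : (c.a (k + 1) : ℝ) + 5 ≤ 5 * (c.a (k + 1) + c.e (k + 2) * c.T (k + 1)) := by
      rcases c.eR (k + 2) with e2 | e2 <;> rw [e2] <;> linarith
    have h6 := mul_le_mul_of_nonneg_left (hY2.trans h5) hD1.le
    linarith
  rintro s (rfl | rfl) I hI hIa
  · refine (key 1 (Or.inl rfl) I hI hIa).trans (le_of_eq ?_)
    congr 1
    push_cast; ring
  · refine (key (-1) (Or.inr rfl) (-I) hI.neg (by push_cast; rwa [abs_neg])).trans (le_of_eq ?_)
    congr 1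
    push_cast; ring

/-- expansion data -/
structure Exp (g : ℕ → ℝ) (cc : ℕ → ℤ) : Prop where
  g0 : ∀ k, 0 ≤ g k
  g1 : ∀ k, g k < 1
  c0 : ∀ k, 0 ≤ cc (k + 1)
  rc : ∀ k, g k = c.T k * (cc (k + 1) + g (k + 1))

variable {c}

lemma Exp.lt {g : ℕ → ℝ} {cc : ℕ → ℤ} (h : c.Exp g cc) (k : ℕ) :
    (cc (k + 1) : ℝ) + g (k + 1) < c.a (k + 1) + c.e (k + 2) * c.T (k + 1) := by
  have h1 := h.g1 k
  rw [h.rc k, ← c.T_rec k] at h1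
  exact lt_of_mul_lt_mul_left h1 (c.T_pos k).le

lemma Exp.le {g : ℕ → ℝ} {cc : ℕ → ℤ} (h : c.Exp g cc) (k : ℕ) : cc (k + 1) ≤ c.a (k + 1) := by
  have h1 := h.lt k
  have h2 := h.g0 (k + 1)
  have h3 := c.T_pos (k + 1)
  have h4 := c.T_lt (k + 1)
  have h5 : (cc (k + 1) : ℝ) < c.a (k + 1) + 1 := by
    rcases c.eR (k + 2) with e2 | e2 <;> rw [e2] at h1 <;> linarith
  have h6 : cc (k + 1) < c.a (k + 1) + 1 := by exact_mod_cast h5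
  omega

/-- if `c_{k+1} ≥ a - 1 + …` then `g_k` is close to one. -/
lemma Exp.close {g : ℕ → ℝ} {cc : ℕ → ℤ} (h : c.Exp g cc) (k : ℕ)
    (h1 : (c.a (k + 1) : ℝ) + c.e (k + 2) * c.T (k + 1) - 1 ≤ cc (k + 1) + g (k + 1)) :
    1 - c.T k ≤ g k := by
  have h2 := mul_le_mul_of_nonneg_left h1 (c.T_pos k).le
  rw [h.rc k]
  have h3 := c.T_rec k
  linarith

lemma Exp.P_bd {R : ℝ} {k0 : ℕ} (hT : c.Tail R k0) {g : ℕ → ℝ} {cc : ℕ → ℤ} (h : c.Exp g cc)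
    {P : ℕ → ℝ} (hP0 : P k0 = 0)
    (hP : ∀ k, k0 ≤ k → P (k + 1) = c.x (k + 1) * (cc (k + 1) - c.e (k + 1) * P k)) :
    ∀ k, k0 ≤ k → (c.e (k + 1) = -1 → 1 - c.T k ≤ g k → P k ≤ 1 - c.x k) ∧
      -(c.x k * (1 + bR R)) ≤ P k ∧ P k ≤ 1 + c.x k ∧ (1 ≤ cc (k + 1) → P k ≤ 1) := by
  have hb0 := bR_pos hT.hR
  have hb3 := bR_le3 hT.hR
  set b := bR R with hb
  intro k hk
  induction k, hk using Nat.le_induction with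
  | base =>
    have hx := c.x_bd k0
    rw [hP0]
    have := mul_nonneg hx.1 (by linarith : 0 ≤ 1 + b)
    exact ⟨fun _ _ => by linarith [hx.2], by linarith, by linarith [hx.1], fun _ => by norm_num⟩
  | succ k hk ih =>
    obtain ⟨ih1, ih2, ih3, ih4⟩ := ih
    have hx0 := (c.x_bd k).1
    have hxb := hT.hx k hk
    have hxp := c.x_pos k
    have hxs := c.x_succ k
    have hrec := hP k hk
    have hlt := h.lt k
    have hle := h.le k
    have hc0 := h.c0 k
    have hg0 := h.g0 (k + 1)
    have hz0 := c.T_pos (k + 1)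
    have hz1 := c.T_lt (k + 1)
    set x := c.x k with hx
    set x' := c.x (k + 1) with hx'
    set z := c.T (k + 1) with hz
    set a := c.a (k + 1) with ha
    set d := cc (k + 1) with hd
    have hdle : (d : ℝ) ≤ a := by exact_mod_cast hle
    have hd0 : (0 : ℝ) ≤ d := by exact_mod_cast hc0
    have hxb2 : x * (1 + b) ≤ 2 * x := by nlinarith
    have hxb3 : x * (1 + b) ≤ b * (1 + b) := mul_le_mul_of_nonneg_right hxb (by linarith)
    -- upper bounds reduce to bounds of the numerator
    have up : ∀ B : ℝ, d - c.e (k + 1) * P k ≤ (a + c.e (k + 1) * x) + B →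
        P (k + 1) ≤ 1 + B * x' := by
      intro B hB
      have := mul_le_mul_of_nonneg_left hB hxp.le
      rw [hrec]
      linarith
    refine ⟨?_, ?_, ?_, ?_⟩
    · intro he hg
      rw [he] at hlt
      have h2 : (d : ℝ) < a - 1 := by push_cast at hlt; linarith
      have h3 : d ≤ a - 2 := by
        have : (d : ℝ) < ((a - 1 : ℤ) : ℝ) := by push_cast; exact h2
        have : d < a - 1 := by exact_mod_cast this
        omega
      have h4 : (d : ℝ) ≤ a - 2 := by exact_mod_cast h3
      have := up (-1) (by
        rcases c.eR (k + 1) with e1 | e1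
        · rw [e1]; linarith
        · rw [e1]
          rcases h3.lt_or_eq with h5 | h5
          · have : (d : ℝ) ≤ a - 3 := by
              have : d ≤ a - 3 := by omega
              exact_mod_cast this
            linarith
          · have hcl := h.close k (by
              rw [← hd, h5, ← ha, he]; push_cast; linarith)
            have := ih1 (by exact_mod_cast e1) hcl
            linarith)
      linarith
    · rw [hrec]
      have h1 : -(1 + b) ≤ d - c.e (k + 1) * P k := by
        rcases c.eR (k + 1) with e1 | e1 <;> rw [e1] <;> nlinarith
      have := mul_le_mul_of_nonneg_left h1 hxp.le
      linarith
    · have := up 1 (by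
        rcases c.eR (k + 1) with e1 | e1
        · rw [e1]; linarith
        · rw [e1]
          rcases hle.lt_or_eq with h5 | h5
          · have : (d : ℝ) ≤ a - 1 := by
              have : d ≤ a - 1 := by omega
              exact_mod_cast this
            linarith
          · have hcl := h.close k (by
              rw [← hd, h5, ← ha]
              rcases c.eR (k + 2) with e2 | e2 <;> rw [e2] <;> linarith)
            have := ih1 (by exact_mod_cast e1) hcl
            rw [h5]
            linarith)
      linarith
    · intro hc1
      have hgz : z ≤ g (k + 1) := by
        rw [h.rc (k + 1)]
        have h1 : (1 : ℝ) ≤ cc (k + 1 + 1) := by exact_mod_cast hc1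
        have h2 := h.g0 (k + 1 + 1)
        nlinarith
      have hd1 : d ≤ a - 1 := by
        by_contra hcon
        have : d = a := by omega
        rw [this] at hlt
        rcases c.eR (k + 2) with e2 | e2 <;> rw [e2] at hlt <;> linarith
      have hd1' : (d : ℝ) ≤ a - 1 := by exact_mod_cast hd1
      have := up 0 (by
        rcases c.eR (k + 1) with e1 | e1
        · rw [e1]; linarith
        · rw [e1]
          rcases hd1.lt_or_eq with h5 | h5
          · have : (d : ℝ) ≤ a - 2 := by
              have : d ≤ a - 2 := by omega
              exact_mod_cast this
            linarith
          · have hcl := h.close k (by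
              rw [← hd, h5, ← ha]
              push_cast
              rcases c.eR (k + 2) with e2 | e2 <;> rw [e2] <;> linarith)
            have := ih1 (by exact_mod_cast e1) hcl
            rw [h5]
            push_cast
            linarith)
      linarith

end CF

/-- Normalised data at one index. -/
structure Nrm (b a ε η x z w w' : ℝ) (A : ℤ) : Prop where
  hε : ε = 1 ∨ ε = -1
  hη : η = 1 ∨ η = -1
  x0 : 0 ≤ x
  xb : x ≤ b
  z0 : 0 ≤ z
  zb : z ≤ b
  evA : Even A
  A2 : -2 ≤ A
  w1 : ε = 1 → w ≤ 1 + 2 * x * (1 + b)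
  w2 : ε = -1 → w ≤ 1 + 2 * x
  w3 : -1 - 2 * x * (1 + b) ≤ w
  w4 : A ≤ 0 → -1 - 2 * x ≤ w
  w5 : 1 < w' → η = 1 ∧ w' ≤ 1 + 2 * z ∧ |w| ≤ 1 + 2 * x
  w6 : w' < -1 → 2 ≤ A ∧ -1 - 2 * z ≤ w' ∧ |w| ≤ 1 + 2 * x
  w7 : A = -2 → 1 < w'

/-- The four point inequalities. -/
structure Four (K w w' : ℝ) (A : ℤ) : Prop where
  f1 : K ≤ |(1 + w) * (A - 1 + w')|
  f2 : K ≤ |(1 - w) * (A + 1 + w')|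
  f3 : K ≤ |(1 + w') * (A - 1 + w)|
  f4 : K ≤ |(1 - w') * (A + 1 + w)|

lemma abs_mul_le' {p q P Q : ℝ} (hp : |p| ≤ P) (hq : |q| ≤ Q) : |p * q| ≤ P * Q := by
  rw [abs_mul]
  exact mul_le_mul hp hq (abs_nonneg _) ((abs_nonneg _).trans hp)

set_option maxHeartbeats 800000 in
lemma core {b a ε η x z w w' G M : ℝ} {A : ℤ} (h : Nrm b a ε η x z w w' A) (hb : b ≤ 3 / 11)
    (hG0 : 0 < G) (hG1 : G ≤ 1) (hM0 : 0 ≤ M) (hMA : (A : ℝ) ≤ M)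
    (C1 : 2 * b * (1 + b) * (M + 2) < G * a) (C3 : 2 * b * (M + 2) < G * (a - 2 * b))
    (C5 : 1 < G * (a - 2 * b)) (hf : Four (G * (a + η * z + ε * x)) w w' A) :
    2 ≤ A ∧ |w| ≤ 1 ∧ |w'| ≤ 1 := by
  obtain ⟨hε, hη, x0, xb, z0, zb, evA, A2, w1, w2, w3, w4, w5, w6, w7⟩ := h
  obtain ⟨f1, f2, f3, f4⟩ := hf
  have b0 : 0 ≤ b := x0.trans xb
  have hA2 : (-2 : ℝ) ≤ A := by exact_mod_cast A2
  -- lower bounds of `S`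
  have hS : a - 2 * b ≤ a + η * z + ε * x := by
    rcases hε with e | e <;> rcases hη with e' | e' <;> rw [e, e'] <;> linarith
  have hGS := mul_le_mul_of_nonneg_left hS hG0.le

  have hw'1 : w' ≤ 1 := by
    by_contra hcon
    push Not at hcon
    obtain ⟨hη1, h1, h2⟩ := w5 hcon
    have h3 : |1 - w'| ≤ 2 * z := by rw [abs_le]; constructor <;> linarith
    have h4 : |(A : ℝ) + 1 + w| ≤ M + 2 + 2 * b := by
      have h5 := abs_le.1 h2
      rw [abs_le]; constructor <;> linarith
    have h6 := f4.trans (abs_mul_le' h3 h4)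
    have h7 : G * (a + z - b) ≤ G * (a + η * z + ε * x) := by
      apply mul_le_mul_of_nonneg_left _ hG0.le
      rw [hη1]
      rcases hε with e | e <;> rw [e] <;> linarith
    have h8 : 0 ≤ (b - z) * (2 * (M + 2 + 2 * b) - G) := mul_nonneg (by linarith) (by linarith)
    have h9 : 0 ≤ b * b * M := by positivity
    nlinarith
  have hA0 : 0 ≤ A := by
    by_contra hcon
    have : A = -2 := by
      obtain ⟨r, hr⟩ := evA
      omega
    linarith [w7 this]
  have hA0' : (0 : ℝ) ≤ A := by exact_mod_cast hA0
  have hw'2 : -1 ≤ w' := by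
    by_contra hcon
    push Not at hcon
    obtain ⟨h0, h1, h2⟩ := w6 hcon
    have h0' : (2 : ℝ) ≤ A := by exact_mod_cast h0
    have h3 : |1 + w'| ≤ 2 * b := by rw [abs_le]; constructor <;> linarith
    have h4 : |(A : ℝ) - 1 + w| ≤ M + 2 * b := by
      have h5 := abs_le.1 h2
      rw [abs_le]; constructor <;> linarith
    have h6 := f3.trans (abs_mul_le' h3 h4)
    have h7 : 0 ≤ b * (2 - 2 * b) := mul_nonneg b0 (by linarith)
    linarith
  have hw1 : w ≤ 1 := by
    by_contra hcon
    push Not at hcon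
    have h4 : |(A : ℝ) + 1 + w'| ≤ M + 2 := by
      rw [abs_le]; constructor <;> linarith
    rcases hε with e | e
    · have h3 : |1 - w| ≤ 2 * x * (1 + b) := by
        have := w1 e
        rw [abs_le]; constructor <;> linarith
      have h6 := f2.trans (abs_mul_le' h3 h4)
      have h7 : G * (a + x - b) ≤ G * (a + η * z + ε * x) := by
        apply mul_le_mul_of_nonneg_left _ hG0.le
        rw [e]
        rcases hη with e | e <;> rw [e] <;> linarith
      have h8 : 0 ≤ (b - x) * (2 * (1 + b) * (M + 2) - G) :=
        mul_nonneg (by linarith) (by nlinarith [mul_nonneg b0 hM0])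
      linarith
    · have h3 : |1 - w| ≤ 2 * b := by
        have := w2 e
        rw [abs_le]; constructor <;> linarith
      have h6 := f2.trans (abs_mul_le' h3 h4)
      linarith
  have hxb : x * (1 + b) ≤ b * (1 + b) := mul_le_mul_of_nonneg_right xb (by linarith)
  have hw2 : -1 ≤ w := by
    by_contra hcon
    push Not at hcon
    rcases hA0.lt_or_eq with hA | hA
    · have h0' : (2 : ℝ) ≤ A := by
        have : 2 ≤ A := by
          obtain ⟨r, hr⟩ := evA
          omega
        exact_mod_cast this
      have h4 : |(A : ℝ) - 1 + w'| ≤ M := by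
        rw [abs_le]; constructor <;> linarith
      have h3 : |1 + w| ≤ 2 * (b * (1 + b)) := by
        rw [abs_le]; constructor <;> linarith
      have h6 := f1.trans (abs_mul_le' h3 h4)
      have h7 : G * b ≤ 1 * b := mul_le_mul_of_nonneg_right hG1 b0
      nlinarith [mul_nonneg b0 b0]
    · have h4 : |(A : ℝ) - 1 + w'| ≤ 2 := by
        rw [← hA]; push_cast
        rw [abs_le]; constructor <;> linarith
      have h3 : |1 + w| ≤ 2 * b := by
        have := w4 hA.ge
        rw [abs_le]; constructor <;> linarith
      have h6 := f1.trans (abs_mul_le' h3 h4)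
      nlinarith [mul_nonneg b0 hM0]
  refine ⟨?_, abs_le.2 ⟨hw2, hw1⟩, abs_le.2 ⟨hw'2, hw'1⟩⟩
  by_contra hcon
  have hA : A = 0 := by
    obtain ⟨r, hr⟩ := evA
    omega
  rw [hA] at f1 f2
  have g1 : 1 < |(1 + w) * (((0 : ℤ) : ℝ) - 1 + w')| := by linarith
  have g2 : 1 < |(1 - w) * (((0 : ℤ) : ℝ) + 1 + w')| := by linarith
  have e1 : |(1 + w) * (((0 : ℤ) : ℝ) - 1 + w')| = (1 + w) * (1 - w') := by
    rw [abs_mul, abs_of_nonneg (by linarith), abs_of_nonpos (by push_cast; linarith)]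
    push_cast; ring
  have e2 : |(1 - w) * (((0 : ℤ) : ℝ) + 1 + w')| = (1 - w) * (1 + w') := by
    rw [abs_mul, abs_of_nonneg (by linarith), abs_of_nonneg (by push_cast; linarith)]
    push_cast; ring
  rw [e1] at g1
  rw [e2] at g2
  have k1 : (1 + w) * (1 - w) ≤ 1 := by linarith [mul_self_nonneg w]
  have k2 : (1 + w') * (1 - w') ≤ 1 := by linarith [mul_self_nonneg w']
  have k3 : 0 ≤ (1 + w) * (1 - w) := mul_nonneg (by linarith) (by linarith)
  have k4 : 0 ≤ (1 + w') * (1 - w') := mul_nonneg (by linarith) (by linarith)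
  have k5 := mul_le_mul k1 k2 k4 (by norm_num : (0 : ℝ) ≤ 1)
  have k6 := mul_lt_mul'' g1 g2 (by norm_num) (by norm_num)
  linarith

lemma four_ineq {K w w' : ℝ} {A : ℤ} (hA : 2 ≤ A) (hw : |w| ≤ 1) (hw' : |w'| ≤ 1)
    (h : Four K w w' A) :
    K ≤ (1 + w) * (A - 1 + w') ∧ K ≤ A - (w - w') ∧ K ≤ A - (w' - w) := by
  obtain ⟨f1, f2, f3, f4⟩ := h
  have hA' : (2 : ℝ) ≤ A := by exact_mod_cast hA
  rw [abs_le] at hw hw'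
  rw [abs_of_nonneg (mul_nonneg (by linarith) (by linarith))] at f1 f2 f3 f4
  exact ⟨f1, by linarith, by linarith⟩

namespace CF

variable {c : CF}

/-- All data attached to an expansion from index `k0` on. -/
structure Dat (c : CF) (R : ℝ) (k0 : ℕ) (t : ℕ → ℤ) (u v : ℕ → ℝ) : Prop where
  hT : c.Tail R k0
  hu : ∀ k, k0 ≤ k → u (k + 1) = c.x (k + 1) * (t (k + 1) - c.e (k + 1) * u k)
  hv : ∀ k, |v k| ≤ 3 / 2
  ub : ∀ k, k0 ≤ k → |u k| ≤ 2
  par : ∀ k, Even (t (k + 1) - c.a (k + 1))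
  nrm : ∀ k, k0 ≤ k → ∀ s : ℤ, (s = -1 ∧ 0 < t (k + 1)) ∨ (s = 1 ∧ t (k + 1) < 0) →
    Nrm (bR R) (c.a (k + 1)) (c.e (k + 1)) (c.e (k + 2)) (c.x k) (c.T (k + 1))
      (c.e (k + 1) * (c.x k - s * u k)) (c.e (k + 2) * c.T (k + 1) + s * v (k + 1))
      (c.a (k + 1) + s * t (k + 1))

lemma Exp.dat {R : ℝ} {k0 : ℕ} (hT : c.Tail R k0) {g : ℕ → ℝ} {cc : ℕ → ℤ} (h : c.Exp g cc) :
    ∃ u, c.Dat R k0 (fun k => 2 * cc k - (c.a k - 1 + c.e k)) u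
      (fun k => 2 * g k - 1 - c.e (k + 1) * c.T k) := by
  obtain ⟨P, hP0, hP⟩ : ∃ P : ℕ → ℝ, P k0 = 0 ∧ ∀ k, k0 ≤ k →
      P (k + 1) = c.x (k + 1) * (cc (k + 1) - c.e (k + 1) * P k) := by
    let F : ℕ → ℝ := fun n => Nat.rec 0
      (fun n p => c.x (k0 + n + 1) * (cc (k0 + n + 1) - c.e (k0 + n + 1) * p)) n
    refine ⟨fun k => F (k - k0), by simp [F], ?_⟩
    intro k hk
    obtain ⟨n, rfl⟩ := Nat.exists_eq_add_of_le hk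
    have e1 : k0 + n + 1 - k0 = n + 1 := by omega
    have e2 : k0 + n - k0 = n := by omega
    simp only [e1, e2]
    rfl
  have hPb := h.P_bd hT hP0 hP
  have hb0 := bR_pos hT.hR
  have hb3 := bR_le3 hT.hR
  refine ⟨fun k => 2 * P k - 1 + c.x k, hT, ?_, ?_, ?_, ?_, ?_⟩
  · intro k hk
    rw [hP k hk]
    have := c.x_succ k
    push_cast
    linear_combination this
  · intro k
    have h1 := h.g0 k
    have h2 := h.g1 k
    have h3 := c.T_pos k
    have h4 := c.T_lt k
    rw [abs_le]
    rcases c.eR (k + 1) with e | e <;> rw [e] <;> constructor <;> linarith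
  · intro k hk
    obtain ⟨-, h2, h3, -⟩ := hPb k hk
    have h4 := hT.hx k hk
    have h5 := (c.x_bd k).1
    have h6 : c.x k * (1 + bR R) ≤ 3 / 11 * (1 + 3 / 11) :=
      mul_le_mul (by linarith) (by linarith) (by linarith) (by norm_num)
    rw [abs_le]
    constructor <;> norm_num at h6 <;> linarith
  · intro k
    obtain ⟨m, hm⟩ := c.e_odd (k + 1)
    exact ⟨cc (k + 1) - c.a (k + 1) - m, by rw [hm]; ring⟩
  · intro k hk s hs
    obtain ⟨-, p2, p3, p4⟩ := hPb k hk
    have hxb := hT.hx k hk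
    have hx0 := (c.x_bd k).1
    have hzb := hT.hT (k + 1) (by omega)
    have hz0 := c.T_pos (k + 1)
    have hlt := h.lt k
    have hc0 := h.c0 k
    have hg0 := h.g0 (k + 1)
    have hg1 := h.g1 (k + 1)
    have haR : (4 : ℝ) ≤ c.a (k + 1) := hT.hR.trans (hT.ha (k + 1) (by omega))
    have ha4 : 4 ≤ c.a (k + 1) := by exact_mod_cast haR
    have hxx : 0 ≤ c.x k * bR R := mul_nonneg hx0 hb0.le
    have hxx2 : c.x k * bR R ≤ c.x k * 1 := mul_le_mul_of_nonneg_left (by linarith) hx0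
    obtain ⟨m, hm⟩ := c.e_odd (k + 1)
    set x := c.x k
    set z := c.T (k + 1)
    set b := bR R
    rcases hs with ⟨rfl, ht⟩ | ⟨rfl, ht⟩
    · -- t > 0
      have hc1 : 1 ≤ cc (k + 1) := by
        rcases c.e_or (k + 1) with e | e <;> rw [e] at ht <;> omega
      have p5 := p4 hc1
      have hAw : ∀ A : ℤ, A = c.a (k + 1) + (-1) * (2 * cc (k + 1) - (c.a (k + 1) - 1 +
          c.e (k + 1))) → -1 < (A : ℝ) + (c.e (k + 2) * z + (-1) * (2 * g (k + 1) - 1 -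
            c.e (k + 2) * z)) := by
        intro A hA
        rw [hA]
        push_cast
        rcases c.eR (k + 1) with e | e <;> rw [e] <;> linarith
      have hAe : Even (c.a (k + 1) + (-1) * (2 * cc (k + 1) - (c.a (k + 1) - 1 +
          c.e (k + 1)))) := ⟨c.a (k + 1) - cc (k + 1) + m, by rw [hm]; ring⟩
      have hw : |(c.e (k + 1) : ℝ) * (x - ((-1 : ℤ) : ℝ) * (2 * P k - 1 + x))| ≤ 1 + 2 * x := by
        push_cast
        rw [abs_le]
        rcases c.eR (k + 1) with e | e <;> rw [e] <;> constructor <;> linarith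
      have hw' := abs_le.1 hw
      refine ⟨c.eR _, c.eR _, hx0, hxb, hz0.le, hzb, hAe, ?_, ?_, ?_, ?_, ?_, ?_, ?_, ?_⟩
      · have h1 := h.le k
        rcases c.e_or (k + 1) with e | e <;> rw [e] <;> omega
      · intro _; linarith
      · intro _; linarith
      · linarith
      · intro _; linarith
      · intro h1
        push_cast at h1 ⊢
        rcases c.eR (k + 2) with e | e
        · rw [e] at h1 ⊢
          exact ⟨rfl, by linarith, by push_cast at hw; exact hw⟩
        · rw [e] at h1; linarith
      · intro h1
        have h2 := hAw _ rfl
        push_cast at h1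
        have h3 : (0 : ℝ) < ((c.a (k + 1) + (-1) * (2 * cc (k + 1) - (c.a (k + 1) - 1 +
          c.e (k + 1))) : ℤ) : ℝ) := by linarith
        have h4 : 0 < c.a (k + 1) + (-1) * (2 * cc (k + 1) - (c.a (k + 1) - 1 +
          c.e (k + 1))) := by exact_mod_cast h3
        refine ⟨?_, ?_, hw⟩
        · obtain ⟨r, hr⟩ := hAe
          omega
        · push_cast
          rcases c.eR (k + 2) with e | e <;> rw [e] <;> linarith
      · intro h1
        have h2 := hAw _ rfl
        rw [h1] at h2
        push_cast at h2 ⊢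
        linarith
    · -- t < 0
      have hAe : Even (c.a (k + 1) + 1 * (2 * cc (k + 1) - (c.a (k + 1) - 1 +
          c.e (k + 1)))) := ⟨cc (k + 1) - m, by rw [hm]; ring⟩
      have hA0 : 0 ≤ c.a (k + 1) + 1 * (2 * cc (k + 1) - (c.a (k + 1) - 1 +
          c.e (k + 1))) := by
        rcases c.e_or (k + 1) with e | e <;> rw [e] <;> omega
      refine ⟨c.eR _, c.eR _, hx0, hxb, hz0.le, hzb, hAe, by omega, ?_, ?_, ?_, ?_, ?_, ?_, ?_⟩
      · intro e; rw [e]; push_cast; linarith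
      · intro e; rw [e]; push_cast; linarith
      · push_cast
        rcases c.eR (k + 1) with e | e <;> rw [e] <;> linarith
      · intro h1
        have e1 : c.e (k + 1) = 1 := by
          rcases c.e_or (k + 1) with e | e
          · exact e
          · rw [e] at h1; omega
        rw [e1]; push_cast; linarith
      · intro h1; push_cast at h1; linarith
      · intro h1; push_cast at h1; linarith
      · intro h1; omega

/-- four inequalities from the lattice points. -/
lemma Dat.four {R α γ m : ℝ} {k0 : ℕ} {t : ℕ → ℤ} {u v : ℕ → ℝ} (h : c.Dat R k0 t u v)
    (hα : c.T 0 = α) (hγ : ¬∃ p q : ℤ, γ = (p : ℝ) + (q : ℝ) * α) (hrep : c.Rep γ t v)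
    (hm : m < Mval α γ) :
    ∃ K, k0 ≤ K ∧ ∀ k, K ≤ k → ∀ s : ℤ, (s = -1 ∧ 0 < t (k + 1)) ∨ (s = 1 ∧ t (k + 1) < 0) →
      Four (4 * m * (c.a (k + 1) + c.e (k + 2) * c.T (k + 1) + c.e (k + 1) * c.x k))
      (c.e (k + 1) * (c.x k - s * u k)) (c.e (k + 2) * c.T (k + 1) + s * v (k + 1))
      (c.a (k + 1) + s * t (k + 1)) := by
  obtain ⟨K, hK, hpt⟩ := c.points hα hγ hrep h.hu h.hv hm
  refine ⟨K, hK, fun k hk s hs => ?_⟩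
  have hn := h.nrm k (by omega) s hs
  have hA1 := hn.A2
  have hA2 : c.a (k + 1) + s * t (k + 1) ≤ c.a (k + 1) := by
    rcases hs with ⟨rfl, h1⟩ | ⟨rfl, h1⟩ <;> omega
  have hAe := hn.evA
  have ha : 2 ≤ c.a (k + 1) := c.a_ge k
  have hp := hpt k hk s (by rcases hs with ⟨h1, -⟩ | ⟨h1, -⟩ <;> simp [h1])
  set A := c.a (k + 1) + s * t (k + 1) with hA
  have hle : ∀ I : ℤ, I ≤ c.a (k + 1) + 3 → -(c.a (k + 1) + 3) ≤ I →
      |(I : ℝ)| ≤ c.a (k + 1) + 3 := by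
    intro I h1 h2
    rw [abs_le]
    constructor
    · exact_mod_cast h2
    · exact_mod_cast h1
  have q1 := hp (1 - A) (by
    obtain ⟨r, hr⟩ := hAe
    exact ⟨-r, by omega⟩) (hle _ (by omega) (by omega))
  have q2 := hp (-1 - A) (by
    obtain ⟨r, hr⟩ := hAe
    exact ⟨-r - 1, by omega⟩) (hle _ (by omega) (by omega))
  have q3 := hp (-1) (by decide) (hle _ (by omega) (by omega))
  have q4 := hp 1 (by decide) (hle _ (by omega) (by omega))
  unfold S at q1 q2 q3 q4
  refine ⟨q1.trans (le_of_eq ?_), q2.trans (le_of_eq ?_), q3.trans (le_of_eq ?_),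
    q4.trans (le_of_eq ?_)⟩
  · rw [← abs_neg]; congr 1; push_cast; ring
  · congr 1; push_cast; ring
  · rw [← abs_neg]; congr 1; push_cast; ring
  · congr 1; push_cast; ring

end CF

/-- numerical conditions for the upper bound. -/
structure NumC (R : ℕ) (G : ℝ) : Prop where
  R4 : 4 ≤ R
  G0 : 0 < G
  G1 : G ≤ 1
  C : ∀ (a A : ℤ), (R : ℝ) ≤ a → Even A → (A : ℝ) ≤ a - 3 * a / R → ∃ M : ℝ, 0 ≤ M ∧ (A : ℝ) ≤ M ∧
    2 * CF.bR R * (1 + CF.bR R) * (M + 2) < G * a ∧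
    2 * CF.bR R * (M + 2) < G * (a - 2 * CF.bR R)
  C5 : 1 < G * (R - 2 * CF.bR R)
  U2 : 4 * R / 3 * (1 - G) + 2 * CF.bR R * G < 4

namespace CF

variable {c : CF}

/-- The conclusion of the first step at index `k+1`. -/
structure Bad (c : CF) (R : ℕ) (G : ℝ) (t : ℕ → ℤ) (u v : ℕ → ℝ) (k : ℕ) (s : ℤ) : Prop where
  hs : (s = -1 ∧ 0 < t (k + 1)) ∨ (s = 1 ∧ t (k + 1) < 0)
  ha : c.a (k + 1) = R
  ht : s * t (k + 1) = -3
  w1 : |(c.e (k + 1) : ℝ) * (c.x k - s * u k)| ≤ 1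
  w1' : |(c.e (k + 2) : ℝ) * c.T (k + 1) + s * v (k + 1)| ≤ 1

lemma step_one {R : ℕ} {G α γ : ℝ} (hN : NumC R G) {k0 : ℕ} {t : ℕ → ℤ} {u v : ℕ → ℝ}
    (h : c.Dat R k0 t u v)
    (hα : c.T 0 = α) (hγ : ¬∃ p q : ℤ, γ = (p : ℝ) + (q : ℝ) * α) (hrep : c.Rep γ t v)
    (hm : G / 4 < Mval α γ) :
    ∃ K, k0 ≤ K ∧ ∀ k, K ≤ k → 3 * (c.a (k + 1) : ℝ) / R ≤ ((|t (k + 1)| : ℤ) : ℝ) →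
      ∃ s, c.Bad R G t u v k s := by
  obtain ⟨K, hK, hF⟩ := h.four hα hγ hrep hm
  refine ⟨K, hK, fun k hk ht => ?_⟩
  have hR4 : (4 : ℝ) ≤ R := h.hT.hR
  have haR := h.hT.ha (k + 1) (by omega)
  have hb0 := bR_pos hR4
  have hb3 := bR_le3 hR4
  have hG0 := hN.G0
  set b := bR (R : ℝ) with hb
  have ht3 : 3 ≤ 3 * (c.a (k + 1) : ℝ) / R := by
    rw [le_div_iff₀ (by linarith)]; linarith
  have htne : t (k + 1) ≠ 0 := by
    intro h0
    rw [h0] at ht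
    simp only [abs_zero, Int.cast_zero] at ht
    linarith
  obtain ⟨s, hs⟩ : ∃ s : ℤ, (s = -1 ∧ 0 < t (k + 1)) ∨ (s = 1 ∧ t (k + 1) < 0) := by
    rcases lt_or_gt_of_ne htne with h1 | h1
    · exact ⟨1, Or.inr ⟨rfl, h1⟩⟩
    · exact ⟨-1, Or.inl ⟨rfl, h1⟩⟩
  have hst : s * t (k + 1) = -|t (k + 1)| := by
    rcases hs with ⟨rfl, h1⟩ | ⟨rfl, h1⟩
    · rw [abs_of_pos h1]; ring
    · rw [abs_of_neg h1]; ring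
  have hn := h.nrm k (by omega) s hs
  have hf := hF k hk s hs
  have hA : ((c.a (k + 1) + s * t (k + 1) : ℤ) : ℝ) = c.a (k + 1) - ((|t (k + 1)| : ℤ) : ℝ) := by
    rw [hst]; push_cast; ring
  obtain ⟨M, hM0, hMA, C1, C3⟩ := hN.C _ _ haR hn.evA (by rw [hA]; linarith)
  have C5 : 1 < G * (c.a (k + 1) - 2 * b) := by
    have := mul_le_mul_of_nonneg_left (sub_le_sub_right haR (2 * b)) hG0.le
    have := hN.C5
    linarith
  rw [show 4 * (G / 4) = G by ring] at hf
  obtain ⟨r1, r2, r3⟩ := core hn hb3 hG0 hN.G1 hM0 hMA C1 C3 C5 hf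
  obtain ⟨-, g2, g3⟩ := four_ineq r1 r2 r3 hf
  have hS : (c.a (k + 1) : ℝ) - 2 * b ≤ c.a (k + 1) + c.e (k + 2) * c.T (k + 1) +
      c.e (k + 1) * c.x k := by
    have i1 := hn.x0
    have i2 := hn.xb
    have i3 := hn.z0
    have i4 := hn.zb
    rcases hn.hε with e | e <;> rcases hn.hη with e' | e' <;> rw [e, e'] <;> linarith
  have hGS := mul_le_mul_of_nonneg_left hS hG0.le
  rw [hA] at g2 g3
  -- `|t| < 4`
  have hlt4 : |t (k + 1)| < 4 := by
    by_contra hcon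
    push Not at hcon
    have h4 : (4 : ℝ) ≤ ((|t (k + 1)| : ℤ) : ℝ) := by exact_mod_cast hcon
    have hU := hN.U2
    set a := (c.a (k + 1) : ℝ) with ha
    set τ := ((|t (k + 1)| : ℤ) : ℝ) with hτ
    have k1 : τ ≤ a * (1 - G) + 2 * b * G := by linarith
    have hG1 := hN.G1
    rcases le_total a (4 * R / 3) with h5 | h5
    · have := mul_le_mul_of_nonneg_right h5 (by linarith : 0 ≤ 1 - G)
      linarith
    · have e1 : 3 * a / R * R = 3 * a := by field_simp
      have k2 : 3 * a ≤ (a * (1 - G) + 2 * b * G) * R := by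
        rw [← e1]
        exact mul_le_mul_of_nonneg_right (by linarith) (by linarith)
      have k3 : 0 ≤ 2 * b * G := by positivity
      have k4 : 0 < 3 - R * (1 - G) := by linarith
      have k5 := mul_le_mul_of_nonneg_right h5 k4.le
      have k6 := mul_lt_mul_of_pos_left hU (by linarith : (0 : ℝ) < R)
      linarith
  have hge3 : 3 ≤ |t (k + 1)| := by
    have : (3 : ℝ) ≤ ((|t (k + 1)| : ℤ) : ℝ) := by linarith
    exact_mod_cast this
  have h3 : |t (k + 1)| = 3 := by omega
  refine ⟨s, hs, ?_, by omega, r2, r3⟩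
  rw [h3, div_le_iff₀ (by linarith)] at ht
  push_cast at ht
  have : (c.a (k + 1) : ℝ) = R := le_antisymm (by linarith) haR
  exact_mod_cast this

end CF

/-- basic numerical inequalities -/
structure Num0 (R b G : ℝ) : Prop where
  G0 : 0 < G
  G1 : G ≤ 1
  K1 : 2 * b * (1 + b) * (R - 1) < G * R
  K2 : 2 * b * (R - 1) < G * (R - 2 * b)
  C5 : 1 < G * (R - 2 * b)
  U2 : 4 * R / 3 * (1 - G) + 2 * b * G < 4

lemma num_odd_aux (s : ℝ) (hs : 0 ≤ s) :
    Num0 (5 + s) ((4 + s) / (s ^ 2 + 9 * s + 19))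
      ((s ^ 4 + 17 * s ^ 3 + 107 * s ^ 2 + 288 * s + 270) / (5 + s) ^ 4) where
  G0 := by positivity
  G1 := by
    field_simp
    rw [← sub_nonneg]; ring_nf; positivity
  K1 := by
    field_simp
    rw [← sub_pos]; ring_nf; positivity
  K2 := by
    field_simp
    rw [← sub_pos]; ring_nf; positivity
  C5 := by
    field_simp
    rw [← sub_pos]; ring_nf; positivity
  U2 := by
    field_simp
    rw [← sub_pos]; ring_nf; positivity

lemma num_even_aux (s : ℝ) (hs : 0 ≤ s) :
    Num0 (6 + s) ((5 + s) / (s ^ 2 + 11 * s + 29))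
      (((9 + 2 * s) ^ 2 * (7 + s) ^ 3 - 16 * (6 + s) ^ 2) / (4 * (6 + s) ^ 2 * (7 + s) ^ 3)) where
  G0 := by
    apply div_pos _ (by positivity)
    ring_nf; positivity
  G1 := by
    field_simp
    rw [← sub_nonneg]; ring_nf; positivity
  K1 := by
    field_simp
    rw [← sub_pos]; ring_nf; positivity
  K2 := by
    field_simp
    rw [← sub_pos]; ring_nf; positivity
  C5 := by
    field_simp
    rw [← sub_pos]; ring_nf; positivity
  U2 := by
    field_simp
    rw [← sub_pos]; ring_nf; positivity

/-- inequalities used in the chain argument for odd `R`. -/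
structure NumO (R b G H : ℝ) : Prop where
  R5 : 5 ≤ R
  H0 : 0 < H
  H1 : H ≤ 1
  Hc : 3 / (R - 1 - b) < H
  ch1 : R - 3 < G * (R - b - 1 / (R + 2 - b))
  ch2 : (1 + (1 + H) / (R + 1 - b)) * (R - 4 + (1 + H) / (R + 1 - b) + (R - 3 - G * (R - 2 * b))) <
    G * (R - 2 * b)
  pure : R - 3 < (1 - 5 / (2 * R) - 4 / R ^ 3) * (R - 2 * b)

lemma numO_aux (s : ℝ) (hs : 0 ≤ s) :
    NumO (5 + s) ((4 + s) / (s ^ 2 + 9 * s + 19))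
      ((s ^ 4 + 17 * s ^ 3 + 107 * s ^ 2 + 288 * s + 270) / (5 + s) ^ 4) (6 / (7 + 2 * s)) where
  R5 := by linarith
  H0 := by positivity
  H1 := by
    field_simp
    rw [← sub_nonneg]; ring_nf; positivity
  Hc := by
    have e : 5 + s - 1 - (4 + s) / (s ^ 2 + 9 * s + 19) =
        (s ^ 3 + 13 * s ^ 2 + 54 * s + 72) / (s ^ 2 + 9 * s + 19) := by
      field_simp
      ring
    rw [e]
    field_simp
    rw [← sub_pos]; ring_nf; positivity
  ch1 := by
    have e : 5 + s + 2 - (4 + s) / (s ^ 2 + 9 * s + 19) =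
        (s ^ 3 + 16 * s ^ 2 + 81 * s + 129) / (s ^ 2 + 9 * s + 19) := by
      field_simp
      ring
    rw [e]
    field_simp
    rw [← sub_pos]; ring_nf; positivity
  ch2 := by
    have e : 5 + s + 1 - (4 + s) / (s ^ 2 + 9 * s + 19) =
        (s ^ 3 + 15 * s ^ 2 + 72 * s + 110) / (s ^ 2 + 9 * s + 19) := by
      field_simp
      ring
    rw [e]
    field_simp
    rw [← sub_pos]; ring_nf; positivity
  pure := by
    field_simp
    rw [← sub_pos]; ring_nf; positivity

lemma numC_of {R : ℕ} {G : ℝ} (hR : 5 ≤ R) (h : Num0 R (CF.bR R) G) : NumC R G := by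
  have hR5 : (5 : ℝ) ≤ R := by exact_mod_cast hR
  have hb0 := CF.bR_pos (by linarith : (4 : ℝ) ≤ R)
  refine ⟨by omega, h.G0, h.G1, ?_, h.C5, h.U2⟩
  intro a A ha _ hA
  set b := CF.bR (R : ℝ) with hb
  have e1 : (a : ℝ) - 3 * a / R = (R - 3) * (a / R) := by field_simp
  have hy : 1 ≤ (a : ℝ) / R := by rw [le_div_iff₀ (by linarith)]; linarith
  have e2 : (a : ℝ) = R * (a / R) := by field_simp
  rw [e1] at hA
  set y := (a : ℝ) / R with hyd
  have h1 := h.K1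
  have h2 := h.K2
  have hG0 := h.G0
  have e3 : (R - 3) * y + 2 ≤ (R - 1) * y := by linarith
  refine ⟨(R - 3) * y, mul_nonneg (by linarith) (by linarith), hA, ?_, ?_⟩
  · have k1 := mul_le_mul_of_nonneg_left e3 (by positivity : 0 ≤ 2 * b * (1 + b))
    have k2 := mul_lt_mul_of_pos_right h1 (by linarith : 0 < y)
    rw [e2]
    linarith
  · have k1 := mul_le_mul_of_nonneg_left e3 (by positivity : 0 ≤ 2 * b)
    have k2 := mul_lt_mul_of_pos_right h2 (by linarith : 0 < y)
    have k3 := mul_le_mul_of_nonneg_left hy (by positivity : 0 ≤ 2 * b * G)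
    rw [e2]
    linarith

lemma numC_odd {R : ℕ} (hR : 5 ≤ R) :
    NumC R (1 - 3 / R + 2 / R ^ 2 - 3 / R ^ 3 + 5 / R ^ 4 - 4 / R ^ 3) ∧
    ∃ H, NumO R (CF.bR R) (1 - 3 / R + 2 / R ^ 2 - 3 / R ^ 3 + 5 / R ^ 4 - 4 / R ^ 3) H := by
  have hR5 : (5 : ℝ) ≤ R := by exact_mod_cast hR
  obtain ⟨s, hs⟩ : ∃ s : ℝ, (R : ℝ) = 5 + s := ⟨R - 5, by ring⟩
  have hs0 : 0 ≤ s := by linarith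
  have h1 := num_odd_aux s hs0
  have h2 := numO_aux s hs0
  have e1 : CF.bR (5 + s) = (4 + s) / (s ^ 2 + 9 * s + 19) := by
    unfold CF.bR
    congr 1 <;> ring
  have e3 : 1 - 3 / (5 + s) + 2 / (5 + s) ^ 2 - 3 / (5 + s) ^ 3 + 5 / (5 + s) ^ 4 -
      4 / (5 + s) ^ 3 =
      (s ^ 4 + 17 * s ^ 3 + 107 * s ^ 2 + 288 * s + 270) / (5 + s) ^ 4 := by
    field_simp
    ring
  rw [← e1, ← e3, ← hs] at h1 h2
  exact ⟨numC_of hR h1, _, h2⟩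

lemma numC_even {R : ℕ} (hR : 4 ≤ R) (he : Even R) :
    NumC R (1 - 3 / R + 9 / (4 * R ^ 2) - 4 / (R + 1) ^ 3) := by
  rcases hR.lt_or_eq with h5 | h5
  · have h6 : 6 ≤ R := by
      obtain ⟨r, hr⟩ := he
      omega
    have hR5 : (6 : ℝ) ≤ R := by exact_mod_cast h6
    obtain ⟨s, hs⟩ : ∃ s : ℝ, (R : ℝ) = 6 + s := ⟨R - 6, by ring⟩
    have hs0 : 0 ≤ s := by linarith
    have h1 := num_even_aux s hs0
    have e1 : CF.bR (6 + s) = (5 + s) / (s ^ 2 + 11 * s + 29) := by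
      unfold CF.bR
      congr 1 <;> ring
    have e3 : 1 - 3 / (6 + s) + 9 / (4 * (6 + s) ^ 2) - 4 / (6 + s + 1) ^ 3 =
        ((9 + 2 * s) ^ 2 * (7 + s) ^ 3 - 16 * (6 + s) ^ 2) / (4 * (6 + s) ^ 2 * (7 + s) ^ 3) := by
      rw [show 6 + s + 1 = 7 + s by ring]
      field_simp
      ring
    rw [← e1, ← e3, ← hs] at h1
    exact numC_of (by omega) h1
  · subst h5
    have eb : CF.bR ((4 : ℕ) : ℝ) = 3 / 11 := by unfold CF.bR; norm_num
    have eG : (1 - 3 / ((4 : ℕ) : ℝ) + 9 / (4 * ((4 : ℕ) : ℝ) ^ 2) - 4 / (((4 : ℕ) : ℝ) + 1) ^ 3) =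
      2869 / 8000 := by norm_num
    rw [eG]
    refine ⟨le_rfl, by norm_num, by norm_num, ?_, by rw [eb]; norm_num, by rw [eb]; norm_num⟩
    intro a A ha hA hAa
    rw [eb]
    push_cast at ha hAa
    rcases lt_or_ge a 8 with h8 | h8
    · have h8' : (a : ℝ) < 8 := by exact_mod_cast h8
      have hA2 : (A : ℝ) < 2 := by linarith
      have hA3 : A < 2 := by exact_mod_cast hA2
      have hA4 : A ≤ 0 := by
        obtain ⟨r, hr⟩ := hA
        omega
      exact ⟨0, le_rfl, by exact_mod_cast hA4, by linarith, by linarith⟩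
    · have h8' : (8 : ℝ) ≤ a := by exact_mod_cast h8
      exact ⟨a / 4, by linarith, by linarith, by linarith, by linarith⟩

namespace CF

variable {c : CF}

lemma u_contract {R G H : ℝ} {k0 K : ℕ} {t : ℕ → ℤ} {u v : ℕ → ℝ} (hN : NumO R (bR R) G H)
    (h : c.Dat R k0 t u v) (hK : k0 ≤ K)
    (ht : ∀ k, K ≤ k → ((|t (k + 1)| : ℤ) : ℝ) ≤ 3 * (c.a (k + 1) : ℝ) / R) :
    ∃ K', K ≤ K' ∧ ∀ k, K' ≤ k → |u k| ≤ H := by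
  have hR5 := hN.R5
  have hR4 : 4 ≤ R := h.hT.hR
  have hb0 := bR_pos hR4
  have hb3 := bR_le3 hR4
  have hHc := hN.Hc
  set b := bR R with hb
  set L := 3 / (R - 1 - b) with hL
  have hL0 : 0 < L := by apply div_pos <;> linarith
  have hLe : L * (R - 1 - b) = 3 := by rw [hL]; field_simp [show R - 1 - b ≠ 0 by linarith]
  have step : ∀ k, K ≤ k → |u (k + 1)| * (R - b) ≤ 3 + |u k| := by
    intro k hk
    have haR := h.hT.ha (k + 1) (by omega)
    have hx := h.hT.hx k (by omega)
    have hx0 := (c.x_bd k).1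
    have hX := c.x_succ k
    have hX0 := c.x_pos k
    have htk := ht k hk
    have hu := h.hu k (by omega)
    have h1 : |u (k + 1)| ≤ c.x (k + 1) * (3 * (c.a (k + 1) : ℝ) / R + |u k|) := by
      rw [hu, abs_mul, abs_of_pos hX0]
      apply mul_le_mul_of_nonneg_left _ hX0.le
      have e1 := abs_sub (t (k + 1) : ℝ) (c.e (k + 1) * u k)
      have e2 : |(c.e (k + 1) : ℝ) * u k| = |u k| := by
        rcases c.eR (k + 1) with e | e <;> rw [e] <;> simp
      have e3 : ((|t (k + 1)| : ℤ) : ℝ) = |(t (k + 1) : ℝ)| := by push_cast; rfl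
      linarith
    set a := (c.a (k + 1) : ℝ) with ha
    have h2 : c.x (k + 1) * (a - b) ≤ 1 := by
      rw [← hX]
      apply mul_le_mul_of_nonneg_left _ hX0.le
      rcases c.eR (k + 1) with e | e <;> rw [e] <;> linarith
    have h3 : (3 * a / R + |u k|) * (R - b) ≤ (3 + |u k|) * (a - b) := by
      have e1 : 3 * a / R * (R - b) ≤ 3 * (a - b) := by
        rw [div_mul_eq_mul_div, div_le_iff₀ (by linarith)]
        have := mul_le_mul_of_nonneg_right haR hb0.le
        linarith
      have e2 := mul_le_mul_of_nonneg_left haR (abs_nonneg (u k))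
      linarith
    have h4 := mul_le_mul_of_nonneg_right h1 (by linarith : 0 ≤ R - b)
    have h5 := mul_le_mul_of_nonneg_left h3 hX0.le
    have h6 := mul_le_mul_of_nonneg_left h2 (by positivity : 0 ≤ 3 + |u k|)
    linarith
  have geo : ∀ n : ℕ, |u (K + n)| - L ≤ 2 * (1 / 2 : ℝ) ^ n := by
    intro n
    induction n with
    | zero =>
      have := h.ub K hK
      simp
      linarith
    | succ n ih =>
      have h1 := step (K + n) (by omega)
      have h2 : (|u (K + n + 1)| - L) * (R - b) ≤ |u (K + n)| - L := by linarith
      have h3 : 0 ≤ 2 * (1 / 2 : ℝ) ^ (n + 1) := by positivity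
      rw [← add_assoc]
      by_contra hcon
      push Not at hcon
      have h4 : (|u (K + n + 1)| - L) * 2 ≤ (|u (K + n + 1)| - L) * (R - b) :=
        mul_le_mul_of_nonneg_left (by linarith) (by linarith)
      rw [pow_succ] at hcon
      linarith
  obtain ⟨n, hn⟩ := exists_pow_lt_of_lt_one (by linarith : 0 < (H - L) / 2)
    (by norm_num : (1 / 2 : ℝ) < 1)
  refine ⟨K + n, by omega, fun k hk => ?_⟩
  obtain ⟨m, rfl⟩ : ∃ m, k = K + m := ⟨k - K, by omega⟩
  have h1 := geo m
  have h2 : (1 / 2 : ℝ) ^ m ≤ (1 / 2 : ℝ) ^ n :=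
    pow_le_pow_of_le_one (by norm_num) (by norm_num) (by omega)
  linarith

lemma chain_step {R : ℕ} {G H : ℝ} {k0 j : ℕ} {t : ℕ → ℤ} {u v : ℕ → ℝ} {s : ℤ}
    (hG0 : 0 < G)
    (hN : NumO R (bR R) G H) (h : c.Dat R k0 t u v) (hj : k0 ≤ j)
    (hbad : c.Bad R G t u v (j + 1) s)
    (hf : Four (G * (c.a (j + 2) + c.e (j + 3) * c.T (j + 2) + c.e (j + 2) * c.x (j + 1)))
      (c.e (j + 2) * (c.x (j + 1) - s * u (j + 1))) (c.e (j + 3) * c.T (j + 2) + s * v (j + 2))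
      (c.a (j + 2) + s * t (j + 2)))
    (huj : |u j| ≤ H)
    (hone : 3 * (c.a (j + 1) : ℝ) / R ≤ ((|t (j + 1)| : ℤ) : ℝ) → ∃ s, c.Bad R G t u v j s) :
    c.e (j + 2) = -1 ∧ ∃ s, c.Bad R G t u v j s := by
  have hR5 := hN.R5
  have hR5' : 5 ≤ R := by exact_mod_cast hR5
  have hR4 : (4 : ℝ) ≤ R := h.hT.hR
  have hb0 := bR_pos hR4
  have hb3 := bR_le3 hR4
  have hH0 := hN.H0
  have hH1 := hN.H1
  have hA : c.a (j + 2) + s * t (j + 2) = R - 3 := by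
    rw [hbad.ht]; rw [hbad.ha]; ring
  have haR2 : (c.a (j + 2) : ℝ) = R := by exact_mod_cast hbad.ha
  rw [hA] at hf
  have hw1 := hbad.w1
  have hw1' := hbad.w1'
  obtain ⟨g1, g2, g3⟩ := four_ineq (by omega) hw1 hw1' hf
  have hz := h.hT.hT (j + 2) (by omega)
  have hz0 := c.T_pos (j + 2)
  have hx := h.hT.hx (j + 1) (by omega)
  have hx0 := c.x_pos j
  rw [haR2] at g1 g2 g3
  push_cast at g1 g2 g3
  have hηz : -bR R ≤ (c.e (j + 3) : ℝ) * c.T (j + 2) := by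
    rcases c.eR (j + 3) with e | e <;> rw [e] <;> linarith
  have hch1 := hN.ch1
  have hch2 := hN.ch2
  have hxj := h.hT.hx j (by omega)
  have hxj0 := (c.x_bd j).1
  have hX := c.x_succ j
  have haR := h.hT.ha (j + 1) (by omega)
  have hu := h.hu j (by omega)
  have hb4 := bR_le hR4
  change |(c.e (j + 2) : ℝ) * (c.x (j + 1) - s * u (j + 1))| ≤ 1 at hw1
  change |(c.e (j + 3) : ℝ) * c.T (j + 2) + s * v (j + 2)| ≤ 1 at hw1'
  set b := bR (R : ℝ) with hb
  set w' := (c.e (j + 3) : ℝ) * c.T (j + 2) + s * v (j + 2) with hw'def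
  have hr2 : (0 : ℝ) < R + 2 - b := by linarith
  have hr1 : (0 : ℝ) < R + 1 - b := by linarith
  have hinv2 : 0 < 1 / ((R : ℝ) + 2 - b) := by positivity
  have hXa : ∀ A : ℝ, 1 ≤ A → A ≤ c.a (j + 1) → c.x (j + 1) ≤ 1 / (A - b) := by
    intro A h1 h2
    rw [le_div_iff₀ (by linarith), ← hX]
    apply mul_le_mul_of_nonneg_left _ hx0.le
    rcases c.eR (j + 1) with e | e <;> rw [e] <;> linarith
  have he : c.e (j + 2) = -1 := by
    rcases c.e_or (j + 2) with e | e
    · exfalso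
      rw [e] at g2 g3
      push_cast at g2 g3
      have h1 : G * ((R : ℝ) - b - 1 / (R + 2 - b)) ≤
          G * (R + c.e (j + 3) * c.T (j + 2) + 1 * c.x (j + 1)) :=
        mul_le_mul_of_nonneg_left (by linarith) hG0.le
      linarith
    · exact e
  refine ⟨he, ?_⟩
  rw [he] at g1 g2 g3 hw1
  push_cast at g1 g2 g3 hw1
  by_contra hcon
  have hlt : ((|t (j + 1)| : ℤ) : ℝ) < 3 * (c.a (j + 1) : ℝ) / R := by
    by_contra h1
    push Not at h1
    exact hcon (hone h1)
  have ha1 : c.a (j + 1) ≤ R + 1 := by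
    by_contra h1
    have h2 : (R : ℤ) + 2 ≤ c.a (j + 1) := by omega
    have h3 : (R : ℝ) + 2 ≤ c.a (j + 1) := by exact_mod_cast h2
    have h4 := hXa _ (by linarith) h3
    have h5 : G * ((R : ℝ) - b - 1 / (R + 2 - b)) ≤
          G * (R + c.e (j + 3) * c.T (j + 2) + -1 * c.x (j + 1)) :=
        mul_le_mul_of_nonneg_left (by linarith) hG0.le
    linarith
  have haZ : (R : ℤ) ≤ c.a (j + 1) := by exact_mod_cast haR
  have hs1 : |(s : ℝ)| = 1 := by
    rcases hbad.hs with ⟨e, -⟩ | ⟨e, -⟩ <;> rw [e] <;> simp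
  have hsu : s * u (j + 1) ≤ c.x (j + 1) * (((|t (j + 1)| : ℤ) : ℝ) + H) := by
    have e0 : s * u (j + 1) ≤ |u (j + 1)| := by
      have := le_abs_self ((s : ℝ) * u (j + 1))
      rwa [abs_mul, hs1, one_mul] at this
    refine e0.trans ?_
    rw [hu, abs_mul, abs_of_pos hx0]
    apply mul_le_mul_of_nonneg_left _ hx0.le
    have e1 := abs_sub (t (j + 1) : ℝ) (c.e (j + 1) * u j)
    have e2 : |(c.e (j + 1) : ℝ) * u j| = |u j| := by
      rcases c.eR (j + 1) with e | e <;> rw [e] <;> simp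
    have e3 : ((|t (j + 1)| : ℤ) : ℝ) = |(t (j + 1) : ℝ)| := by push_cast; rfl
    linarith
  have hpar := h.par j
  have hw : -1 * (c.x (j + 1) - s * u (j + 1)) ≤ (1 + H) / (R + 1 - b) := by
    rcases (show c.a (j + 1) = R ∨ c.a (j + 1) = R + 1 by omega) with ha | ha
    · have ht1 : |t (j + 1)| ≤ 2 := by
        rw [ha] at hlt
        have : 3 * (((R : ℤ) : ℝ)) / R = 3 := by push_cast; field_simp
        rw [this] at hlt
        have : |t (j + 1)| < 3 := by exact_mod_cast hlt
        omega
      have ht2 : |t (j + 1)| ≤ 1 := by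
        -- parity
        by_contra h1
        have h2 : |t (j + 1)| = 2 := by omega
        have h3 : Even (t (j + 1)) := by
          rw [← even_abs, h2]; decide
        have h4 : Even (c.a (j + 1)) := by
          have := h3.sub hpar
          simpa using this
        have h5 : Even (t (j + 2) - c.a (j + 2)) := h.par (j + 1)
        have h6 : c.a (j + 2) = R := hbad.ha
        rw [ha] at h4
        rw [h6] at h5
        have h7 : Even (t (j + 2)) := by
          have := h5.add h4
          simpa using this
        have h8 := hbad.ht
        have h9 : Even (s * t (j + 2)) := h7.mul_left s
        change s * t (j + 2) = -3 at h8
        rw [h8] at h9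
        revert h9; decide
      have ht3 : ((|t (j + 1)| : ℤ) : ℝ) ≤ 1 := by exact_mod_cast ht2
      have e1 : c.x (j + 1) * (((|t (j + 1)| : ℤ) : ℝ) + H) ≤ c.x (j + 1) * (1 + H) :=
        mul_le_mul_of_nonneg_left (by linarith) hx0.le
      have e2 : c.x (j + 1) * H ≤ b * H := mul_le_mul_of_nonneg_right hx hH0.le
      have e3 : b * H ≤ (1 + H) / (R + 1 - b) := by
        rw [le_div_iff₀ hr1]
        have i1 : b * (R - 1) ≤ 1 := by
          rw [le_div_iff₀ (by linarith)] at hb4; exact hb4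
        have i2 : b * (R + 1 - b) ≤ 2 := by
          have := mul_pos hb0 hb0
          linarith
        have i3 := mul_le_mul_of_nonneg_left i2 hH0.le
        linarith
      linarith
    · have ht1 : |t (j + 1)| ≤ 3 := by
        rw [ha] at hlt
        have : 3 * (((R + 1 : ℤ) : ℝ)) / R < 4 := by
          rw [div_lt_iff₀ (by linarith)]; push_cast; linarith
        have h3 : ((|t (j + 1)| : ℤ) : ℝ) < 4 := by linarith
        have : |t (j + 1)| < 4 := by exact_mod_cast h3
        omega
      have ht2 : |t (j + 1)| ≤ 2 := by
        by_contra h1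
        have h2 : |t (j + 1)| = 3 := by omega
        have h3 : Odd (t (j + 1)) := by
          rw [← odd_abs, h2]; decide
        have h4 : Odd (c.a (j + 1)) := by
          have := h3.sub_even hpar
          simpa using this
        have h5 : Even (t (j + 2) - c.a (j + 2)) := h.par (j + 1)
        have h6 : c.a (j + 2) = R := hbad.ha
        rw [ha] at h4
        rw [h6] at h5
        have h8 : s * t (j + 2) = -3 := hbad.ht
        have h10 : Even (R : ℤ) := by
          have := h4.sub_odd odd_one
          simpa using this
        have h7 : Even (t (j + 2)) := by
          have := h5.add h10
          simpa using this
        have h9 : Even (s * t (j + 2)) := h7.mul_left s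
        rw [h8] at h9
        revert h9; decide
      have ht3 : ((|t (j + 1)| : ℤ) : ℝ) ≤ 2 := by exact_mod_cast ht2
      have e1 : c.x (j + 1) * (((|t (j + 1)| : ℤ) : ℝ) + H) ≤ c.x (j + 1) * (2 + H) :=
        mul_le_mul_of_nonneg_left (by linarith) hx0.le
      have haR3 : (c.a (j + 1) : ℝ) = R + 1 := by rw [ha]; push_cast; ring
      have e2 := hXa (R + 1) (by linarith) haR3.ge
      have e3 := mul_le_mul_of_nonneg_right e2 (by linarith : 0 ≤ 1 + H)
      rw [div_mul_eq_mul_div, one_mul] at e3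
      linarith
  set w := -1 * (c.x (j + 1) - s * u (j + 1)) with hwdef
  set wl := (1 + H) / ((R : ℝ) + 1 - b) with hwl
  have hS : G * ((R : ℝ) - 2 * b) ≤ G * (R + c.e (j + 3) * c.T (j + 2) + -1 * c.x (j + 1)) :=
    mul_le_mul_of_nonneg_left (by linarith) hG0.le
  have hww := abs_le.mp hw1
  have hww' := abs_le.mp hw1'
  have key : (1 + w) * ((R : ℝ) - 3 - 1 + w') ≤ (1 + wl) * (R - 4 + wl + (R - 3 - G * (R - 2 * b))) := by
    apply mul_le_mul <;> linarith
  linarith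

end CF

lemma bR_five {R : ℝ} (hR : 5 ≤ R) : R - 5 / 2 ≤ (1 - 2 * CF.bR R) * (R - 2 * CF.bR R) := by
  obtain ⟨s, rfl⟩ : ∃ s, R = 5 + s := ⟨R - 5, by ring⟩
  have hs : 0 ≤ s := by linarith
  have e : CF.bR (5 + s) = (4 + s) / (s ^ 2 + 9 * s + 19) := by
    unfold CF.bR; congr 1 <;> ring
  rw [e, ← sub_nonneg]
  have : (1 - 2 * ((4 + s) / (s ^ 2 + 9 * s + 19))) * (5 + s - 2 * ((4 + s) / (s ^ 2 + 9 * s + 19)))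
      - (5 + s - 5 / 2) = (2 * ((s ^ 2 + 9 * s + 19) - 2 * (4 + s)) *
        ((5 + s) * (s ^ 2 + 9 * s + 19) - 2 * (4 + s)) -
        (5 + 2 * s) * (s ^ 2 + 9 * s + 19) ^ 2) / (2 * (s ^ 2 + 9 * s + 19) ^ 2) := by
    field_simp
    ring
  rw [this]
  apply div_nonneg _ (by positivity)
  ring_nf
  positivity

namespace CF

variable {c : CF}

lemma star_pure {α γ R : ℝ} (hR5 : 5 ≤ R) {k0 : ℕ}
    (hα : c.T 0 = α) (hT : c.Tail R k0) (h1 : ∀ k, k0 ≤ k → (c.a k : ℝ) = R ∧ Odd (c.a k))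
    (he : ∀ k, k0 ≤ k → c.e k = -1) {t : ℕ → ℤ} {v : ℕ → ℝ} (hs : c.Star t v)
    (hrep : c.Rep γ t v) : (1 - 5 / (2 * R)) / 4 ≤ Mval α γ := by
  let u : ℕ → ℝ := fun k => Nat.rec 0
    (fun k w => if k0 ≤ k then c.x (k + 1) * (t (k + 1) - c.e (k + 1) * w) else 0) k
  have hu0 : u k0 = 0 := by
    rcases k0 with _ | k
    · rfl
    · change (if k + 1 ≤ k then _ else _) = (0 : ℝ)
      rw [if_neg (by omega)]
  have hu : ∀ k, k0 ≤ k → u (k + 1) = c.x (k + 1) * (t (k + 1) - c.e (k + 1) * u k) := by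
    intro k hk
    change (if k0 ≤ k then c.x (k + 1) * (t (k + 1) - c.e (k + 1) * u k) else 0) = _
    rw [if_pos hk]
  have hb0 := bR_pos hT.hR
  have hb3 := bR_le3 hT.hR
  have hb4 := bR_le hT.hR
  have hb5 := bR_five hR5
  have ht : ∀ k, k0 ≤ k → t (k + 1) = 1 ∨ t (k + 1) = -1 :=
    fun k hk => hs.t_odd k (h1 (k + 1) (by omega)).2
  have htt : ∀ k, k0 ≤ k → (t (k + 1) : ℝ) * t (k + 1) = 1 := by
    intro k hk
    rcases ht k hk with e | e <;> rw [e] <;> norm_num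
  have hinv : ∀ k, k0 ≤ k → c.x (k + 1) * (1 - bR R) ≤ t (k + 1) * u (k + 1) ∧
      t (k + 1) * u (k + 1) ≤ c.x (k + 1) := by
    intro k hk
    induction k, hk using Nat.le_induction with
    | base =>
      rw [hu k0 le_rfl, hu0]
      have e := htt k0 le_rfl
      have e1 : (t (k0 + 1) : ℝ) * (c.x (k0 + 1) * (t (k0 + 1) - c.e (k0 + 1) * 0)) =
        c.x (k0 + 1) := by linear_combination c.x (k0 + 1) * e
      rw [e1]
      have := mul_pos (c.x_pos k0) hb0
      constructor <;> linarith
    | succ k hk ih =>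
      have hx0 := c.x_pos (k + 1)
      have hadj := hs.adj k (h1 (k + 1) (by omega)).2 (h1 (k + 2) (by omega)).2
      have e := htt k hk
      have hx := hT.hx (k + 1) (by omega)
      have e2 : (c.e (k + 2) : ℝ) = -1 := by rw [he (k + 2) (by omega)]; norm_num
      have e1 : (t (k + 1 + 1) : ℝ) * u (k + 1 + 1) =
          c.x (k + 1 + 1) * (1 - t (k + 1) * u (k + 1)) := by
        rw [hu (k + 1) (by omega), hadj]
        change ((-t (k + 1) : ℤ) : ℝ) * (c.x (k + 2) * ((-t (k + 1) : ℤ) - c.e (k + 2) * u (k + 1)))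
          = _
        rw [e2]
        push_cast
        linear_combination c.x (k + 1 + 1) * e
      rw [e1]
      have p0 : 0 ≤ (t (k + 1) : ℝ) * u (k + 1) :=
        le_trans (mul_nonneg (c.x_pos k).le (by linarith)) ih.1
      have p1 := mul_nonneg hx0.le p0
      have p2 := mul_le_mul_of_nonneg_left (ih.2.trans hx) hx0.le
      constructor <;> linarith
  have hG0 : 0 < 1 - 5 / (2 * R) := by
    rw [sub_pos, div_lt_one (by linarith)]; linarith
  refine c.lower_of_cells (R := R) (k0 := k0) (k1 := k0 + 1) (H := bR R) (u := u) hα hT hrep hu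
    (by omega) (by linarith) ?_ hs.v_abs ?_ hG0 ?_ ?_
  · intro k hk
    obtain ⟨j, rfl⟩ : ∃ j, k = j + 1 := ⟨k - 1, by omega⟩
    have hi := hinv j (by omega)
    have hx := hT.hx (j + 1) (by omega)
    have p0 := mul_nonneg (c.x_pos j).le (by linarith : 0 ≤ 1 - bR R)
    have e1 : |u (j + 1)| = t (j + 1) * u (j + 1) := by
      rw [← abs_of_nonneg (p0.trans hi.1)]
      rcases ht j (by omega) with e | e <;> rw [e] <;> simp
    linarith
  · intro k
    rcases Int.even_or_odd (c.a (k + 1)) with h | h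
    · rw [hs.t_even k h]; simp
    · rcases hs.t_odd k h with h | h <;> rw [h] <;> simp
  · have : 0 ≤ 5 / (2 * R) := by positivity
    linarith
  · intro k hk s hs1 I hI
    obtain ⟨j, rfl⟩ : ∃ j, k = j + 1 := ⟨k - 1, by omega⟩
    have hi := hinv j (by omega)
    have hx := hT.hx (j + 1) (by omega)
    have hx0 := c.x_pos j
    have hz := hT.hT (j + 2) (by omega)
    have hz3 := hT.hT (j + 3) (by omega)
    have hz0 := c.T_pos (j + 2)
    have hva := hs.v_abs (j + 2)
    have hvo := hs.v_odd (j + 2) (h1 (j + 3) (by omega)).2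
    have htv := hs.tv (j + 1) (h1 (j + 2) (by omega)).2
    have hadj := hs.adj j (h1 (j + 1) (by omega)).2 (h1 (j + 2) (by omega)).2
    have ee1 : (c.e (j + 2) : ℝ) = -1 := by rw [he (j + 2) (by omega)]; norm_num
    have ee2 : (c.e (j + 3) : ℝ) = -1 := by rw [he (j + 3) (by omega)]; norm_num
    have haR := (h1 (j + 2) (by omega)).1
    have hod := (h1 (j + 2) (by omega)).2
    have haZ : 5 ≤ c.a (j + 2) := by
      have : (5 : ℝ) ≤ c.a (j + 2) := by linarith
      exact_mod_cast this
    change (1 - 5 / (2 * R)) * (c.a (j + 2) + c.e (j + 3) * c.T (j + 2) + c.e (j + 2) * c.x (j + 1)) ≤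
      |(((c.a (j + 2) + s * t (j + 2) : ℤ) : ℝ) + c.e (j + 2) * (c.x (j + 1) - s * u (j + 1)) + I) *
      (I - (c.e (j + 3) * c.T (j + 2) + s * v (j + 2)))|
    rw [ee1, ee2, haR]
    have hK : (1 - 5 / (2 * R)) * (R + -1 * c.T (j + 2) + -1 * c.x (j + 1)) ≤ R - 5 / 2 := by
      have e1 : (1 - 5 / (2 * R)) * R = R - 5 / 2 := by field_simp
      rw [← e1]
      exact mul_le_mul_of_nonneg_left (by linarith) hG0.le
    set x := c.x (j + 1)
    set z := c.T (j + 2)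
    set b := bR R
    have hzz : z * (1 - b) ≤ |v (j + 2)| :=
      (mul_le_mul_of_nonneg_left (by linarith) hz0.le).trans hvo
    have hbz := mul_le_mul_of_nonneg_right hz hb0.le
    have hbx := mul_le_mul_of_nonneg_right hx hb0.le
    have hbR : b * (R - 1) ≤ 1 := by
      rw [le_div_iff₀ (by linarith)] at hb4; exact hb4
    have hbb := mul_le_mul_of_nonneg_left hbR hb0.le
    have hbsq : b * b ≤ 1 := by nlinarith
    have htj : t (j + 2) = 1 ∨ t (j + 2) = -1 := ht (j + 1) (by omega)
    change (t (j + 2) : ℝ) * v (j + 2) ≤ 0 at htv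
    have hadjR : (t (j + 2) : ℝ) = - t (j + 1) := by rw [hadj]; push_cast; ring
    have hvabs : |v (j + 2)| = -(t (j + 2) * v (j + 2)) := by
      rw [← abs_of_nonpos htv]
      rcases htj with e | e <;> rw [e] <;> simp
    have hst : s = t (j + 2) ∨ s = - t (j + 2) := by
      rcases htj with e | e <;> rcases hs1 with e' | e' <;> rw [e, e'] <;> simp
    have httZ : t (j + 2) * t (j + 2) = 1 := by
      rcases htj with e | e <;> rw [e] <;> norm_num
    rcases hst with e | e
    · have hsR : (s : ℝ) = - t (j + 1) := by rw [e, hadjR]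
      have hsR' : (s : ℝ) = t (j + 2) := by rw [e]
      have hB : c.a (j + 2) + s * t (j + 2) = c.a (j + 2) + 1 := by rw [e, httZ]
      rw [hB]
      have hsu : (s : ℝ) * u (j + 1) = -(t (j + 1) * u (j + 1)) := by rw [hsR]; ring
      have hsv : (s : ℝ) * v (j + 2) = -|v (j + 2)| := by rw [hsR', hvabs]; ring
      have W1 : -(2 * b) ≤ -1 * (x - s * u (j + 1)) := by linarith
      have W2 : -1 * (x - s * u (j + 1)) ≤ 0 := by
        have : 0 ≤ x * (1 - b) := mul_nonneg hx0.le (by linarith)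
        linarith
      have W1' : -(2 * b) ≤ -1 * z + s * v (j + 2) := by linarith
      have W2' : -1 * z + s * v (j + 2) ≤ 0 := by
        have := abs_nonneg (v (j + 2))
        linarith
      refine cell_line (hod.add_odd odd_one) (by omega) (by rw [abs_le]; constructor <;> linarith)
        (by rw [abs_le]; constructor <;> linarith) ?_ ?_ ?_ ?_ I hI <;> push_cast <;> rw [haR] <;>
        refine hK.trans ?_
      · refine hb5.trans ?_
        apply mul_le_mul <;> linarith
      · refine le_trans (by linarith : R - 5 / 2 ≤ 1 * (R - 1)) ?_
        apply mul_le_mul <;> linarith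
      · refine hb5.trans ?_
        apply mul_le_mul <;> linarith
      · refine le_trans (by linarith : R - 5 / 2 ≤ 1 * (R - 1)) ?_
        apply mul_le_mul <;> linarith
    · have hsR : (s : ℝ) = t (j + 1) := by rw [e]; push_cast; rw [hadjR]; ring
      have hsR' : (s : ℝ) = - t (j + 2) := by rw [e]; push_cast; rfl
      have hB : c.a (j + 2) + s * t (j + 2) = c.a (j + 2) + -1 := by
        rw [e, neg_mul, httZ]
      rw [hB]
      have hsu : (s : ℝ) * u (j + 1) = t (j + 1) * u (j + 1) := by rw [hsR]
      have hsv : (s : ℝ) * v (j + 2) = |v (j + 2)| := by rw [hsR', hvabs]; ring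
      have W1 : -(b * b) ≤ -1 * (x - s * u (j + 1)) := by linarith
      have W2 : -1 * (x - s * u (j + 1)) ≤ 0 := by linarith
      have W1' : -(b * b) ≤ -1 * z + s * v (j + 2) := by linarith
      have W2' : -1 * z + s * v (j + 2) ≤ 0 := by linarith
      have hodd : Even (c.a (j + 2) + -1) := hod.add_odd (by decide)
      have b5' : R - 5 / 2 ≤ (1 - b * b) * (R - 2 - b * b) := by
        have := mul_nonneg (mul_nonneg hb0.le hb0.le) (mul_nonneg hb0.le hb0.le)
        linarith
      refine cell_line hodd (by omega) (by rw [abs_le]; constructor <;> linarith)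
        (by rw [abs_le]; constructor <;> linarith) ?_ ?_ ?_ ?_ I hI <;> push_cast <;> rw [haR] <;>
        refine hK.trans ?_
      · refine b5'.trans ?_
        apply mul_le_mul <;> linarith
      · refine le_trans (by linarith : R - 5 / 2 ≤ 1 * (R - 5 / 2)) ?_
        apply mul_le_mul <;> linarith
      · refine b5'.trans ?_
        apply mul_le_mul <;> linarith
      · refine le_trans (by linarith : R - 5 / 2 ≤ 1 * (R - 5 / 2)) ?_
        apply mul_le_mul <;> linarith

lemma odd_final {R : ℕ} {G H α γ γs : ℝ} (hC : NumC R G) (hN : NumO R (bR R) G H) {k0 : ℕ}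
    {t ts : ℕ → ℤ} {u v vs : ℕ → ℝ} (h : c.Dat R k0 t u v)
    (hα : c.T 0 = α) (hγ : ¬∃ p q : ℤ, γ = (p : ℝ) + (q : ℝ) * α) (hrep : c.Rep γ t v)
    (hm : G / 4 < Mval α γ) (hs : c.Star ts vs) (hreps : c.Rep γs ts vs)
    (hM : Mval α γs - 1 / (R : ℝ) ^ 3 < Mval α γ) :
    ∃ K, ∀ k, K ≤ k → ((|t (k + 1)| : ℤ) : ℝ) < 3 * (c.a (k + 1) : ℝ) / R := by
  obtain ⟨K1, hK1, one⟩ := step_one hC h hα hγ hrep hm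
  obtain ⟨K2, hK2, four⟩ := h.four hα hγ hrep hm
  have hR5 := hN.R5
  have hR5' : 5 ≤ R := by exact_mod_cast hR5
  have badle : ∀ k s, c.Bad R G t u v k s → ((|t (k + 1)| : ℤ) : ℝ) = 3 * (c.a (k + 1) : ℝ) / R := by
    intro k s hb
    have e1 : |t (k + 1)| = 3 := by
      have h3 := hb.ht
      rcases hb.hs with ⟨e, h4⟩ | ⟨e, h4⟩
      · rw [abs_of_pos h4]; rw [e] at h3; linarith
      · rw [abs_of_neg h4]; rw [e] at h3; linarith
    rw [e1, hb.ha]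
    push_cast
    field_simp
  have tle : ∀ k, K1 ≤ k → ((|t (k + 1)| : ℤ) : ℝ) ≤ 3 * (c.a (k + 1) : ℝ) / R := by
    intro k hk
    rcases lt_or_ge ((|t (k + 1)| : ℤ) : ℝ) (3 * (c.a (k + 1) : ℝ) / R) with h1 | h1
    · exact h1.le
    · obtain ⟨s, hb⟩ := one k hk h1
      exact (badle k s hb).le
  obtain ⟨K3, hK3, hu3⟩ := u_contract hN h hK1 tle
  by_contra hcon
  push Not at hcon
  have hone : ∀ j, K2 + K3 ≤ j → (∃ s, c.Bad R G t u v (j + 1) s) →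
      c.e (j + 2) = -1 ∧ ∃ s, c.Bad R G t u v j s := by
    rintro j hj ⟨s, hb⟩
    have hf := four (j + 1) (by omega) s hb.hs
    rw [show 4 * (G / 4) = G by ring] at hf
    exact chain_step hC.G0 hN h (by omega) hb hf (hu3 j (by omega)) (one j (by omega))
  have hall : ∀ j, K2 + K3 ≤ j → ∃ s, c.Bad R G t u v j s := by
    intro j hj
    obtain ⟨k, hk, hbk⟩ := hcon j
    have hbk' := one k (by omega) hbk
    obtain ⟨n, rfl⟩ : ∃ n, k = j + n := ⟨k - j, by omega⟩
    clear hbk hk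
    induction n with
    | zero => exact hbk'
    | succ n ih => exact ih (hone (j + n) (by omega) hbk').2
  set K := K2 + K3 with hK
  have hodd : ∀ k, K + 2 ≤ k → (c.a k : ℝ) = R ∧ Odd (c.a k) := by
    intro k hk
    obtain ⟨j, rfl⟩ : ∃ j, k = j + 1 := ⟨k - 1, by omega⟩
    obtain ⟨s, hb⟩ := hall j (by omega)
    refine ⟨by rw [hb.ha]; simp, ?_⟩
    have h3 : Odd (s * t (j + 1)) := by rw [hb.ht]; decide
    have h4 := (Int.odd_mul.mp h3).2
    have := h4.sub_even (h.par j)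
    simpa using this
  have he : ∀ k, K + 2 ≤ k → c.e k = -1 := by
    intro k hk
    obtain ⟨j, rfl⟩ : ∃ j, k = j + 2 := ⟨k - 2, by omega⟩
    exact (hone j (by omega) (hall (j + 1) (by omega))).1
  have hT' : c.Tail R (K + 2) :=
    ⟨h.hT.hR, fun k hk => h.hT.ha k (by omega), fun k hk => h.hT.hx k (by omega),
      fun k hk => h.hT.hT k (by omega)⟩
  have hlow := star_pure hR5 hα hT' hodd he hs hreps
  have hpure := hN.pure
  set G2 := 1 - 5 / (2 * (R : ℝ)) - 4 / (R : ℝ) ^ 3 with hG2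
  have hm2 : G2 / 4 < Mval α γ := by
    have : G2 / 4 = (1 - 5 / (2 * (R : ℝ))) / 4 - 1 / (R : ℝ) ^ 3 := by rw [hG2]; ring
    linarith
  obtain ⟨K4, hK4, four2⟩ := h.four hα hγ hrep hm2
  obtain ⟨s, hb⟩ := hall (K + K4) (by omega)
  have hf := four2 (K + K4) (by omega) s hb.hs
  rw [show 4 * (G2 / 4) = G2 by ring] at hf
  have hA : c.a (K + K4 + 1) + s * t (K + K4 + 1) = R - 3 := by
    rw [hb.ht, hb.ha]; ring
  have haR2 : (c.a (K + K4 + 1) : ℝ) = R := by exact_mod_cast hb.ha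
  rw [hA] at hf
  obtain ⟨-, g2, g3⟩ := four_ineq (by omega) hb.w1 hb.w1' hf
  rw [haR2] at g2 g3
  push_cast at g2 g3
  have hb3 := bR_le3 h.hT.hR
  have hz := h.hT.hT (K + K4 + 1) (by omega)
  have hz0 := c.T_pos (K + K4 + 1)
  have hx := h.hT.hx (K + K4) (by omega)
  have hx0 := (c.x_bd (K + K4)).1
  have hG20 : 0 < G2 := by
    by_contra h0
    push Not at h0
    have := mul_nonneg (by linarith : 0 ≤ -G2) (by linarith : 0 ≤ (R : ℝ) - 2 * bR R)
    linarith
  have hS : G2 * ((R : ℝ) - 2 * bR R) ≤ G2 * (R + c.e (K + K4 + 2) * c.T (K + K4 + 1) +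
      c.e (K + K4 + 1) * c.x (K + K4)) := by
    apply mul_le_mul_of_nonneg_left _ hG20.le
    rcases c.eR (K + K4 + 1) with e | e <;> rcases c.eR (K + K4 + 2) with e' | e' <;>
      rw [e, e'] <;> linarith
  linarith

end CF

theorem stmt7 (α γ : ℝ) (hirr : Irrational α) (h0 : 0 < α) (h12 : α < 1 / 2)
    (R : ℕ) (hR4 : 4 ≤ R)
    (hbd : ∀ᶠ i in Filter.atTop, (R : ℤ) ≤ nicfA α i)
    (hfreq : ∃ᶠ i in Filter.atTop, nicfA α i = (R : ℤ))
    (hγ0 : 0 ≤ γ) (hγ1 : γ < 1)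
    (hγnl : ¬∃ p q : ℤ, γ = (p : ℝ) + (q : ℝ) * α)
    (Rs : ℝ) (hRs : Rs = if Odd R then (R : ℝ) else (R : ℝ) + 1)
    (hM : Mval α γ > Mval α (gammaStar α) - 1 / Rs ^ 3) :
    (∀ᶠ i in Filter.atTop,
        ((|2 * cCoef α γ i - (nicfA α i - 1 + nicfE α i)| : ℤ) : ℝ) <
          3 * (nicfA α i : ℝ) / (R : ℝ)) ∧
      ∀ᶠ k in Filter.atTop, nicfA α k = (R : ℤ) →
        (Odd R →
          2 * cCoef α γ k - (nicfA α k - 1 + nicfE α k) = 1 ∨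
            2 * cCoef α γ k - (nicfA α k - 1 + nicfE α k) = -1) ∧
        (Even R →
          2 * cCoef α γ k - (nicfA α k - 1 + nicfE α k) = 0 ∨
            2 * cCoef α γ k - (nicfA α k - 1 + nicfE α k) = 2 ∨
              2 * cCoef α γ k - (nicfA α k - 1 + nicfE α k) = -2) := by
  have hR4R : (4 : ℝ) ≤ R := by exact_mod_cast hR4
  let c : CF := mkCF α hirr h0 h12
  have hα : c.T 0 = α := rfl
  have hExp : c.Exp (gSeq α γ) (cCoef α γ) := by
    have g0 : ∀ k, 0 ≤ gSeq α γ k := by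
      intro k
      cases k with
      | zero => exact hγ0
      | succ k => exact Int.fract_nonneg _
    refine ⟨g0, ?_, ?_, ?_⟩
    · intro k
      cases k with
      | zero => exact hγ1
      | succ k => exact Int.fract_lt_one _
    · intro k
      exact Int.floor_nonneg.mpr (div_nonneg (g0 k) (c.T_pos k).le)
    · intro k
      have hp : 0 < nicfT α k := c.T_pos k
      change gSeq α γ k = nicfT α k * ((⌊gSeq α γ k / nicfT α k⌋ : ℝ) +
        Int.fract (gSeq α γ k / nicfT α k))
      rw [Int.floor_add_fract]
      field_simp
  obtain ⟨k0, hT⟩ := c.exists_tail hR4R (hbd.mono fun i hi => by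
    have : ((R : ℤ) : ℝ) ≤ (nicfA α i : ℝ) := by exact_mod_cast hi
    rw [Int.cast_natCast] at this
    exact this)
  obtain ⟨u, hD⟩ := hExp.dat hT
  have hrep := gamma_rep α γ hirr h0 h12
  obtain ⟨vs, hreps, hstar⟩ := star_rep α hirr h0 h12
  set t : ℕ → ℤ := fun k => 2 * cCoef α γ k - (nicfA α k - 1 + nicfE α k) with ht
  have haZ : ∀ k, k0 ≤ k → (R : ℤ) ≤ c.a k := fun k hk => by exact_mod_cast hT.ha k hk
  have hmain : ∃ K, ∀ k, K ≤ k → ((|t (k + 1)| : ℤ) : ℝ) < 3 * (c.a (k + 1) : ℝ) / R := by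
    rcases Nat.even_or_odd R with hev | hod
    · have hno : ¬ Odd R := by rwa [Nat.not_odd_iff_even]
      rw [if_neg hno] at hRs
      have hevZ : Even (R : ℤ) := by exact_mod_cast hev
      have hC := numC_even hR4 hev
      obtain ⟨be, Q, H, ω, P⟩ := par_even hR4R
      have hlow := CF.star_lower c P hα hT (fun k hk _ => hT.ha k hk) (fun k hk ho => by
        have h1 := haZ k hk
        have h2 : c.a k ≠ R := by
          intro h3
          rw [h3] at ho
          exact (Int.not_odd_iff_even.mpr hevZ) ho
        have h4 : (R : ℤ) + 1 ≤ c.a k := by omega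
        exact_mod_cast h4) hstar hreps
      have hm : (1 - 3 / (R : ℝ) + 9 / (4 * (R : ℝ) ^ 2) - 4 / ((R : ℝ) + 1) ^ 3) / 4 <
          Mval α γ := by
        rw [hRs] at hM
        have : (1 - 3 / (R : ℝ) + 9 / (4 * (R : ℝ) ^ 2) - 4 / ((R : ℝ) + 1) ^ 3) / 4 =
          (1 - 3 / (R : ℝ) + 9 / (4 * (R : ℝ) ^ 2)) / 4 - 1 / ((R : ℝ) + 1) ^ 3 := by ring
        linarith
      obtain ⟨K, -, hK⟩ := CF.step_one hC hD hα hγnl hrep hm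
      refine ⟨K, fun k hk => ?_⟩
      by_contra hcon
      push Not at hcon
      obtain ⟨s, hb⟩ := hK k hk hcon
      have h3 : Even (t (k + 1) - c.a (k + 1)) := hD.par k
      have h6 : s * t (k + 1) = -3 := hb.ht
      rw [hb.ha] at h3
      have h4 := h3.add hevZ
      rw [sub_add_cancel] at h4
      have h5 := h4.mul_left s
      rw [h6] at h5
      revert h5; decide
    · rw [if_pos hod] at hRs
      have hodZ : Odd (R : ℤ) := by exact_mod_cast hod
      have hR5 : 5 ≤ R := by
        rcases hod with ⟨r, hr⟩; omega
      have hR5R : (5 : ℝ) ≤ R := by exact_mod_cast hR5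
      obtain ⟨hC, H', hN⟩ := numC_odd hR5
      obtain ⟨be, Q, H, ω, P⟩ := par_odd hR5R
      have hlow := CF.star_lower c P hα hT (fun k hk ho => by
        have h1 := haZ k hk
        have h2 : c.a k ≠ R := by
          intro h3
          rw [h3] at ho
          exact (Int.not_even_iff_odd.mpr hodZ) ho
        have h4 : (R : ℤ) + 1 ≤ c.a k := by omega
        exact_mod_cast h4) (fun k hk _ => hT.ha k hk) hstar hreps
      rw [hRs] at hM
      refine CF.odd_final hC hN hD hα hγnl hrep ?_ hstar hreps hM
      have : 4 / (R : ℝ) ^ 3 / 4 = 1 / (R : ℝ) ^ 3 := by ring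
      linarith
  obtain ⟨K, hK⟩ := hmain
  have hK' : ∀ i, K + 1 ≤ i → ((|t i| : ℤ) : ℝ) < 3 * (c.a i : ℝ) / R := by
    intro i hi
    obtain ⟨k, rfl⟩ : ∃ k, i = k + 1 := ⟨i - 1, by omega⟩
    exact hK k (by omega)
  refine ⟨eventually_atTop.mpr ⟨K + 1, hK'⟩, eventually_atTop.mpr ⟨K + 1, fun i hi hai => ?_⟩⟩
  have h1 := hK' i hi
  change c.a i = R at hai
  rw [hai] at h1
  have h2 : 3 * (((R : ℤ) : ℝ)) / R = 3 := by push_cast; field_simp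
  rw [h2] at h1
  have h3 : |t i| < 3 := by exact_mod_cast h1
  have h4 := abs_lt.mp h3
  have hpar : Even (t i - c.a i) := by
    obtain ⟨k, rfl⟩ : ∃ k, i = k + 1 := ⟨i - 1, by omega⟩
    exact hD.par k
  rw [hai] at hpar
  obtain ⟨r, hr⟩ := hpar
  change (Odd R → t i = 1 ∨ t i = -1) ∧ (Even R → t i = 0 ∨ t i = 2 ∨ t i = -2)
  constructor
  · rintro ⟨m, hm⟩
    omega
  · rintro ⟨m, hm⟩
    omega
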